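/- Let R be a polynomial ring over a field K and let I be an ideal of R of height two generated by n homogeneous quadratic polynomials. Then the projective dimension of R/I as an R-module satisfies pd(R/I) ≤ 2n − 2. -/

import Mathlib

open MvPolynomial Filter

universe u

/-- `PdLE R n M` means the `R`-module `M` has projective dimension at most `n`:
either `M` is projective (`n = 0`), or `M` is a quotient of a free module by a
submodule of projective dimension at most `n - 1`. -/
def PdLE (R : Type u) [CommRing R] : ℕ → (M : Type u) → [AddCommGroup M] → [Module R M] → Prop
  | 0, M, _, _ => Module.Projective R M
  | n + 1, M, _, _ => ∃ (F : Type u) (_ : AddCommGroup F) (_ : Module R F),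
      Module.Free R F ∧ ∃ f : F →ₗ[R] M, Function.Surjective f ∧ PdLE R n (LinearMap.ker f)

/-- The projective dimension of an `R`-module `M`, as an element of `ℕ∞`
(`⊤` if `M` has no finite free resolution). -/
noncomputable def projDim (R : Type u) [CommRing R] (M : Type u) [AddCommGroup M]
    [Module R M] : ℕ∞ :=
  sInf ((fun n : ℕ => (n : ℕ∞)) '' {n : ℕ | PdLE R n M})

/-- The height of an ideal: the infimum of the heights of the prime ideals containing it. -/
noncomputable def idealHeight {R : Type*} [CommRing R] (I : Ideal R) : ℕ∞ :=
  ⨅ p ∈ {p : PrimeSpectrum R | I ≤ p.asIdeal}, Order.height p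

/-- The length of a module, defined as the Krull dimension of its lattice of submodules. -/
noncomputable def moduleLength (R : Type u) [CommRing R] (M : Type u) [AddCommGroup M]
    [Module R M] : WithBot ℕ∞ :=
  Order.krullDim (Submodule R M)

/-- `IsHSMultiplicity R mx I e` asserts that the Hilbert–Samuel multiplicity of `R/I`
with respect to the ideal `mx` equals `e`: for `d = dim R/I` there is a polynomial `P`
of degree `d` with `e = d! · (leading coefficient of P)` such that
`length (R/(I + mx^n)) = P(n)` for all large `n`. -/
def IsHSMultiplicity (R : Type u) [CommRing R] (mx I : Ideal R) (e : ℕ) : Prop :=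
  ∃ (d : ℕ) (P : Polynomial ℚ),
    ringKrullDim (R ⧸ I) = (d : WithBot ℕ∞) ∧
    P.natDegree = d ∧
    (e : ℚ) = P.leadingCoeff * d.factorial ∧
    ∀ᶠ n : ℕ in Filter.atTop, ∃ k : ℕ, (k : ℚ) = P.eval (n : ℚ) ∧
      moduleLength R (R ⧸ (I ⊔ mx ^ n)) = ((k : ℕ∞) : WithBot ℕ∞)

/-- A matrix over a `K`-algebra is `1`-generic if it has no generalized zero entry:
for every nonzero vectors `u`, `v` of scalars, `uᵀ M v ≠ 0`. -/
def OneGeneric (K : Type*) [Field K] {R : Type u} [CommRing R] [Algebra K R]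
    {m l : ℕ} (M : Matrix (Fin m) (Fin l) R) : Prop :=
  ∀ (u : Fin m → K) (v : Fin l → K), u ≠ 0 → v ≠ 0 →
    ∑ i, ∑ j, algebraMap K R (u i * v j) * M i j ≠ 0

/-- The ideal of all `2 × 2` minors of a `2 × l` matrix. -/
def minors2 {R : Type u} [CommRing R] {l : ℕ} (M : Matrix (Fin 2) (Fin l) R) : Ideal R :=
  Ideal.span (Set.range fun p : Fin l × Fin l => M 0 p.1 * M 1 p.2 - M 0 p.2 * M 1 p.1)

/-- The homogeneous maximal ideal of a polynomial ring. -/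
noncomputable def maxIdeal (K : Type*) [Field K] (σ : Type*) : Ideal (MvPolynomial σ K) :=
  Ideal.span (Set.range (X : σ → MvPolynomial σ K))

/-- The ideal represented by minors by the `2 × (n+1)` matrix with first column `(x, y)ᵀ`
and remaining columns `(u j, v j)ᵀ`: it is generated by the `2 × 2` minors involving
the first column. -/
def repByMinors {R : Type u} [CommRing R] {n : ℕ} (x y : R) (u v : Fin n → R) : Ideal R :=
  Ideal.span (Set.range fun j : Fin n => x * v j - y * u j)


set_option linter.unusedSectionVars false
namespace PD
open CategoryTheory

section toolkit
variable {R : Type u} [CommRing R]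

theorem shortExact {A B C : Type u} [AddCommGroup A] [Module R A] [AddCommGroup B] [Module R B]
    [AddCommGroup C] [Module R C] (f : A →ₗ[R] B) (g : B →ₗ[R] C) (hf : Function.Injective f)
    (hg : Function.Surjective g) (hfg : Function.Exact f g) :
    (ShortComplex.mk (ModuleCat.ofHom f) (ModuleCat.ofHom g)
      (by ext x; exact hfg.apply_apply_eq_zero x)).ShortExact := by
  have h : (ShortComplex.mk (ModuleCat.ofHom f) (ModuleCat.ofHom g)
      (by ext x; exact hfg.apply_apply_eq_zero x)).Exact := by
    rw [ShortComplex.ShortExact.moduleCat_exact_iff_function_exact]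
    exact hfg
  exact
    { exact := h
      mono_f := (ModuleCat.mono_iff_injective _).2 hf
      epi_g := (ModuleCat.epi_iff_surjective _).2 hg }

theorem pdLT_ker (n : ℕ) {F M : Type u} [AddCommGroup M] [Module R M] [AddCommGroup F] [Module R F]
    [Module.Free R F] (f : F →ₗ[R] M) (hf : Function.Surjective f) :
    HasProjectiveDimensionLT (ModuleCat.of R M) (n+2) ↔
      HasProjectiveDimensionLT (ModuleCat.of R (LinearMap.ker f)) (n+1) := by
  have hs := shortExact (LinearMap.ker f).subtype f (Subtype.val_injective) hf
    (LinearMap.exact_subtype_ker_map f)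
  have hp : Projective (ModuleCat.of R F) := by
    rw [← IsProjective.iff_projective]; infer_instance
  exact hs.hasProjectiveDimensionLT_X₃_iff n hp

theorem pdLE_iff (n : ℕ) (M : Type u) [AddCommGroup M] [Module R M] :
    PdLE R n M ↔ HasProjectiveDimensionLT (ModuleCat.of R M) (n+1) := by
  induction n generalizing M with
  | zero =>
    rw [zero_add, ← projective_iff_hasProjectiveDimensionLT_one, ← IsProjective.iff_projective]
    rfl
  | succ n ih =>
    constructor
    · rintro ⟨F, _, _, hF, f, hf, hk⟩
      rw [ih] at hk
      exact (pdLT_ker n f hf).2 hk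
    · intro h
      let f : (M →₀ R) →ₗ[R] M := Finsupp.linearCombination R id
      have hf : Function.Surjective f := Finsupp.linearCombination_id_surjective R M
      refine ⟨M →₀ R, inferInstance, inferInstance, inferInstance, f, hf, ?_⟩
      rw [ih]
      exact (pdLT_ker n f hf).1 h

variable {A B C : Type u} [AddCommGroup A] [Module R A] [AddCommGroup B] [Module R B]
    [AddCommGroup C] [Module R C]

theorem pd_mono {m n : ℕ} (h : m ≤ n) (hA : PdLE R m A) : PdLE R n A := by
  rw [pdLE_iff] at *
  exact hasProjectiveDimensionLT_of_ge _ (m+1) _ (by omega)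

theorem pd_retract {n : ℕ} (i : A →ₗ[R] B) (r : B →ₗ[R] A) (h : ∀ x, r (i x) = x)
    (hB : PdLE R n B) : PdLE R n A := by
  rw [pdLE_iff] at *
  have ret : Retract (ModuleCat.of R A) (ModuleCat.of R B) :=
    { i := ModuleCat.ofHom i, r := ModuleCat.ofHom r, retract := by ext x; exact h x }
  exact ret.hasProjectiveDimensionLT _

theorem pd_equiv {n : ℕ} (e : A ≃ₗ[R] B) (hB : PdLE R n B) : PdLE R n A :=
  pd_retract e.toLinearMap e.symm.toLinearMap (by simp) hB

theorem pd_X2 {n : ℕ} (f : A →ₗ[R] B) (g : B →ₗ[R] C) (hf : Function.Injective f)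
    (hg : Function.Surjective g) (hfg : Function.Exact f g) (h1 : PdLE R n A) (h3 : PdLE R n C) :
    PdLE R n B := by
  rw [pdLE_iff] at *
  exact (shortExact f g hf hg hfg).hasProjectiveDimensionLT_X₂ _ h1 h3

theorem pd_X3 {n : ℕ} (f : A →ₗ[R] B) (g : B →ₗ[R] C) (hf : Function.Injective f)
    (hg : Function.Surjective g) (hfg : Function.Exact f g) (h1 : PdLE R n A)
    (h2 : PdLE R (n+1) B) : PdLE R (n+1) C := by
  rw [pdLE_iff] at *
  exact (shortExact f g hf hg hfg).hasProjectiveDimensionLT_X₃ _ h1 h2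

theorem pd_X1 {n : ℕ} (f : A →ₗ[R] B) (g : B →ₗ[R] C) (hf : Function.Injective f)
    (hg : Function.Surjective g) (hfg : Function.Exact f g) (h2 : PdLE R n B)
    (h3 : PdLE R (n+1) C) : PdLE R n A := by
  rw [pdLE_iff] at *
  exact (shortExact f g hf hg hfg).hasProjectiveDimensionLT_X₁ _ h2 h3

theorem pd_proj (n : ℕ) [h : Module.Projective R A] : PdLE R n A :=
  pd_mono (Nat.zero_le n) (show PdLE R 0 A from h)

theorem pd_subsingleton (n : ℕ) [Subsingleton A] : PdLE R n A := by
  have : Module.Projective R A := by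
    have : Module.Free R A := inferInstance
    infer_instance
  exact pd_proj n

/-- quotient version -/
theorem pd_quot {n : ℕ} (S : Submodule R A) (h1 : PdLE R n S) (h2 : PdLE R (n+1) A) :
    PdLE R (n+1) (A ⧸ S) :=
  pd_X3 S.subtype S.mkQ (Subtype.val_injective) (Submodule.mkQ_surjective S)
    (LinearMap.exact_subtype_mkQ S) h1 h2

/-- restriction of scalars along a free extension -/
theorem pd_restrict {S : Type u} [CommRing S] [Algebra R S] [Module.Free R S] {n : ℕ}
    {M : Type u} [AddCommGroup M] [Module S M] [Module R M] [IsScalarTower R S M]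
    (h : PdLE S n M) : PdLE R n M := by
  induction n generalizing M with
  | zero =>
    have h' : Module.Projective S M := h
    obtain ⟨s, hs⟩ := Module.projective_def'.1 h'
    have hfree : Module.Free R (M →₀ S) := inferInstance
    have : PdLE R 0 (M →₀ S) := pd_proj 0
    exact pd_retract (s.restrictScalars R) ((Finsupp.linearCombination S (id : M → M)).restrictScalars R)
      (fun x => LinearMap.congr_fun hs x) this
  | succ n ih =>
    obtain ⟨F, _, _, hF, f, hf, hk⟩ := h
    let _ : Module R F := Module.compHom F (algebraMap R S)
    have : IsScalarTower R S F := ⟨fun r s x => by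
      rw [Algebra.smul_def, mul_smul]; rfl⟩
    have hk' := ih hk
    have : Module.Free R F := Module.Free.trans (R := R) (S := S) (M := F)
    have hk'' : PdLE R n (LinearMap.ker (f.restrictScalars R)) := hk'
    exact ⟨F, inferInstance, inferInstance, this, f.restrictScalars R, hf, hk''⟩

/-- flat base change -/
theorem pd_baseChange {S : Type u} [CommRing S] [Algebra R S] [Module.Flat R S] {n : ℕ}
    {M : Type u} [AddCommGroup M] [Module R M]
    (h : PdLE R n M) : PdLE S n (TensorProduct R S M) := by
  induction n generalizing M with
  | zero =>
    have h' : Module.Projective R M := h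
    exact pd_proj 0
  | succ n ih =>
    obtain ⟨F, _, _, hF, f, hf, hk⟩ := h
    have := ih hk
    refine pd_X3 ((LinearMap.ker f).subtype.baseChange S) (f.baseChange S) ?_ ?_ ?_ this (pd_proj _)
    · exact Module.Flat.lTensor_preserves_injective_linearMap _ Subtype.val_injective
    · exact LinearMap.lTensor_surjective S hf
    · exact lTensor_exact S (LinearMap.exact_subtype_ker_map f) hf

end toolkit
end PD

namespace PD

section toolkit2
variable {R : Type u} [CommRing R]

theorem pd_ringEquiv {S : Type u} [CommRing S] {n : ℕ} (e : R ≃+* S) (I : Ideal R) (J : Ideal S)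
    (h : ∀ x, x ∈ I ↔ e x ∈ J) (hS : PdLE S n (S ⧸ J)) : PdLE R n (R ⧸ I) := by
  let _ : Algebra R S := e.toRingHom.toAlgebra
  have hfree : Module.Free R S := by
    let l : R ≃ₗ[R] S :=
      { e with map_smul' := fun r x => by simp [Algebra.smul_def]; rfl }
    exact Module.Free.of_equiv l
  have h1 : PdLE R n (S ⧸ J) := pd_restrict hS
  have hIJ : I = J.comap (algebraMap R S) := by
    ext x; rw [Ideal.mem_comap]; exact h x
  let f : R →ₗ[R] (S ⧸ J) := (Algebra.linearMap R (S ⧸ J))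
  have hf : LinearMap.ker f = I := by
    ext x
    rw [LinearMap.mem_ker, h x, ← Ideal.Quotient.eq_zero_iff_mem]
    rfl
  have hs : Function.Surjective f := by
    intro y
    obtain ⟨s, rfl⟩ := Ideal.Quotient.mk_surjective y
    obtain ⟨r, rfl⟩ := e.surjective s
    exact ⟨r, rfl⟩
  exact pd_equiv ((Submodule.quotEquivOfEq _ _ hf.symm).trans (f.quotKerEquivOfSurjective hs)) h1

/-- multiplication by f gives an exact sequence R/(J:f) -> R/J -> R/(J+f) -/
theorem colon_exact (J J' : Ideal R) (f : R) (h : ∀ r, r * f ∈ J ↔ r ∈ J') :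
    ∃ (a : (R ⧸ J') →ₗ[R] (R ⧸ J)) (b : (R ⧸ J) →ₗ[R] (R ⧸ (J ⊔ Ideal.span {f}))),
      Function.Injective a ∧ Function.Surjective b ∧ Function.Exact a b := by
  let a : (R ⧸ J') →ₗ[R] (R ⧸ J) := Submodule.mapQ J' J (LinearMap.mulRight R f)
    (fun r hr => (h r).2 hr)
  let b : (R ⧸ J) →ₗ[R] (R ⧸ (J ⊔ Ideal.span {f})) := Submodule.factor le_sup_left
  refine ⟨a, b, ?_, Submodule.factor_surjective _, ?_⟩
  · rw [← LinearMap.ker_eq_bot, LinearMap.ker_eq_bot']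
    intro x hx
    obtain ⟨r, rfl⟩ := Submodule.mkQ_surjective _ x
    have : r * f ∈ J := by
      have := (Submodule.Quotient.mk_eq_zero J (x := r * f)).1 hx
      exact this
    exact (Submodule.Quotient.mk_eq_zero J').2 ((h r).1 this)
  · intro y
    obtain ⟨r, rfl⟩ := Submodule.mkQ_surjective _ y
    constructor
    · intro hy
      have hy' : r ∈ J ⊔ Ideal.span {f} := (Submodule.Quotient.mk_eq_zero _).1 hy
      obtain ⟨j, hj, s, hs, rfl⟩ := Submodule.mem_sup.1 hy'
      obtain ⟨t, rfl⟩ := Ideal.mem_span_singleton'.1 hs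
      refine ⟨Submodule.Quotient.mk t, ?_⟩
      refine (Submodule.Quotient.eq J).2 ?_
      have : t * f - (j + t * f) = - j := by ring
      show t * f - (j + t * f) ∈ J
      rw [this]; exact J.neg_mem hj
    · rintro ⟨x, hx⟩
      obtain ⟨t, rfl⟩ := Submodule.mkQ_surjective _ x
      have h1 : t * f - r ∈ J := (Submodule.Quotient.eq J).1 hx
      refine (Submodule.Quotient.mk_eq_zero _).2 ?_
      have : r = t * f - (t * f - r) := by ring
      rw [this]
      exact Ideal.sub_mem _ (Ideal.mem_sup_right (Ideal.mul_mem_left _ _ (Ideal.mem_span_singleton_self f)))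
        (Ideal.mem_sup_left h1)

theorem pd_colon_add {n : ℕ} (J J' : Ideal R) (f : R) (h : ∀ r, r * f ∈ J ↔ r ∈ J')
    (h1 : PdLE R n (R ⧸ J')) (h2 : PdLE R (n+1) (R ⧸ J)) :
    PdLE R (n+1) (R ⧸ (J ⊔ Ideal.span {f})) := by
  obtain ⟨a, b, ha, hb, hab⟩ := colon_exact J J' f h
  exact pd_X3 a b ha hb hab h1 h2

theorem pd_colon_mid {n : ℕ} (J J' : Ideal R) (f : R) (h : ∀ r, r * f ∈ J ↔ r ∈ J')
    (h1 : PdLE R n (R ⧸ J')) (h2 : PdLE R n (R ⧸ (J ⊔ Ideal.span {f}))) :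
    PdLE R n (R ⧸ J) := by
  obtain ⟨a, b, ha, hb, hab⟩ := colon_exact J J' f h
  exact pd_X2 a b ha hb hab h1 h2

theorem pd_ideal_congr {n : ℕ} {I J : Ideal R} (h : I = J) (hJ : PdLE R n (R ⧸ J)) :
    PdLE R n (R ⧸ I) := by subst h; exact hJ

theorem pd_bot (n : ℕ) : PdLE R n (R ⧸ (⊥ : Ideal R)) :=
  pd_equiv (Submodule.quotEquivOfEqBot ⊥ rfl) (pd_proj n)

theorem pd_top (n : ℕ) : PdLE R n (R ⧸ (⊤ : Ideal R)) := by
  have : Subsingleton (R ⧸ (⊤ : Ideal R)) := Ideal.Quotient.subsingleton_iff.2 rfl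
  exact pd_subsingleton n

theorem pd_principal [IsDomain R] (f : R) : PdLE R 1 (R ⧸ Ideal.span {f}) := by
  by_cases hf : f = 0
  · subst hf
    exact pd_ideal_congr (by simp) (pd_bot 1)
  · refine pd_ideal_congr (J := ⊥ ⊔ Ideal.span {f}) (by simp) ?_
    exact pd_colon_add ⊥ ⊥ f (by simp [hf]) (pd_bot 0) (pd_bot 1)

/-- prime ideal plus one element -/
theorem pd_prime_add {n : ℕ} (J : Ideal R) (hJ : J.IsPrime) (f : R) (h : PdLE R n (R ⧸ J)) :
    PdLE R (n+1) (R ⧸ (J ⊔ Ideal.span {f})) := by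
  by_cases hf : f ∈ J
  · refine pd_ideal_congr (J := J) ?_ (pd_mono (Nat.le_succ n) h)
    rw [sup_eq_left, Ideal.span_singleton_le_iff_mem]; exact hf
  · refine pd_colon_add J J f (fun r => ⟨fun hr => ?_, fun hr => J.mul_mem_right _ hr⟩) h
      (pd_mono (Nat.le_succ n) h)
    exact (hJ.mem_or_mem hr).resolve_right hf

theorem pd_dfinsupp {n : ℕ} (M : ℕ → Type u) [∀ i, AddCommGroup (M i)] [∀ i, Module R (M i)]
    (h : ∀ i, PdLE R n (M i)) : PdLE R n (Π₀ i, M i) := by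
  induction n generalizing M with
  | zero =>
    have : ∀ i, Module.Projective R (M i) := h
    exact pd_proj 0
  | succ n ih =>
    choose F i1 i2 hF f hf hk using h
    have hk' := ih _ hk
    refine pd_X3 (DFinsupp.mapRange.linearMap fun i => (LinearMap.ker (f i)).subtype)
      (DFinsupp.mapRange.linearMap f) ?_ ?_ ?_ hk' (pd_proj _)
    · exact (DFinsupp.mapRange_injective _ (fun i => rfl)).2 fun i => Subtype.val_injective
    · exact (DFinsupp.mapRange_surjective _ (fun i => map_zero _)).2 hf
    · intro x
      constructor
      · intro hx
        have hx' : ∀ i, f i (x i) = 0 := fun i => by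
          have := DFunLike.congr_fun hx i
          simpa using this
        classical
        refine ⟨DFinsupp.mk x.support fun i => ⟨x i, hx' i⟩, ?_⟩
        ext i
        by_cases hi : i ∈ x.support
        · simp [DFinsupp.mk_apply, hi]
        · simp only [DFinsupp.mapRange.linearMap_apply, DFinsupp.mapRange_apply, DFinsupp.mk_apply, hi]
          simp at hi
          simp [hi]
      · rintro ⟨y, rfl⟩
        ext i
        simp

/-- telescoping -/
theorem pd_telescope {d : ℕ} {M : Type u} [AddCommGroup M] [Module R M] (Q : ℕ → Submodule R M)
    (hQ : ∀ k, Q k ≤ Q (k+1)) (htop : ∀ x, ∃ k, x ∈ Q k) (h : ∀ k, PdLE R d (Q k)) :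
    PdLE R (d+1) M := by
  classical
  let π : (Π₀ k, Q k) →ₗ[R] M := DFinsupp.lsum ℕ (fun k => (Q k).subtype)
  let δ : (Π₀ k, Q k) →ₗ[R] (Π₀ k, Q k) := DFinsupp.lsum ℕ
    (fun k => (DFinsupp.lsingle (M := fun k => Q k) k) -
      (DFinsupp.lsingle (M := fun k => Q k) (k+1)) ∘ₗ Submodule.inclusion (hQ k))
  have hδs : ∀ k q, δ (DFinsupp.single k q) = DFinsupp.single k q -
      DFinsupp.single (k+1) (Submodule.inclusion (hQ k) q) := by
    intro k q
    simp [δ, DFinsupp.lsingle_apply]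
  have hπs : ∀ k (q : Q k), π (DFinsupp.single k q) = q := by
    intro k q; simp [π]
  have hδ0 : ∀ y, (δ y) 0 = y 0 := by
    intro y
    induction y using DFinsupp.induction with
    | h0 => simp
    | ha i b f _ _ ih =>
      rw [map_add, DFinsupp.add_apply, DFinsupp.add_apply, ih, hδs, DFinsupp.sub_apply,
        DFinsupp.single_eq_of_ne (i := i+1) (i' := 0) (by omega), sub_zero]
  have hδk : ∀ k y, (δ y) (k+1) = y (k+1) - Submodule.inclusion (hQ k) (y k) := by
    intro k y
    induction y using DFinsupp.induction with
    | h0 => simp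
    | ha i b f _ _ ih =>
      rw [map_add, DFinsupp.add_apply, DFinsupp.add_apply, DFinsupp.add_apply, ih, hδs, DFinsupp.sub_apply,
        map_add]
      have : (DFinsupp.single (i+1) (Submodule.inclusion (hQ i) b) : Π₀ k, Q k) (k+1) =
          Submodule.inclusion (hQ k) ((DFinsupp.single i b : Π₀ k, Q k) k) := by
        by_cases hik : i = k
        · subst hik; simp
        · rw [DFinsupp.single_eq_of_ne (by omega), DFinsupp.single_eq_of_ne (by omega), map_zero]
      rw [this]; abel
  have hinj : Function.Injective δ := by
    rw [← LinearMap.ker_eq_bot, LinearMap.ker_eq_bot']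
    intro y hy
    ext k : 1
    induction k with
    | zero => rw [← hδ0, hy]
    | succ k ih =>
      have := hδk k y
      rw [hy, ih] at this
      simp only [DFinsupp.zero_apply, map_zero, sub_zero] at this
      rw [← this]; simp
  have hsurj : Function.Surjective π := by
    intro x
    obtain ⟨k, hk⟩ := htop x
    exact ⟨DFinsupp.single k ⟨x, hk⟩, hπs _ _⟩
  have hmono : Monotone Q := monotone_nat_of_le_succ hQ
  have key : ∀ n m, n ≤ m → ∀ (x : M) (hn : x ∈ Q n) (hm : x ∈ Q m),
      (DFinsupp.single n ⟨x, hn⟩ - DFinsupp.single m ⟨x, hm⟩ : Π₀ k, Q k) ∈ LinearMap.range δ := by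
    intro n m hnm x hn
    induction m, hnm using Nat.le_induction with
    | base => intro hm; rw [sub_self]; exact Submodule.zero_mem _
    | succ m hnm ih =>
      intro hm
      have hxm : x ∈ Q m := hmono hnm hn
      have h2 : (DFinsupp.single m ⟨x, hxm⟩ - DFinsupp.single (m+1) ⟨x, hm⟩ : Π₀ k, Q k) ∈
        LinearMap.range δ := ⟨DFinsupp.single m ⟨x, hxm⟩, hδs _ _⟩
      have := Submodule.add_mem _ (ih hxm) h2
      simpa using this
  have key2 : ∀ y, ∃ n0, ∀ m, n0 ≤ m → ∃ hm : π y ∈ Q m,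
      y - (DFinsupp.single m ⟨π y, hm⟩ : Π₀ k, Q k) ∈ LinearMap.range δ := by
    intro y
    induction y using DFinsupp.induction with
    | h0 => exact ⟨0, fun m _ => ⟨by simp, by
        have : (⟨π 0, by simp⟩ : Q m) = 0 := by ext; simp
        rw [this]; simp⟩⟩
    | ha i b f _ _ ih =>
      obtain ⟨n0, hn0⟩ := ih
      refine ⟨max n0 i, fun m hm => ?_⟩
      obtain ⟨h1, h2⟩ := hn0 m (le_trans (le_max_left _ _) hm)
      have hb : (b : M) ∈ Q m := hmono (le_trans (le_max_right _ _) hm) b.2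
      have hπ : π (DFinsupp.single i b + f) = b + π f := by rw [map_add, hπs]
      refine ⟨by rw [hπ]; exact Submodule.add_mem _ hb h1, ?_⟩
      have h3 := key i m (le_trans (le_max_right _ _) hm) b b.2 hb
      have h4 := Submodule.add_mem _ h3 h2
      convert h4 using 1
      have : (⟨π (DFinsupp.single i b + f), by rw [hπ]; exact Submodule.add_mem _ hb h1⟩ : Q m) =
          ⟨b, hb⟩ + ⟨π f, h1⟩ := by ext; simp [hπs]
      rw [this, DFinsupp.single_add]
      abel
  refine pd_X3 δ π hinj hsurj ?_ (pd_dfinsupp _ h) (pd_mono (Nat.le_succ d) (pd_dfinsupp _ h))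
  intro y
  constructor
  · intro hy
    obtain ⟨n0, hn0⟩ := key2 y
    obtain ⟨h1, h2⟩ := hn0 n0 le_rfl
    have : (⟨π y, h1⟩ : Q n0) = 0 := by ext; simpa using hy
    rw [this] at h2
    simpa using h2
  · rintro ⟨z, rfl⟩
    induction z using DFinsupp.induction with
    | h0 => simp
    | ha i b f _ _ ih =>
      rw [map_add, map_add, ih, hδs, map_sub, hπs, hπs]; simp

end toolkit2

section hilbert
open TensorProduct
open scoped Polynomial

theorem pd_polynomial {A : Type u} [CommRing A] {n : ℕ} {M : Type u} [AddCommGroup M]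
    [Module A[X] M] [Module A M] [IsScalarTower A A[X] M] (h : PdLE A n M) :
    PdLE A[X] (n+1) M := by
  have hb : PdLE A[X] n (A[X] ⊗[A] M) := pd_baseChange h
  let φ : M →ₗ[A] M := (LinearMap.lsmul A[X] M Polynomial.X).restrictScalars A
  let δ : (A[X] ⊗[A] M) →ₗ[A[X]] (A[X] ⊗[A] M) :=
    (Polynomial.X : A[X]) • LinearMap.id - φ.baseChange A[X]
  let π : (A[X] ⊗[A] M) →ₗ[A[X]] M := LinearMap.liftBaseChange A[X] (LinearMap.id : M →ₗ[A] M)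
  have hδ : ∀ p m, δ (p ⊗ₜ m) = (Polynomial.X * p) ⊗ₜ m - p ⊗ₜ ((Polynomial.X : A[X]) • m) := by
    intro p m; simp [δ, φ, TensorProduct.smul_tmul']
  have hπ : ∀ p m, π (p ⊗ₜ m) = p • m := by intro p m; simp [π]
  -- coefficients
  let cf : ℕ → (A[X] ⊗[A] M) →ₗ[A] M := fun k =>
    TensorProduct.lift ((LinearMap.lsmul A M).comp (Polynomial.lcoeff A k))
  have hcf : ∀ k p m, cf k (p ⊗ₜ m) = p.coeff k • m := by intro k p m; simp [cf]
  have hcδ : ∀ k y, cf (k+1) (δ y) = cf k y - (Polynomial.X : A[X]) • cf (k+1) y := by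
    intro k y
    induction y using TensorProduct.induction_on with
    | zero => simp
    | tmul p m => rw [hδ, map_sub, hcf, hcf, hcf, hcf, Polynomial.coeff_X_mul, smul_comm]
    | add x y hx hy => rw [map_add, map_add, hx, hy, map_add, map_add, smul_add]; abel
  have hfin : ∀ y, ∃ n0, ∀ k, n0 ≤ k → cf k y = 0 := by
    intro y
    induction y using TensorProduct.induction_on with
    | zero => simp
    | tmul p m => exact ⟨p.natDegree + 1, fun k hk => by
        rw [hcf, Polynomial.coeff_eq_zero_of_natDegree_lt (by omega), zero_smul]⟩
    | add x y hx hy =>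
      obtain ⟨a, ha⟩ := hx
      obtain ⟨b, hb⟩ := hy
      exact ⟨max a b, fun k hk => by
        rw [map_add, ha k (le_trans (le_max_left _ _) hk), hb k (le_trans (le_max_right _ _) hk),
          add_zero]⟩
  have hrec : ∀ y, ∃ n0, y = ∑ k ∈ Finset.range n0, (Polynomial.X^k : A[X]) ⊗ₜ[A] (cf k y) := by
    intro y
    have : ∀ y : A[X] ⊗[A] M, ∃ n0, ∀ m, n0 ≤ m →
        y = ∑ k ∈ Finset.range m, (Polynomial.X^k : A[X]) ⊗ₜ[A] (cf k y) := by
      intro y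
      induction y using TensorProduct.induction_on with
      | zero => simp
      | tmul p m =>
        refine ⟨p.natDegree + 1, fun l hl => ?_⟩
        simp_rw [hcf, ← TensorProduct.smul_tmul]
        rw [← TensorProduct.sum_tmul]
        congr 1
        conv_lhs => rw [p.as_sum_range' l (by omega)]
        refine Finset.sum_congr rfl fun k _ => ?_
        rw [Polynomial.smul_eq_C_mul, Polynomial.C_mul_X_pow_eq_monomial]
      | add x y hx hy =>
        obtain ⟨a, ha⟩ := hx
        obtain ⟨b, hb⟩ := hy
        refine ⟨max a b, fun k hk => ?_⟩
        simp_rw [map_add, TensorProduct.tmul_add]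
        rw [Finset.sum_add_distrib, ← ha k (le_trans (le_max_left _ _) hk),
          ← hb k (le_trans (le_max_right _ _) hk)]
    obtain ⟨n0, h⟩ := this y
    exact ⟨n0, h n0 le_rfl⟩
  have hinj : Function.Injective δ := by
    rw [← LinearMap.ker_eq_bot, LinearMap.ker_eq_bot']
    intro y hy
    have hz : ∀ k, cf k y = (Polynomial.X : A[X]) • cf (k+1) y := by
      intro k
      have := hcδ k y
      rw [hy, map_zero] at this
      exact (sub_eq_zero.1 this.symm)
    obtain ⟨n0, hn0⟩ := hfin y
    have hz' : ∀ k, cf k y = 0 := by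
      intro k
      by_contra hk
      have : ∀ j, cf (k+j) y ≠ 0 := by
        intro j
        induction j with
        | zero => exact hk
        | succ j ih => intro h0; apply ih; rw [hz, show k + j + 1 = k + (j+1) from rfl, h0, smul_zero]
      exact this n0 (hn0 _ (by omega))
    obtain ⟨n1, h1⟩ := hrec y
    rw [h1]
    simp [hz']
  have hsurj : Function.Surjective π := fun m => ⟨1 ⊗ₜ m, by rw [hπ, one_smul]⟩
  have key : ∀ y, y - 1 ⊗ₜ (π y) ∈ LinearMap.range δ := by
    intro y
    induction y using TensorProduct.induction_on with
    | zero => simp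
    | tmul p m =>
      rw [hπ]
      induction p using Polynomial.induction_on' with
      | add p q hp hq =>
        have := Submodule.add_mem _ hp hq
        convert this using 1
        rw [add_tmul, add_smul, tmul_add]; abel
      | monomial k a =>
        induction k generalizing m with
        | zero =>
          have : (Polynomial.monomial 0 a : A[X]) = a • 1 := by
            rw [Polynomial.smul_eq_C_mul, mul_one]; rfl
          rw [this, smul_assoc, one_smul, ← smul_tmul, sub_self]
          exact Submodule.zero_mem _
        | succ k ih =>
          have h1 := ih ((Polynomial.X : A[X]) • m)
          have h2 : δ (Polynomial.monomial k a ⊗ₜ m) ∈ LinearMap.range δ := ⟨_, rfl⟩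
          rw [hδ] at h2
          have := Submodule.add_mem _ h1 h2
          convert this using 1
          rw [Polynomial.X_mul_monomial, smul_smul, Polynomial.monomial_mul_X]; abel
    | add x y hx hy =>
      have := Submodule.add_mem _ hx hy
      convert this using 1
      rw [map_add, tmul_add]; abel
  refine pd_X3 δ π hinj hsurj ?_ hb (pd_mono (Nat.le_succ n) hb)
  intro y
  constructor
  · intro hy
    have := key y
    rw [hy] at this
    simpa using this
  · rintro ⟨z, rfl⟩
    induction z using TensorProduct.induction_on with
    | zero => simp
    | tmul p m => rw [hδ, map_sub, hπ, hπ, mul_comm, mul_smul, sub_self]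
    | add x y hx hy => rw [map_add, map_add, hx, hy, add_zero]

theorem pd_hilbert (K : Type u) [Field K] (m : ℕ) (M : Type u) [AddCommGroup M]
    [Module (MvPolynomial (Fin m) K) M] : PdLE (MvPolynomial (Fin m) K) m M := by
  induction m generalizing M with
  | zero =>
    let e : K ≃+* MvPolynomial (Fin 0) K := (MvPolynomial.isEmptyRingEquiv K (Fin 0)).symm
    have : IsField (MvPolynomial (Fin 0) K) := e.toMulEquiv.symm.isField (Field.toIsField K)
    let _ := this.toField
    show Module.Projective _ _
    have : Module.Free (MvPolynomial (Fin 0) K) M := Module.Free.of_divisionRing _ _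
    infer_instance
  | succ m ih =>
    let A := MvPolynomial (Fin m) K
    let e : MvPolynomial (Fin (m+1)) K ≃ₐ[K] A[X] := MvPolynomial.finSuccEquiv K m
    let _ : Module A[X] M := Module.compHom M e.symm.toRingEquiv.toRingHom
    let _ : Module A M := Module.compHom M (algebraMap A A[X])
    have : IsScalarTower A A[X] M := ⟨fun a p x => by
      rw [Algebra.smul_def, mul_smul]; rfl⟩
    have h1 : PdLE A[X] (m+1) M := pd_polynomial (ih M)
    let _ : Algebra (MvPolynomial (Fin (m+1)) K) A[X] := e.toRingEquiv.toRingHom.toAlgebra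
    have : Module.Free (MvPolynomial (Fin (m+1)) K) A[X] := by
      let l : (MvPolynomial (Fin (m+1)) K) ≃ₗ[MvPolynomial (Fin (m+1)) K] A[X] :=
        { e.toRingEquiv with map_smul' := fun r x => e.toRingEquiv.map_mul r x }
      exact Module.Free.of_equiv l
    have : IsScalarTower (MvPolynomial (Fin (m+1)) K) A[X] M := ⟨fun a p x => by
      rw [Algebra.smul_def, mul_smul]
      exact congrArg (· • (p • x)) (e.symm_apply_apply a)⟩
    exact pd_restrict h1

end hilbert
end PD

namespace PD
section lin
variable {B : Type*} [CommRing B] {ι κ ν : Type*} [Fintype ι] [Fintype κ] [Fintype ν]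

/-- linear form with given coefficients -/
noncomputable def lin : (ι → B) →ₗ[B] MvPolynomial ι B :=
  Fintype.linearCombination B (X : ι → MvPolynomial ι B)

theorem lin_apply (c : ι → B) : lin c = ∑ i, c i • (X i : MvPolynomial ι B) := rfl

theorem lin_single [DecidableEq ι] (i : ι) : lin (Pi.single i (1:B)) = X i := by
  simp [lin, Fintype.linearCombination_apply_single]

theorem coeff_lin (c : ι → B) (i : ι) : coeff (Finsupp.single i 1) (lin c) = c i := by
  classical
  rw [lin_apply, coeff_sum]
  simp [coeff_X, Finsupp.single_left_inj]

theorem lin_injective : Function.Injective (lin : (ι → B) →ₗ[B] MvPolynomial ι B) := by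
  intro c d h
  ext i
  rw [← coeff_lin c, h, coeff_lin]

theorem lin_eq_zero {c : ι → B} : lin c = 0 ↔ c = 0 := by
  rw [← map_zero lin]; exact lin_injective.eq_iff

theorem lin_homog (c : ι → B) : (lin c).IsHomogeneous 1 := by
  rw [lin_apply]
  refine IsHomogeneous.sum _ _ _ fun i _ => ?_
  rw [smul_eq_C_mul]
  exact isHomogeneous_C_mul_X _ _

theorem exists_lin {p : MvPolynomial ι B} (hp : p.IsHomogeneous 1) : ∃ c, p = lin c := by
  have : p ∈ homogeneousSubmodule ι B 1 := hp
  rw [homogeneousSubmodule_one_eq_span_X, Submodule.mem_span_range_iff_exists_fun] at this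
  obtain ⟨c, rfl⟩ := this
  exact ⟨c, rfl⟩

/-- linear substitution -/
noncomputable def lsub [DecidableEq ι] (T : (ι → B) →ₗ[B] (κ → B)) : MvPolynomial ι B →ₐ[B] MvPolynomial κ B :=
  aeval (fun i => lin (T (Pi.single i 1)))

variable [DecidableEq ι] [DecidableEq κ] [DecidableEq ν]

theorem lsub_lin (T : (ι → B) →ₗ[B] (κ → B)) (c : ι → B) : lsub T (lin c) = lin (T c) := by
  have : (lsub T).toLinearMap ∘ₗ lin = lin ∘ₗ T := by
    refine LinearMap.pi_ext' fun i => ?_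
    ext1
    simp [lin_single, lsub]
  exact LinearMap.congr_fun this c

theorem lsub_comp (T : (ι → B) →ₗ[B] (κ → B)) (S : (κ → B) →ₗ[B] (ν → B)) (p : MvPolynomial ι B) :
    lsub S (lsub T p) = lsub (S ∘ₗ T) p := by
  have : (lsub S).comp (lsub T) = lsub (S ∘ₗ T) := by
    refine MvPolynomial.algHom_ext fun i => ?_
    rw [AlgHom.comp_apply, ← lin_single, lsub_lin, lsub_lin, lsub_lin]; rfl
  exact DFunLike.congr_fun this p

theorem lsub_id (p : MvPolynomial ι B) : lsub (LinearMap.id : (ι → B) →ₗ[B] _) p = p := by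
  have : lsub (LinearMap.id : (ι → B) →ₗ[B] _) = AlgHom.id B _ := by
    refine MvPolynomial.algHom_ext fun i => ?_
    rw [← lin_single, lsub_lin]; rfl
  exact DFunLike.congr_fun this p

theorem lsub_homog (T : (ι → B) →ₗ[B] (κ → B)) {p : MvPolynomial ι B} {n : ℕ}
    (hp : p.IsHomogeneous n) : (lsub T p).IsHomogeneous n := by
  have := hp.aeval (fun i => lin (T (Pi.single i 1))) (fun i => lin_homog _)
  rw [one_mul] at this
  exact this

/-- linear change of coordinates -/
noncomputable def lequiv (T : (ι → B) ≃ₗ[B] (κ → B)) : MvPolynomial ι B ≃ₐ[B] MvPolynomial κ B :=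
  AlgEquiv.ofAlgHom (lsub T.toLinearMap) (lsub T.symm.toLinearMap)
    (by ext1 i; simp [lsub_comp, lsub_id])
    (by ext1 i; simp [lsub_comp, lsub_id])

theorem lequiv_lin (T : (ι → B) ≃ₗ[B] (κ → B)) (c : ι → B) : lequiv T (lin c) = lin (T c) :=
  lsub_lin _ _

/-- p - T p in the ideal generated by the c - T c -/
theorem sub_lsub_mem (T : (ι → B) →ₗ[B] (ι → B)) (J : Ideal (MvPolynomial ι B))
    (h : ∀ c, lin (c - T c) ∈ J) (p : MvPolynomial ι B) : p - lsub T p ∈ J := by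
  have : (Ideal.Quotient.mkₐ B J).comp (lsub T) = Ideal.Quotient.mkₐ B J := by
    refine MvPolynomial.algHom_ext fun i => ?_
    rw [AlgHom.comp_apply, ← lin_single, lsub_lin]
    symm
    refine Ideal.Quotient.eq.2 ?_
    rw [← map_sub]; exact h _
  have h2 := DFunLike.congr_fun this p
  exact Ideal.Quotient.eq.1 h2.symm

end lin

section linK
variable {K : Type*} [Field K] {ι : Type*} [Fintype ι] [DecidableEq ι]

theorem exists_proj (W : Submodule K (ι → K)) : ∃ T : (ι → K) →ₗ[K] (ι → K),
    (∀ c, c - T c ∈ W) ∧ (∀ c, T c = 0 ↔ c ∈ W) := by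
  obtain ⟨W', hW⟩ := W.exists_isCompl
  refine ⟨W'.projection W hW.symm, fun c => ?_, fun c => ?_⟩
  · exact Submodule.sub_projection_mem hW.symm c
  · rw [← LinearMap.mem_ker, Submodule.ker_projection]

theorem lin_span_eq_comap (W : Submodule K (ι → K)) (T : (ι → K) →ₗ[K] (ι → K))
    (h1 : ∀ c, c - T c ∈ W) (h2 : ∀ c, T c = 0 ↔ c ∈ W) (p : MvPolynomial ι K) :
    p ∈ Ideal.span (lin '' (W : Set (ι → K))) ↔ lsub T p = 0 := by
  constructor
  · intro hp
    have : Ideal.span (lin '' (W : Set (ι → K))) ≤ RingHom.ker (lsub T) := by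
      rw [Ideal.span_le]
      rintro _ ⟨c, hc, rfl⟩
      show lsub T (lin c) = 0
      rw [lsub_lin, (h2 c).2 hc, map_zero]
    exact this hp
  · intro hp
    have := sub_lsub_mem T (Ideal.span (lin '' (W : Set (ι → K))))
      (fun c => Ideal.subset_span ⟨_, h1 c, rfl⟩) p
    rwa [hp, sub_zero] at this

theorem lin_span_prime (W : Submodule K (ι → K)) :
    (Ideal.span (lin '' (W : Set (ι → K)))).IsPrime := by
  obtain ⟨T, h1, h2⟩ := exists_proj W
  have : Ideal.span (lin '' (W : Set (ι → K))) = RingHom.ker (lsub T) := by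
    ext p; rw [lin_span_eq_comap W T h1 h2]; rfl
  rw [this]
  exact RingHom.ker_isPrime _

theorem lin_mem_span_iff (W : Submodule K (ι → K)) (c : ι → K) :
    lin c ∈ Ideal.span (lin '' (W : Set (ι → K))) ↔ c ∈ W := by
  obtain ⟨T, h1, h2⟩ := exists_proj W
  rw [lin_span_eq_comap W T h1 h2, lsub_lin, lin_eq_zero, h2]

theorem lin_span_range {B : Type*} [CommRing B] {α : Type*} (c : α → ι → B) :
    Ideal.span (Set.range fun j => lin (c j)) =
      Ideal.span (lin '' (Submodule.span B (Set.range c) : Set (ι → B))) := by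
  apply le_antisymm
  · rw [Ideal.span_le]
    rintro _ ⟨j, rfl⟩
    exact Ideal.subset_span ⟨_, Submodule.subset_span ⟨j, rfl⟩, rfl⟩
  · rw [Ideal.span_le]
    rintro _ ⟨w, hw, rfl⟩
    have : Submodule.span B (Set.range c) ≤
      ((Ideal.span (Set.range fun j => lin (c j))).restrictScalars B).comap lin := by
      rw [Submodule.span_le]
      rintro _ ⟨j, rfl⟩
      exact Ideal.subset_span (s := Set.range fun j => lin (c j)) ⟨j, rfl⟩
    exact this hw

end linK

section homog
variable {K : Type*} [Field K] {ι : Type*}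

theorem homog_dvd {p a b : MvPolynomial ι K} {d : ℕ} (hp : p.IsHomogeneous d) (h0 : p ≠ 0)
    (h : p = a * b) : ∃ i j, i + j = d ∧ a.IsHomogeneous i ∧ b.IsHomogeneous j := by
  classical
  let hz : MvPolynomial ι K →ₐ[K] Polynomial (MvPolynomial ι K) :=
    aeval (fun i => Polynomial.C (X i) * Polynomial.X)
  have hmon : ∀ m r, hz (monomial m r) = Polynomial.monomial m.degree (monomial m r) := by
    intro m r
    simp only [hz, aeval_monomial]
    rw [Finsupp.prod_congr (g2 := fun i k => (Polynomial.C (X i) ^ k) * Polynomial.X ^ k)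
      (fun i _ => mul_pow _ _ _), Finsupp.prod_mul]
    rw [← Polynomial.C_mul_X_pow_eq_monomial, Finsupp.degree_apply, Finsupp.prod, Finsupp.prod,
      Finset.prod_pow_eq_pow_sum, ← mul_assoc]
    congr 1
    rw [monomial_eq, Polynomial.C_mul, Finsupp.prod, map_prod]
    simp only [Polynomial.C_pow]
    rfl
  have hcoef : ∀ q k, (hz q).coeff k = homogeneousComponent k q := by
    intro q k
    induction q using MvPolynomial.induction_on' with
    | monomial m r =>
      rw [hmon, Polynomial.coeff_monomial]
      split_ifs with hk
      · exact (homogeneousComponent_eq_self (isHomogeneous_monomial _ hk)).symm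
      · ext d
        rw [coeff_homogeneousComponent, coeff_monomial, coeff_zero]
        split_ifs with h1 h2
        · subst h2; exact absurd h1 hk
        · rfl
        · rfl
    | add p q hp hq => rw [map_add, Polynomial.coeff_add, hp, hq, map_add]
  have hinj : ∀ q, hz q = 0 → q = 0 := by
    intro q hq
    have : ∀ k, homogeneousComponent k q = 0 := fun k => by rw [← hcoef, hq, Polynomial.coeff_zero]
    rw [← sum_homogeneousComponent q]
    simp [this]
  have hpz : hz p = Polynomial.monomial d p := by
    ext1 k
    rw [hcoef, Polynomial.coeff_monomial]
    by_cases hk : d = k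
    · subst hk; rw [if_pos rfl]; exact homogeneousComponent_eq_self hp
    · rw [if_neg hk]
      rw [homogeneousComponent_of_mem hp, if_neg (Ne.symm hk)]
  have ha0 : hz a ≠ 0 := fun h1 => h0 (by rw [h, hinj a h1, zero_mul])
  have hb0 : hz b ≠ 0 := fun h1 => h0 (by rw [h, hinj b h1, mul_zero])
  have hm : hz a * hz b = Polynomial.monomial d p := by rw [← map_mul, ← h, hpz]
  have h1 : (hz a).natDegree + (hz b).natDegree = d := by
    rw [← Polynomial.natDegree_mul ha0 hb0, hm, Polynomial.natDegree_monomial_eq d h0]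
  have h2 : (hz a).natTrailingDegree + (hz b).natTrailingDegree = d := by
    rw [← Polynomial.natTrailingDegree_mul ha0 hb0, hm, Polynomial.natTrailingDegree_monomial h0]
  have h3 := Polynomial.natTrailingDegree_le_natDegree (hz a)
  have h4 := Polynomial.natTrailingDegree_le_natDegree (hz b)
  have hom : ∀ q, (hz q).natTrailingDegree = (hz q).natDegree → q.IsHomogeneous (hz q).natDegree := by
    intro q hq
    have : ∀ k, k ≠ (hz q).natDegree → homogeneousComponent k q = 0 := by
      intro k hk
      rw [← hcoef]
      rcases lt_or_gt_of_ne hk with hk | hk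
      · exact Polynomial.coeff_eq_zero_of_lt_natTrailingDegree (by omega)
      · exact Polynomial.coeff_eq_zero_of_natDegree_lt hk
    have hsum := sum_homogeneousComponent q
    rw [← hsum]
    refine IsHomogeneous.sum _ _ _ fun k _ => ?_
    by_cases hk : k = (hz q).natDegree
    · subst hk
      rw [hsum]
      exact homogeneousComponent_isHomogeneous _ _
    · rw [this k hk]; exact isHomogeneous_zero _ _ _
  exact ⟨_, _, h1, hom a (by omega), hom b (by omega)⟩

theorem homog_zero_eq_C {p : MvPolynomial ι K} (hp : p.IsHomogeneous 0) : ∃ c, p = C c := by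
  rw [← totalDegree_zero_iff_isHomogeneous] at hp
  exact ⟨_, totalDegree_eq_zero_iff_eq_C.1 hp⟩

end homog

section SM

variable {B : Type u} [CommRing B] [IsDomain B] [IsPrincipalIdealRing B]

theorem comap_sup_pid (I J : Ideal B) (b : B) :
    Submodule.comap (LinearMap.mulRight B b) (I ⊔ J) =
      Submodule.comap (LinearMap.mulRight B b) I ⊔ Submodule.comap (LinearMap.mulRight B b) J := by
  apply le_antisymm
  · intro r hr
    have hr : r * b ∈ I ⊔ J := hr
    obtain ⟨x, rfl⟩ := IsPrincipalIdealRing.principal I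
    obtain ⟨y, rfl⟩ := IsPrincipalIdealRing.principal J
    obtain ⟨d, hd⟩ := IsPrincipalIdealRing.principal (Ideal.span {x} ⊔ Ideal.span {y})
    change r * b ∈ Ideal.span {x} ⊔ Ideal.span {y} at hr
    rw [hd] at hr
    obtain ⟨w, hw⟩ := Ideal.mem_span_singleton'.1 hr
    have hx : x ∈ Ideal.span {d} := by
      change x ∈ Submodule.span B {d}
      rw [← hd]; exact Ideal.mem_sup_left (Ideal.mem_span_singleton_self x)
    have hy : y ∈ Ideal.span {d} := by
      change y ∈ Submodule.span B {d}
      rw [← hd]; exact Ideal.mem_sup_right (Ideal.mem_span_singleton_self y)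
    obtain ⟨x', hx'⟩ := Ideal.mem_span_singleton'.1 hx
    obtain ⟨y', hy'⟩ := Ideal.mem_span_singleton'.1 hy
    have hdd : d ∈ Ideal.span {x} ⊔ Ideal.span {y} := by
      rw [hd]; exact Ideal.mem_span_singleton_self d
    by_cases hd0 : d = 0
    · apply Ideal.mem_sup_left
      show r * b ∈ Submodule.span B {x}
      rw [← hw, hd0, mul_zero]; exact Submodule.zero_mem _
    obtain ⟨s', hs', t', ht', hst⟩ := Submodule.mem_sup.1 hdd
    obtain ⟨s, rfl⟩ := Ideal.mem_span_singleton'.1 hs'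
    obtain ⟨t, rfl⟩ := Ideal.mem_span_singleton'.1 ht'
    have h1 : s * x' + t * y' = 1 := by
      apply mul_right_cancel₀ hd0
      linear_combination hst + s * hx' + t * hy'
    have hr1 : r = s * (r * x') + t * (r * y') := by linear_combination (-r) * h1
    rw [hr1]
    refine Ideal.add_mem _ (Ideal.mem_sup_left (Ideal.mul_mem_left _ _ ?_))
      (Ideal.mem_sup_right (Ideal.mul_mem_left _ _ ?_))
    · show r * x' * b ∈ Ideal.span {x}
      exact Ideal.mem_span_singleton'.2 ⟨w, by linear_combination x' * hw - w * hx'⟩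
    · show r * y' * b ∈ Ideal.span {y}
      exact Ideal.mem_span_singleton'.2 ⟨w, by linear_combination y' * hw - w * hy'⟩
  · exact sup_le (Submodule.comap_mono le_sup_left) (Submodule.comap_mono le_sup_right)

variable {ι : Type} [DecidableEq ι]

/-- coefficient ideal at a monomial -/
noncomputable def cfI (s : Finset ι) (a : ι → Ideal B) (m : ι →₀ ℕ) : Ideal B :=
  (s.filter (fun i => m i ≠ 0)).sup a

theorem cfI_mono (s : Finset ι) (a : ι → Ideal B) {m m' : ι →₀ ℕ} (h : m ≤ m') :
    cfI s a m ≤ cfI s a m' := by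
  apply Finset.sup_mono
  intro i hi
  simp only [Finset.mem_filter] at *
  exact ⟨hi.1, by have := h i; omega⟩

/-- the ideal defined by coefficient conditions -/
noncomputable def monI (s : Finset ι) (a : ι → Ideal B) : Ideal (MvPolynomial ι B) where
  carrier := {p | ∀ m, coeff m p ∈ cfI s a m}
  zero_mem' m := by simp
  add_mem' hp hq m := by rw [coeff_add]; exact Ideal.add_mem _ (hp m) (hq m)
  smul_mem' c p hp m := by
    rw [smul_eq_mul, coeff_mul]
    refine Ideal.sum_mem _ fun x hx => Ideal.mul_mem_left _ _ ?_
    refine cfI_mono s a ?_ (hp x.2)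
    rw [Finset.HasAntidiagonal.mem_antidiagonal] at hx
    rw [← hx]; exact le_add_self

theorem mem_monI {s : Finset ι} {a : ι → Ideal B} {p : MvPolynomial ι B} :
    p ∈ monI s a ↔ ∀ m, coeff m p ∈ cfI s a m := Iff.rfl

theorem monI_insert (s : Finset ι) (a : ι → Ideal B) (k : ι) (hk : k ∉ s) (b : B)
    (hb : a k = Ideal.span {b}) :
    monI (insert k s) a = monI s a ⊔ Ideal.span {C b * X k} := by
  have hins : ∀ m, cfI (insert k s) a m = cfI s a m ⊔ (if m k ≠ 0 then a k else ⊥) := by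
    intro m
    unfold cfI
    rw [Finset.filter_insert]
    split_ifs with h
    · rw [Finset.sup_insert, sup_comm]
    · simp
  apply le_antisymm
  · intro p hp
    rw [p.as_sum]
    refine Ideal.sum_mem _ fun m _ => ?_
    have h1 := hp m
    rw [hins] at h1
    obtain ⟨u, hu, v, hv, huv⟩ := Submodule.mem_sup.1 h1
    rw [← huv, map_add]
    refine Ideal.add_mem _ (Ideal.mem_sup_left ?_) (Ideal.mem_sup_right ?_)
    · intro m'
      rw [coeff_monomial]
      split_ifs with h
      · subst h; exact hu
      · exact Ideal.zero_mem _
    · split_ifs at hv with h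
      · rw [hb] at hv
        obtain ⟨w, rfl⟩ := Ideal.mem_span_singleton'.1 hv
        refine Ideal.mem_span_singleton'.2 ⟨monomial (m - Finsupp.single k 1) w, ?_⟩
        rw [C_mul_X_eq_monomial, monomial_mul]
        congr 2
        exact tsub_add_cancel_of_le (by
          rw [Finsupp.single_le_iff]; omega)
      · have : v = 0 := hv
        rw [this, map_zero]; exact Ideal.zero_mem _
  · refine sup_le ?_ ?_
    · intro p hp m
      rw [hins]; exact Ideal.mem_sup_left (hp m)
    · rw [Ideal.span_singleton_le_iff_mem]
      intro m
      rw [hins, C_mul_X_eq_monomial, coeff_monomial]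
      by_cases h : Finsupp.single k 1 = m
      · rw [if_pos h, if_pos (by rw [← h]; simp)]
        apply Ideal.mem_sup_right; rw [hb]; exact Ideal.mem_span_singleton_self b
      · rw [if_neg h]; exact Ideal.zero_mem _

theorem monI_colon (s : Finset ι) (a : ι → Ideal B) (k : ι) (hk : k ∉ s) (b : B)
    (hb0 : b ≠ 0) (p : MvPolynomial ι B) :
    p * (C b * X k) ∈ monI s a ↔
      p ∈ monI s (fun i => Submodule.comap (LinearMap.mulRight B b) (a i)) := by
  have hc : ∀ (t : Finset ι), t.Nonempty → t.sup (fun i => Submodule.comap (LinearMap.mulRight B b) (a i)) =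
      Submodule.comap (LinearMap.mulRight B b) (t.sup a) := by
    intro t ht
    induction ht using Finset.Nonempty.cons_induction with
    | singleton i => simp
    | cons i t hi _ ih => rw [Finset.sup_cons, Finset.sup_cons, comap_sup_pid, ih]
  have hk' : ∀ m : ι →₀ ℕ, cfI s a (m + Finsupp.single k 1) = cfI s a m := by
    intro m
    unfold cfI
    congr 1
    apply Finset.filter_congr
    intro i hi
    have : i ≠ k := fun h => hk (h ▸ hi)
    simp [Ne.symm this]
  have hc' : ∀ m, cfI s (fun i => Submodule.comap (LinearMap.mulRight B b) (a i)) m =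
      Submodule.comap (LinearMap.mulRight B b) (cfI s a m) := by
    intro m
    unfold cfI
    rcases (s.filter (fun i => m i ≠ 0)).eq_empty_or_nonempty with h | h
    · rw [h, Finset.sup_empty, Finset.sup_empty]
      symm
      rw [Submodule.comap_bot, LinearMap.ker_eq_bot]
      exact mul_left_injective₀ hb0
    · exact hc _ h
  have hco : ∀ m, coeff (m + Finsupp.single k 1) (p * (C b * X k)) = coeff m p * b := by
    intro m
    rw [← mul_assoc, coeff_mul_X, mul_comm p, coeff_C_mul, mul_comm]
  constructor
  · intro h m
    rw [hc']
    show coeff m p * b ∈ cfI s a m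
    rw [← hco, ← hk']; exact h _
  · intro h m
    by_cases hm : m k = 0
    · rw [← mul_assoc, coeff_mul_X', if_neg (by simpa using hm)]; exact Ideal.zero_mem _
    · have : m = (m - Finsupp.single k 1) + Finsupp.single k 1 :=
        (tsub_add_cancel_of_le (by rw [Finsupp.single_le_iff]; omega)).symm
      rw [this, hco, hk']
      have h1 := h (m - Finsupp.single k 1)
      rw [hc'] at h1
      exact h1

theorem pd_monI (s : Finset ι) (a : ι → Ideal B) :
    PdLE (MvPolynomial ι B) s.card (MvPolynomial ι B ⧸ monI s a) := by
  induction s using Finset.induction_on generalizing a with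
  | empty =>
    refine pd_ideal_congr (J := ⊥) ?_ (pd_bot _)
    rw [eq_bot_iff]
    intro p hp
    rw [Ideal.mem_bot]
    ext m
    have := hp m
    simpa [cfI] using this
  | insert k s hk ih =>
    obtain ⟨b, hb⟩ := IsPrincipalIdealRing.principal (a k)
    rw [Finset.card_insert_of_notMem hk]
    refine pd_ideal_congr (monI_insert s a k hk b hb) ?_
    by_cases hb0 : b = 0
    · refine pd_ideal_congr (J := monI s a) ?_ (pd_mono (Nat.le_succ _) (ih a))
      simp [hb0]
    · exact pd_colon_add _ _ _ (monI_colon s a k hk b hb0) (ih _) (pd_mono (Nat.le_succ _) (ih a))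

theorem monI_eq_span (s : Finset ι) (b : ι → B) :
    monI s (fun i => Ideal.span {b i}) =
      Ideal.span ((fun i => (C (b i) * X i : MvPolynomial ι B)) '' (s : Set ι)) := by
  induction s using Finset.induction_on with
  | empty =>
    simp only [Finset.coe_empty, Set.image_empty, Ideal.span_empty]
    rw [eq_bot_iff]
    intro p hp
    rw [Ideal.mem_bot]
    ext m
    have := hp m
    simpa [cfI] using this
  | insert k s hk ih =>
    rw [monI_insert s _ k hk (b k) rfl, ih, Finset.coe_insert, Set.image_insert_eq,
      Ideal.span_insert, sup_comm]

theorem pd_lin {N e : ℕ} (c : Fin e → Fin N → B) :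
    PdLE (MvPolynomial (Fin N) B) e
      (MvPolynomial (Fin N) B ⧸ Ideal.span (Set.range fun j => lin (c j))) := by
  let W : Submodule B (Fin N → B) := Submodule.span B (Set.range c)
  obtain ⟨n, snf⟩ := W.smithNormalForm (Pi.basisFun B (Fin N))
  have hne : n ≤ e := by
    have h1 : Module.finrank B W = n := by rw [Module.finrank_eq_card_basis snf.bN]; simp
    have h2 : Module.finrank B W ≤ Fintype.card (Fin e) := finrank_range_le_card c
    rw [Fintype.card_fin] at h2; omega
  refine pd_mono hne ?_
  -- coordinates
  let T : (Fin N → B) ≃ₗ[B] (Fin N → B) := snf.bM.equivFun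
  let b : Fin N → B := fun i => if h : ∃ j, snf.f j = i then snf.a h.choose else 0
  have hbf : ∀ j, b (snf.f j) = snf.a j := by
    intro j
    have h : ∃ j', snf.f j' = snf.f j := ⟨j, rfl⟩
    simp only [b, dif_pos h]
    congr 1
    exact snf.f.injective h.choose_spec
  let s : Finset (Fin N) := Finset.univ.map snf.f
  have hs : s.card = n := by simp [s]
  let J := monI s (fun i => Ideal.span {b i})
  have hJ := pd_monI s (fun i => Ideal.span {b i})
  rw [hs] at hJ
  have hW : Ideal.span (Set.range fun j => lin (c j)) =
      Ideal.span (Set.range fun j => lin (snf.bN j : Fin N → B)) := by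
    rw [lin_span_range, lin_span_range]
    congr 2
    have : Submodule.span B (Set.range fun j => (snf.bN j : Fin N → B)) =
        (Submodule.span B (Set.range snf.bN)).map W.subtype := by
      rw [Submodule.map_span, ← Set.range_comp]; rfl
    rw [this, snf.bN.span_eq, Submodule.map_top, Submodule.range_subtype]
  have hmap : Ideal.map (lequiv T).toRingEquiv (Ideal.span (Set.range fun j => lin (c j))) =
      monI s (fun i => Ideal.span {b i}) := by
    rw [hW, Ideal.map_span, monI_eq_span, ← Set.range_comp]
    congr 1
    have : (s : Set (Fin N)) = Set.range snf.f := by simp [s]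
    rw [this, ← Set.range_comp]
    congr 1
    funext j
    show lequiv T (lin (snf.bN j : Fin N → B)) = C (b (snf.f j)) * X (snf.f j)
    rw [lequiv_lin, snf.snf, hbf, map_smul, map_smul, smul_eq_C_mul, ← lin_single]
    congr 2
    show snf.bM.equivFun _ = _
    funext i
    rw [Module.Basis.equivFun_self]
    simp [Pi.single_apply, eq_comm]
  refine pd_ringEquiv (lequiv T).toRingEquiv _ _ (fun x => ?_) hJ
  rw [← hmap]
  refine ⟨fun h => Ideal.mem_map_of_mem _ h, fun h => ?_⟩
  obtain ⟨y, hy, hxy⟩ := (Ideal.mem_map_of_equiv (lequiv T).toRingEquiv _).1 h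
  rw [← (lequiv T).toRingEquiv.injective hxy]
  exact hy

end SM
end PD

namespace PD
section A2
variable {K : Type u} [Field K] {N : ℕ}

theorem lin_span_singleton (x : Fin N → K) :
    Ideal.span (lin '' (Submodule.span K {x} : Set (Fin N → K))) = Ideal.span {lin x} := by
  have := lin_span_range (B := K) (fun _ : Unit => x)
  rw [Set.range_const, Set.range_const] at this
  exact this.symm

theorem lin_prime {x : Fin N → K} (hx : x ≠ 0) : Prime (lin x) := by
  have h : (Ideal.span {lin x}).IsPrime := by
    rw [← lin_span_singleton]; exact lin_span_prime _
  exact (Ideal.span_singleton_prime (by rwa [Ne, lin_eq_zero])).1 h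

theorem pd_regular2 {R : Type u} [CommRing R] [IsDomain R] {p : R} (hp : Prime p) (q : R) :
    PdLE R 2 (R ⧸ (Ideal.span {p} ⊔ Ideal.span {q})) :=
  pd_prime_add _ ((Ideal.span_singleton_prime hp.ne_zero).2 hp) _ (pd_principal _)

theorem pd_xL {R : Type u} [CommRing R] [IsDomain R] {x : R} (hx : Prime x) (L : Ideal R) (q : R)
    (hq : q ∉ Ideal.span {x}) {n : ℕ} (hn : 2 ≤ n) (hpdJ : PdLE R n (R ⧸ (L ⊔ Ideal.span {q}))) :
    PdLE R n (R ⧸ (Ideal.span {x} * L ⊔ Ideal.span {q})) := by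
  refine pd_colon_mid _ (L ⊔ Ideal.span {q}) (x) (fun r => ?_) hpdJ ?_
  · constructor
    · intro h
      obtain ⟨y, hy, z, hz, hyz⟩ := Submodule.mem_sup.1 h
      obtain ⟨y', hy', rfl⟩ := Ideal.mem_span_singleton_mul.1 hy
      obtain ⟨a, rfl⟩ := Ideal.mem_span_singleton'.1 hz
      have hax : x ∣ a * q := ⟨r - y', by linear_combination hyz⟩
      rcases hx.dvd_or_dvd hax with ⟨a', rfl⟩ | h3
      · have : r = y' + a' * q := by
          apply mul_left_cancel₀ hx.ne_zero
          linear_combination -hyz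
        rw [this]
        exact add_mem (Ideal.mem_sup_left hy') (Ideal.mem_sup_right (Ideal.mul_mem_left _ _ (Ideal.mem_span_singleton_self _)))
      · exact absurd (Ideal.mem_span_singleton.2 h3) hq
    · intro h
      obtain ⟨y, hy, z, hz, rfl⟩ := Submodule.mem_sup.1 h
      rw [add_mul]
      refine add_mem (Ideal.mem_sup_left ?_) (Ideal.mem_sup_right (Ideal.mul_mem_right _ _ hz))
      rw [mul_comm y x]; exact Ideal.mul_mem_mul (Ideal.mem_span_singleton_self x) hy
  · refine pd_mono (show 2 ≤ n by omega) (pd_ideal_congr ?_ (pd_regular2 hx q))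
    apply le_antisymm
    · have h1 : Ideal.span {x} * L ≤ Ideal.span {x} := Ideal.mul_le_left
      exact sup_le (sup_le (h1.trans le_sup_left) le_sup_right) le_sup_left
    · exact sup_le le_sup_right (le_sup_right.trans le_sup_left)

theorem caseA2 {m : ℕ} (g : Fin (m+1) → MvPolynomial (Fin N) K) (hm : 1 ≤ m)
    (hg : ∀ i, (g i).IsHomogeneous 2) (P : Ideal (MvPolynomial (Fin N) K)) (hP : P.IsPrime)
    (hgP : ∀ i, g i ∈ P)
    (H1 : ∀ Q1 Q2 : Ideal (MvPolynomial (Fin N) K), Q1.IsPrime → Q2.IsPrime → Q1 ≠ ⊥ → Q1 < Q2 →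
      Q2 ≤ P → Q2 = P)
    (H2 : ∀ f, (∀ i, g i ∈ Ideal.span {f}) → IsUnit f)
    (x : Fin N → K) (hx0 : x ≠ 0) (hxP : lin x ∈ P)
    (hx : ∀ c, lin c ∈ P → c ∈ Submodule.span K {x}) :
    PdLE (MvPolynomial (Fin N) K) (m+1) (MvPolynomial (Fin N) K ⧸ Ideal.span (Set.range g)) := by
  have hxp := lin_prime hx0
  obtain ⟨i0, hi0⟩ : ∃ i, g i ∉ Ideal.span {lin x} := by
    by_contra hcon
    push Not at hcon
    exact hxp.not_isUnit (H2 _ hcon)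
  obtain ⟨T, h1, h2⟩ := exists_proj (Submodule.span K {x})
  have hker : ∀ p, p ∈ Ideal.span {lin x} ↔ lsub T p = 0 := by
    intro p; rw [← lin_span_singleton]; exact lin_span_eq_comap _ T h1 h2 p
  have hTT : T ∘ₗ T = T := by
    ext1 c
    refine LinearMap.ext fun d => ?_
    have := (h2 _).2 (h1 (LinearMap.single K (fun _ => K) c d))
    rw [map_sub, sub_eq_zero] at this
    exact this.symm
  have hTT' : ∀ p, lsub T (lsub T p) = lsub T p := fun p => by rw [lsub_comp, hTT]
  have hsub : ∀ p, p - lsub T p ∈ Ideal.span {lin x} := by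
    intro p; rw [hker, map_sub, hTT', sub_self]
  have hxle : Ideal.span {lin x} ≤ P := by rwa [Ideal.span_singleton_le_iff_mem]
  have hTP : ∀ p ∈ P, lsub T p ∈ P := fun p hp => by
    have := P.sub_mem hp (hxle (hsub p)); simpa using this
  set q := g i0 with hq
  set q' := lsub T q with hq'
  have hq'0 : q' ≠ 0 := fun h => hi0 ((hker _).2 h)
  have hq'h : q'.IsHomogeneous 2 := lsub_homog T (hg i0)
  have hq'P : q' ∈ P := hTP _ (hgP i0)
  have hTq' : lsub T q' = q' := hTT' _
  have hlin : ∀ a b : MvPolynomial (Fin N) K, q' = a * b → a.IsHomogeneous 1 → a ∉ P := by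
    intro a b hab ha haP
    obtain ⟨c, rfl⟩ := exists_lin ha
    have hc := (h2 c).2 (hx c haP)
    apply hq'0
    rw [← hTq', hab, map_mul, lsub_lin, hc, map_zero, zero_mul]
  have hunit : ∀ a : MvPolynomial (Fin N) K, a.IsHomogeneous 0 → a ≠ 0 → IsUnit a := by
    intro a ha ha0
    obtain ⟨c, rfl⟩ := homog_zero_eq_C ha
    exact (isUnit_iff_ne_zero.2 (fun h => ha0 (by rw [h, C_0]))).map C
  have hirr : Irreducible q' := by
    refine ⟨fun h => hP.ne_top (Ideal.eq_top_of_isUnit_mem _ hq'P h), fun {a b} hab => ?_⟩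
    obtain ⟨i, j, hij, ha, hb⟩ := homog_dvd hq'h hq'0 hab
    have ha0 : a ≠ 0 := by rintro rfl; simp [hab] at hq'0
    have hb0 : b ≠ 0 := by rintro rfl; simp [hab] at hq'0
    have : i = 0 ∨ j = 0 ∨ (i = 1 ∧ j = 1) := by omega
    rcases this with rfl | rfl | ⟨rfl, rfl⟩
    · exact Or.inl (hunit a ha ha0)
    · exact Or.inr (hunit b hb hb0)
    · exfalso
      rcases hP.mem_or_mem (hab ▸ hq'P) with h | h
      · exact hlin a b hab ha h
      · exact hlin b a (by rw [hab, mul_comm]) hb h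
  -- the prime (x, q')
  have hQ2 : (Ideal.comap (lsub T) (Ideal.span {q'})).IsPrime := by
    have : (Ideal.span {q'}).IsPrime := (Ideal.span_singleton_prime hq'0).2 hirr.prime
    exact Ideal.comap_isPrime _ _
  have hPeq : Ideal.comap (lsub T) (Ideal.span {q'}) = P := by
    refine H1 (Ideal.span {lin x}) _ ((Ideal.span_singleton_prime hxp.ne_zero).2 hxp) hQ2 ?_ ?_ ?_
    · rw [Ne, Ideal.span_singleton_eq_bot]; exact hxp.ne_zero
    · rw [lt_iff_le_not_ge]
      constructor
      · rw [Ideal.span_singleton_le_iff_mem, Ideal.mem_comap, (hker _).1 (Ideal.mem_span_singleton_self _)]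
        exact zero_mem _
      · intro h
        have : q' ∈ Ideal.span {lin x} := h (by
          rw [Ideal.mem_comap, hTq']; exact Ideal.mem_span_singleton_self _)
        rw [hker, hTq'] at this
        exact hq'0 this
    · intro p hp
      rw [Ideal.mem_comap] at hp
      have h3 := (Ideal.span_singleton_le_iff_mem (I := P)).2 hq'P hp
      have := P.add_mem (hxle (hsub p)) h3
      simpa using this
  have hdec : ∀ i, ∃ c : K, ∃ l : Fin N → K, g i = C c * q + lin x * lin l := by
    intro i
    have h3 : lsub T (g i) ∈ Ideal.span {q'} := by
      have := hgP i; rw [← hPeq] at this; exact this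
    obtain ⟨b, hb⟩ := Ideal.mem_span_singleton'.1 h3
    obtain ⟨c, hc⟩ : ∃ c : K, lsub T (g i) = C c * q' := by
      by_cases h0 : lsub T (g i) = 0
      · exact ⟨0, by rw [h0]; simp⟩
      · obtain ⟨i', j, hij, hi', hj⟩ := homog_dvd (lsub_homog T (hg i)) h0 hb.symm
        have : j = 2 := hj.inj_right hq'h hq'0
        obtain rfl : i' = 0 := by omega
        obtain ⟨c, rfl⟩ := homog_zero_eq_C hi'
        exact ⟨c, hb.symm⟩
    have h4 : g i - C c * q ∈ Ideal.span {lin x} := by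
      rw [hker, map_sub, map_mul, hc]
      have : lsub T (C c) = C c := (lsub T).commutes c
      rw [this, sub_self]
    obtain ⟨b', hb'⟩ := Ideal.mem_span_singleton'.1 h4
    refine ⟨c, ?_⟩
    by_cases h0 : g i - C c * q = 0
    · exact ⟨0, by rw [map_zero, mul_zero, add_zero]; exact sub_eq_zero.1 h0⟩
    · have hh : (g i - C c * q).IsHomogeneous 2 := by
        refine (hg i).sub ?_
        have := (isHomogeneous_C (Fin N) c).mul (hg i0)
        rwa [zero_add] at this
      obtain ⟨i', j, hij, hi', hj⟩ := homog_dvd hh h0 hb'.symm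
      have : j = 1 := hj.inj_right (lin_homog x) hxp.ne_zero
      obtain rfl : i' = 1 := by omega
      obtain ⟨l, rfl⟩ := exists_lin hi'
      exact ⟨l, by rw [mul_comm (lin x), hb']; ring⟩
  choose c l hcl using hdec
  set L := Ideal.span (Set.range fun j => lin (l (i0.succAbove j))) with hL
  have hLp : L.IsPrime := by
    rw [hL, lin_span_range (fun j => l (i0.succAbove j))]; exact lin_span_prime _
  have hpdJ : PdLE (MvPolynomial (Fin N) K) (m+1) (MvPolynomial (Fin N) K ⧸ (L ⊔ Ideal.span {q})) :=
    pd_prime_add L hLp q (pd_lin _)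
  have hI : Ideal.span (Set.range g) =
      Ideal.span (Set.range fun j => lin x * lin (l (i0.succAbove j))) ⊔ Ideal.span {q} := by
    apply le_antisymm
    · rw [Ideal.span_le]
      rintro _ ⟨i, rfl⟩
      rcases Fin.eq_self_or_eq_succAbove i0 i with rfl | ⟨j, rfl⟩
      · exact Ideal.mem_sup_right (Ideal.mem_span_singleton_self _)
      · rw [SetLike.mem_coe, hcl]
        refine add_mem (Ideal.mem_sup_right (Ideal.mul_mem_left _ _ (Ideal.mem_span_singleton_self _)))
          (Ideal.mem_sup_left (Ideal.subset_span ⟨j, rfl⟩))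
    · refine sup_le (Ideal.span_le.2 ?_) ((Ideal.span_singleton_le_iff_mem (I := Ideal.span (Set.range g))).2 (Ideal.subset_span ⟨i0, rfl⟩))
      rintro _ ⟨j, rfl⟩
      have : lin x * lin (l (i0.succAbove j)) = g (i0.succAbove j) - C (c (i0.succAbove j)) * q := by
        rw [hcl]; ring
      rw [SetLike.mem_coe]
      simp only [this]
      exact sub_mem (Ideal.subset_span ⟨_, rfl⟩) (Ideal.mul_mem_left _ _ (Ideal.subset_span ⟨i0, rfl⟩))
  have hxL : Ideal.span (Set.range fun j => lin x * lin (l (i0.succAbove j))) =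
      Ideal.span {lin x} * L := by
    rw [hL, Ideal.span_mul_span', Set.singleton_mul, ← Set.range_comp]; rfl
  rw [hxL] at hI
  exact pd_ideal_congr hI (pd_xL hxp L q hi0 (by omega) hpdJ)

end A2
end PD

namespace PD
section Tlem
variable {R : Type u} [CommRing R]

theorem pd_step {d : ℕ} {D : Type u} [AddCommGroup D] [Module R D] (A B : Submodule R D) (hAB : A ≤ B)
    (J : Ideal R) (φ : R →ₗ[R] D) (h1 : ∀ r, φ r ∈ B) (h2 : ∀ x ∈ B, ∃ r, x - φ r ∈ A)
    (h3 : ∀ r, φ r ∈ A ↔ r ∈ J) (hA : PdLE R d A) (hJ : PdLE R d (R ⧸ J)) : PdLE R d B := by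
  let A' : Submodule R B := A.comap B.subtype
  let ψ : R →ₗ[R] (B ⧸ A') := A'.mkQ ∘ₗ (φ.codRestrict B h1)
  have hker : LinearMap.ker ψ = J := by
    ext r
    rw [LinearMap.mem_ker, ← h3]
    show A'.mkQ _ = 0 ↔ _
    rw [Submodule.mkQ_apply, Submodule.Quotient.mk_eq_zero]; rfl
  have hsurj : Function.Surjective ψ := by
    intro y
    obtain ⟨x, rfl⟩ := Submodule.mkQ_surjective A' y
    obtain ⟨r, hr⟩ := h2 x x.2
    refine ⟨r, ?_⟩
    symm
    rw [← sub_eq_zero]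
    show A'.mkQ x - A'.mkQ _ = 0
    rw [← map_sub, Submodule.mkQ_apply, Submodule.Quotient.mk_eq_zero]
    exact hr
  have hQ : PdLE R d (B ⧸ A') := by
    subst hker
    exact pd_equiv (ψ.quotKerEquivOfSurjective hsurj).symm hJ
  refine pd_X2 (Submodule.inclusion hAB) A'.mkQ (Submodule.inclusion_injective hAB)
    (Submodule.mkQ_surjective _) ?_ hA hQ
  rw [LinearMap.exact_iff, Submodule.ker_mkQ, Submodule.range_inclusion]

theorem pd_filt {d : ℕ} {M : Type u} [AddCommGroup M] [Module R M] (T : ℕ → Submodule R M)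
    (hT : ∀ k, T k ≤ T (k+1)) (htop : ∀ x, ∃ k, x ∈ T k) (hM : PdLE R d M)
    (J : Ideal R) (hJ : PdLE R d (R ⧸ J)) (φ : ℕ → R →ₗ[R] M)
    (h1 : ∀ k r, φ k r ∈ T (k+1)) (h2 : ∀ k, ∀ x ∈ T (k+1), ∃ r, x - φ k r ∈ T k)
    (h3 : ∀ k r, φ k r ∈ T k ↔ r ∈ J) : PdLE R d (T 0) := by
  have hmono : ∀ k, T 0 ≤ T k := fun k => monotone_nat_of_le_succ hT (Nat.zero_le k)
  have hmem : ∀ k x, (T 0).mkQ x ∈ (T k).map (T 0).mkQ ↔ x ∈ T k := by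
    intro k x
    have := Submodule.comap_map_mkQ (T 0) (T k)
    rw [sup_eq_right.2 (hmono k)] at this
    conv_rhs => rw [← this]
    rfl
  have hD : ∀ k, PdLE R d ((T k).map (T 0).mkQ) := by
    intro k
    induction k with
    | zero =>
      have : Subsingleton ((T 0).map (T 0).mkQ) := by
        rw [Submodule.subsingleton_iff_eq_bot, Submodule.mkQ_map_self]
      exact pd_subsingleton d
    | succ k ih =>
      refine pd_step _ _ (Submodule.map_mono (hT k)) J ((T 0).mkQ ∘ₗ φ k) ?_ ?_ ?_ ih hJ
      · intro r; exact Submodule.mem_map_of_mem (h1 k r)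
      · rintro _ ⟨x, hx, rfl⟩
        obtain ⟨r, hr⟩ := h2 k x hx
        refine ⟨r, ?_⟩
        rw [LinearMap.comp_apply, ← map_sub, hmem]; exact hr
      · intro r; rw [LinearMap.comp_apply, hmem, h3]
  have hD' : PdLE R (d+1) (M ⧸ T 0) := by
    refine pd_telescope (fun k => (T k).map (T 0).mkQ) (fun k => Submodule.map_mono (hT k)) ?_ hD
    intro y
    obtain ⟨x, rfl⟩ := Submodule.mkQ_surjective _ y
    obtain ⟨k, hk⟩ := htop x
    exact ⟨k, Submodule.mem_map_of_mem hk⟩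
  refine pd_X1 (T 0).subtype (T 0).mkQ (Submodule.subtype_injective _) (Submodule.mkQ_surjective _) ?_ hM hD'
  rw [LinearMap.exact_iff, Submodule.ker_mkQ, Submodule.range_subtype]

open scoped Polynomial

/-- Koszul-type condition on linear syzygies modulo A -/
def Kos (A : Ideal R) {k : ℕ} (v : Fin k → R) : Prop :=
  ∀ c : Fin k → R, ∑ j, c j * v j ∈ A → ∃ κ : Fin k → Fin k → R,
    (∀ i j, κ i j = - κ j i) ∧ (∀ i, κ i i = 0) ∧ ∀ j, c j - ∑ i, κ i j * v i ∈ A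

theorem alt_sum {S : Type*} [CommRing S] {k : ℕ} (κ : Fin k → Fin k → S) (f : Fin k → S)
    (h : ∀ i j, κ i j = - κ j i) (h0 : ∀ i, κ i i = 0) :
    ∑ j, f j * ∑ i, κ i j * f i = 0 := by
  simp only [Finset.mul_sum]
  rw [← Finset.sum_product']
  refine Finset.sum_involution (fun p _ => (p.2, p.1)) ?_ ?_ ?_ ?_
  · rintro ⟨i, j⟩ _; simp only; rw [h i j]; ring
  · rintro ⟨i, j⟩ _ hne h2
    simp only [Prod.mk.injEq] at h2
    obtain ⟨rfl, -⟩ := h2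
    exact hne (by simp [h0])
  · simp
  · simp

theorem trunc_aux (A : Ideal R) {k : ℕ} (u v : Fin k → R) (H : Kos A v) (d : ℕ) (p : R[X])
    (hp : ∀ i ≥ d+2, p.coeff i = 0) (m : ℕ) (hm : d ≤ m) :
    ∀ (c : Fin k → R[X]), (∀ j, ∀ i ≥ m+1, (c j).coeff i = 0) →
    (∀ i, (p - ∑ j, (Polynomial.C (u j) + Polynomial.C (v j) * Polynomial.X) * c j).coeff i ∈ A) →
    ∃ c' : Fin k → R[X], (∀ j, ∀ i ≥ d+1, (c' j).coeff i = 0) ∧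
    (∀ i, (p - ∑ j, (Polynomial.C (u j) + Polynomial.C (v j) * Polynomial.X) * c' j).coeff i ∈ A) := by
  induction m, hm using Nat.le_induction with
  | base => exact fun c h1 h2 => ⟨c, h1, h2⟩
  | succ m hm ih =>
    intro c hc hpc
    have h1 := hpc (m+2)
    have h2 : ∑ j, (c j).coeff (m+1) * v j ∈ A := by
      rw [Polynomial.coeff_sub, hp _ (by omega), zero_sub, neg_mem_iff, Polynomial.finsetSum_coeff] at h1
      convert h1 using 1
      refine Finset.sum_congr rfl fun j _ => ?_
      rw [add_mul, Polynomial.coeff_add, Polynomial.coeff_C_mul, hc j (m+2) (by omega), mul_assoc,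
        Polynomial.coeff_C_mul, Polynomial.coeff_X_mul]
      ring
    obtain ⟨κ, hκ1, hκ2, hκ3⟩ := H _ h2
    set f : Fin k → R[X] := fun j => Polynomial.C (u j) + Polynomial.C (v j) * Polynomial.X with hf
    set α : Fin k → R := fun j => (c j).coeff (m+1) - ∑ i, κ i j * v i with hα
    have hXf : ∀ i, Polynomial.X ^ m * f i = Polynomial.monomial m (u i) + Polynomial.monomial (m+1) (v i) := by
      intro i
      rw [← Polynomial.C_mul_X_pow_eq_monomial, ← Polynomial.C_mul_X_pow_eq_monomial, hf]; ring
    let c' : Fin k → R[X] := fun j => c j - Polynomial.monomial (m+1) (α j)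
      - ∑ i, Polynomial.C (κ i j) * (Polynomial.X ^ m * f i)
    refine ih c' ?_ ?_
    · intro j i hi
      simp only [c', hXf, Polynomial.coeff_sub, Polynomial.finsetSum_coeff, Polynomial.coeff_C_mul,
        Polynomial.coeff_add, Polynomial.coeff_monomial]
      simp only [if_neg (by omega : ¬ m = i), zero_add]
      by_cases h : m + 1 = i
      · subst h
        simp [hα]
      · simp [h, hc j i (by omega)]
    · intro i
      have hk : ∑ j, f j * ∑ i, Polynomial.C (κ i j) * (Polynomial.X ^ m * f i) = 0 := by
        have := alt_sum (fun i j => Polynomial.C (κ i j)) f (fun i j => by rw [hκ1 i j, map_neg])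
          (fun i => by rw [hκ2, map_zero])
        calc _ = Polynomial.X ^ m * ∑ j, f j * ∑ i, Polynomial.C (κ i j) * f i := by
              simp only [Finset.mul_sum]
              refine Finset.sum_congr rfl fun j _ => Finset.sum_congr rfl fun i _ => ?_
              ring
          _ = 0 := by rw [this, mul_zero]
      have : p - ∑ j, f j * c' j = (p - ∑ j, f j * c j) + ∑ j, f j * Polynomial.monomial (m+1) (α j) := by
        simp only [c', mul_sub, Finset.sum_sub_distrib, hk]; ring
      rw [this, Polynomial.coeff_add, Polynomial.finsetSum_coeff]
      refine A.add_mem (hpc i) (A.sum_mem fun j _ => ?_)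
      rw [← Polynomial.C_mul_X_pow_eq_monomial, mul_left_comm, Polynomial.coeff_C_mul]
      exact A.mul_mem_right _ (hκ3 j)

theorem trunc_mem (A : Ideal R) {k : ℕ} (u v : Fin k → R) (H : Kos A v) (d : ℕ) (p : R[X])
    (hp : ∀ i ≥ d+2, p.coeff i = 0) (hJ : p ∈ A.map Polynomial.C ⊔
      Ideal.span (Set.range fun j => Polynomial.C (u j) + Polynomial.C (v j) * Polynomial.X)) :
    ∃ c' : Fin k → R[X], (∀ j, ∀ i ≥ d+1, (c' j).coeff i = 0) ∧
    (∀ i, (p - ∑ j, (Polynomial.C (u j) + Polynomial.C (v j) * Polynomial.X) * c' j).coeff i ∈ A) := by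
  obtain ⟨y, hy, z, hz, rfl⟩ := Submodule.mem_sup.1 hJ
  obtain ⟨c, hc⟩ := (Submodule.mem_span_range_iff_exists_fun _).1 hz
  obtain ⟨m, hm⟩ : ∃ m, ∀ j, (c j).natDegree ≤ m :=
    ⟨∑ j, (c j).natDegree, fun j => Finset.single_le_sum (f := fun j => (c j).natDegree) (fun _ _ => Nat.zero_le _) (Finset.mem_univ j)⟩
  refine trunc_aux A u v H d _ hp (max m d) (le_max_right _ _) c ?_ ?_
  · intro j i hi
    refine Polynomial.coeff_eq_zero_of_natDegree_lt ?_
    have := hm j; have := le_max_left m d; omega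
  · intro i
    have : y + z - ∑ j, (Polynomial.C (u j) + Polynomial.C (v j) * Polynomial.X) * c j = y := by
      rw [← hc]; simp only [smul_eq_mul, mul_comm]; ring
    rw [this]
    exact Ideal.mem_map_C_iff.1 hy i


/-- the relations submodule of R×R -/
def colS (A : Ideal R) {k : ℕ} (u v : Fin k → R) : Submodule R (R × R) :=
  Submodule.prod A A ⊔ Submodule.span R (Set.range fun j => (u j, v j))

theorem pd_Tlem (A : Ideal R) {k e : ℕ} (u v : Fin k → R) (H : Kos A v)
    (hT : PdLE R[X] e (R[X] ⧸ (A.map Polynomial.C ⊔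
      Ideal.span (Set.range fun j => Polynomial.C (u j) + Polynomial.C (v j) * Polynomial.X))))
    (hv : PdLE R e (R ⧸ (A ⊔ Ideal.span (Set.range v)))) :
    PdLE R e ((R × R) ⧸ colS A u v) := by
  set f : Fin k → R[X] := fun j => Polynomial.C (u j) + Polynomial.C (v j) * Polynomial.X with hf
  set J : Ideal R[X] := A.map Polynomial.C ⊔ Ideal.span (Set.range f) with hJ
  have hT' : PdLE R e (R[X] ⧸ J) := pd_restrict hT
  let π : R[X] →ₗ[R] (R[X] ⧸ J) := (Ideal.Quotient.mkₐ R J).toLinearMap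
  have hπ : ∀ p, π p = 0 ↔ p ∈ J := fun p => Ideal.Quotient.eq_zero_iff_mem
  have hπs : Function.Surjective π := Ideal.Quotient.mk_surjective
  let T : ℕ → Submodule R (R[X] ⧸ J) := fun k => (Polynomial.degreeLT R (k+2)).map π
  have hdeg : ∀ n p, p ∈ Polynomial.degreeLT R n ↔ ∀ i ≥ n, p.coeff i = 0 := by
    intro n p
    rw [Polynomial.mem_degreeLT, Polynomial.degree_lt_iff_coeff_zero]
  -- J facts
  have hAJ : ∀ p : R[X], (∀ i, p.coeff i ∈ A) → p ∈ J := fun p hp =>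
    Ideal.mem_sup_left (Ideal.mem_map_C_iff.2 hp)
  have hfJ : ∀ j, f j ∈ J := fun j => Ideal.mem_sup_right (Ideal.subset_span ⟨j, rfl⟩)
  have htop2 : ∀ d (p : R[X]), p ∈ J → (∀ i ≥ d+2, p.coeff i = 0) →
      p.coeff (d+1) ∈ A ⊔ Ideal.span (Set.range v) := by
    intro d p hpJ hp
    obtain ⟨c, hc, hpc⟩ := trunc_mem A u v H d p hp hpJ
    have h1 := hpc (d+1)
    have h2 : (∑ j, (Polynomial.C (u j) + Polynomial.C (v j) * Polynomial.X) * c j).coeff (d+1) =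
        ∑ j, (c j).coeff d * v j := by
      rw [Polynomial.finsetSum_coeff]
      refine Finset.sum_congr rfl fun j _ => ?_
      rw [add_mul, Polynomial.coeff_add, Polynomial.coeff_C_mul, hc j (d+1) (by omega), mul_assoc,
        Polynomial.coeff_C_mul, Polynomial.coeff_X_mul]
      ring
    rw [Polynomial.coeff_sub, h2] at h1
    have h3 : ∑ j, (c j).coeff d * v j ∈ Ideal.span (Set.range v) :=
      Ideal.sum_mem _ fun j _ => Ideal.mul_mem_left _ _ (Ideal.subset_span ⟨j, rfl⟩)
    have := add_mem (Ideal.mem_sup_left h1) (Ideal.mem_sup_right (S := A) h3)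
    simpa using this
  have hT0 : PdLE R e (T 0) := by
    refine pd_filt T ?_ ?_ hT' (A ⊔ Ideal.span (Set.range v)) hv
      (fun k => π ∘ₗ Polynomial.monomial (k+2)) ?_ ?_ ?_
    · intro k
      exact Submodule.map_mono (Polynomial.degreeLT_mono (by omega))
    · intro x
      obtain ⟨p, rfl⟩ := hπs x
      refine ⟨p.natDegree, Submodule.mem_map_of_mem ?_⟩
      rw [hdeg]
      intro i hi
      exact Polynomial.coeff_eq_zero_of_natDegree_lt (by omega)
    · intro k r
      refine Submodule.mem_map_of_mem ?_
      rw [hdeg]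
      intro i hi
      rw [Polynomial.coeff_monomial, if_neg (by omega)]
    · rintro k _ ⟨p, hp, rfl⟩
      refine ⟨p.coeff (k+2), ?_⟩
      rw [LinearMap.comp_apply, ← map_sub]
      refine Submodule.mem_map_of_mem ?_
      rw [SetLike.mem_coe, hdeg] at hp
      rw [hdeg]
      intro i hi
      rw [Polynomial.coeff_sub, Polynomial.coeff_monomial]
      by_cases h : k + 2 = i
      · subst h; simp
      · rw [if_neg h, hp i (by omega), sub_zero]
    · intro k r
      constructor
      · rintro ⟨p, hp, hpr⟩
        rw [SetLike.mem_coe, hdeg] at hp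
        have h1 : Polynomial.monomial (k+2) r - p ∈ J := by
          rw [← hπ, map_sub, hpr]; exact sub_self _
        have := htop2 (k+1) _ h1 (fun i hi => by
          rw [Polynomial.coeff_sub, Polynomial.coeff_monomial, if_neg (by omega), hp i (by omega), sub_zero])
        rw [Polynomial.coeff_sub, Polynomial.coeff_monomial, if_pos (by omega), hp _ (by omega), sub_zero] at this
        exact this
      · intro hr
        obtain ⟨y, hy, z, hz, rfl⟩ := Submodule.mem_sup.1 hr
        rw [map_add]
        refine add_mem ?_ ?_
        · have : π (Polynomial.monomial (k+2) y) = 0 := by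
            rw [hπ]
            refine hAJ _ fun i => ?_
            rw [Polynomial.coeff_monomial]; split_ifs
            · exact hy
            · exact zero_mem _
          rw [LinearMap.comp_apply, this]; exact zero_mem _
        · have : Ideal.span (Set.range v) ≤ (T k).comap (π ∘ₗ Polynomial.monomial (k+2)) := by
            refine Submodule.span_le.2 ?_
            rintro _ ⟨j, rfl⟩
            refine ⟨- Polynomial.monomial (k+1) (u j), ?_, ?_⟩
            · rw [SetLike.mem_coe, hdeg]
              intro i hi
              rw [Polynomial.coeff_neg, Polynomial.coeff_monomial, if_neg (by omega), neg_zero]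
            · symm
              rw [← sub_eq_zero, LinearMap.comp_apply, ← map_sub, hπ]
              have h3 : Polynomial.monomial (k+2) (v j) - -Polynomial.monomial (k+1) (u j) =
                  Polynomial.X ^ (k+1) * f j := by
                rw [← Polynomial.C_mul_X_pow_eq_monomial, ← Polynomial.C_mul_X_pow_eq_monomial, hf]; ring
              rw [h3]
              exact J.mul_mem_left _ (hfJ j)
          exact this hz
  -- C ≃ T 0
  let ψ : (R × R) →ₗ[R] R[X] := (Polynomial.monomial 0).coprod (Polynomial.monomial 1)
  have hψc : ∀ p q i, (ψ (p, q)).coeff i = (if 0 = i then p else 0) + (if 1 = i then q else 0) := by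
    intro p q i
    simp only [ψ, LinearMap.coprod_apply, Polynomial.coeff_add, Polynomial.coeff_monomial]
  have hψf : ∀ j, ψ (u j, v j) = f j := by
    intro j
    simp only [ψ, LinearMap.coprod_apply, ← Polynomial.C_mul_X_pow_eq_monomial, hf]; ring
  have hψA : ∀ x : R × R, ψ x ∈ A.map Polynomial.C → x ∈ Submodule.prod A A := by
    rintro ⟨p, q⟩ h
    rw [Ideal.mem_map_C_iff] at h
    have h0 := h 0
    have h1 := h 1
    rw [hψc] at h0 h1
    simp at h0 h1
    exact ⟨h0, h1⟩
  have hker : LinearMap.ker (π ∘ₗ ψ) = colS A u v := by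
    apply le_antisymm
    · intro x hx
      rw [LinearMap.mem_ker, LinearMap.comp_apply, hπ] at hx
      obtain ⟨c, hc, hpc⟩ := trunc_mem A u v H 0 (ψ x) (fun i hi => by
        obtain ⟨p, q⟩ := x
        rw [hψc, if_neg (by omega), if_neg (by omega), add_zero]) hx
      have hcC : ∀ j, c j = Polynomial.C ((c j).coeff 0) := by
        intro j
        refine Polynomial.eq_C_of_natDegree_le_zero ?_
        rw [Polynomial.natDegree_le_iff_coeff_eq_zero]
        intro i hi
        exact hc j i (by omega)
      have h4 : ψ x - ∑ j, f j * c j = ψ (x - ∑ j, (c j).coeff 0 • (u j, v j)) := by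
        rw [map_sub, map_sum]
        congr 1
        refine Finset.sum_congr rfl fun j _ => ?_
        rw [map_smul, hψf, Polynomial.smul_eq_C_mul, ← hcC, mul_comm]
      have h5 := hψA _ (h4 ▸ Ideal.mem_map_C_iff.2 hpc)
      have h6 : ∑ j, (c j).coeff 0 • (u j, v j) ∈ Submodule.span R (Set.range fun j => (u j, v j)) :=
        Submodule.sum_mem _ fun j _ => Submodule.smul_mem _ _ (Submodule.subset_span ⟨j, rfl⟩)
      have := add_mem (Submodule.mem_sup_left h5) (Submodule.mem_sup_right (S := Submodule.prod A A) h6)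
      rw [sub_add_cancel] at this
      exact this
    · refine sup_le ?_ (Submodule.span_le.2 ?_)
      · rintro ⟨p, q⟩ ⟨hp, hq⟩
        rw [LinearMap.mem_ker, LinearMap.comp_apply, hπ]
        refine hAJ _ fun i => ?_
        rw [hψc]
        refine A.add_mem ?_ ?_
        · split_ifs
          · exact hp
          · exact zero_mem _
        · split_ifs
          · exact hq
          · exact zero_mem _
      · rintro _ ⟨j, rfl⟩
        rw [SetLike.mem_coe, LinearMap.mem_ker, LinearMap.comp_apply, hπ, hψf]
        exact hfJ j
  have hrange : LinearMap.range (π ∘ₗ ψ) = T 0 := by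
    rw [LinearMap.range_comp]
    show _ = Submodule.map π _
    congr 1
    apply le_antisymm
    · rintro _ ⟨⟨p, q⟩, rfl⟩
      rw [hdeg]
      intro i hi
      rw [hψc, if_neg (by omega), if_neg (by omega), add_zero]
    · intro p hp
      rw [hdeg] at hp
      refine ⟨(p.coeff 0, p.coeff 1), ?_⟩
      ext i
      rw [hψc]
      match i with
      | 0 => simp
      | 1 => simp
      | i+2 => simp [hp (i+2) (by omega)]
  rw [← hrange] at hT0
  rw [← hker]
  exact pd_equiv (LinearMap.quotKerEquivRange _) hT0

end Tlem
end PD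

namespace PD
section tapp
variable {R : Type u} [CommRing R]

theorem pd_ringEquiv_span {S : Type u} [CommRing S] {n : ℕ} {α : Type*} (e : R ≃+* S) (a : α → R)
    (h : PdLE S n (S ⧸ Ideal.span (Set.range fun i => e (a i)))) :
    PdLE R n (R ⧸ Ideal.span (Set.range a)) := by
  refine pd_ringEquiv e _ _ (fun x => ?_) h
  have hmap : Ideal.span (Set.range fun i => e (a i)) = Ideal.map e (Ideal.span (Set.range a)) := by
    rw [Ideal.map_span, ← Set.range_comp]; rfl
  rw [hmap]
  refine ⟨fun h => Ideal.mem_map_of_mem _ h, fun h => ?_⟩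
  obtain ⟨y, hy, hxy⟩ := (Ideal.mem_map_of_equiv e _).1 h
  rw [← e.injective hxy]
  exact hy

theorem pd_lin' {B : Type u} [CommRing B] [IsDomain B] [IsPrincipalIdealRing B] {N : ℕ}
    {α : Type*} [Fintype α] (c : α → Fin N → B) :
    PdLE (MvPolynomial (Fin N) B) (Fintype.card α)
      (MvPolynomial (Fin N) B ⧸ Ideal.span (Set.range fun j => lin (c j))) := by
  have := pd_lin (fun j => c ((Fintype.equivFin α).symm j))
  refine pd_ideal_congr ?_ this
  congr 1
  exact ((Fintype.equivFin α).symm.surjective.range_comp (fun j => lin (c j))).symm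

theorem kos_zero (A : Ideal R) (v : Fin 0 → R) : Kos A v :=
  fun _ _ => ⟨fun i => i.elim0, fun i => i.elim0, fun i => i.elim0, fun i => i.elim0⟩

theorem kos_succ (A : Ideal R) {k : ℕ} (v : Fin (k+1) → R) (h : Kos A (fun j => v j.succ))
    (hp : (A ⊔ Ideal.span (Set.range fun j : Fin k => v j.succ)).IsPrime)
    (hv : v 0 ∉ A ⊔ Ideal.span (Set.range fun j : Fin k => v j.succ)) : Kos A v := by
  intro c hc
  rw [Fin.sum_univ_succ] at hc
  have h1 : c 0 * v 0 ∈ A ⊔ Ideal.span (Set.range fun j : Fin k => v j.succ) := by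
    have h2 : ∑ j : Fin k, c j.succ * v j.succ ∈ Ideal.span (Set.range fun j : Fin k => v j.succ) :=
      Ideal.sum_mem _ fun j _ => Ideal.mul_mem_left _ _ (Ideal.subset_span ⟨j, rfl⟩)
    have := sub_mem (Ideal.mem_sup_left hc) (Ideal.mem_sup_right (S := A) h2)
    rwa [add_sub_cancel_right] at this
  have h2 := (hp.mem_or_mem h1).resolve_right hv
  obtain ⟨α, hα, z, hz, hαz⟩ := Submodule.mem_sup.1 h2
  obtain ⟨d, hd⟩ := (Submodule.mem_span_range_iff_exists_fun _).1 hz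
  obtain ⟨κ, hκ1, hκ2, hκ3⟩ := h (fun j => c j.succ + d j * v 0) (by
    have : ∑ j : Fin k, (c j.succ + d j * v 0) * v j.succ =
        (c 0 * v 0 + ∑ j : Fin k, c j.succ * v j.succ) - α * v 0 := by
      rw [← hαz, ← hd]
      simp only [add_mul, Finset.sum_add_distrib, Finset.sum_mul, smul_eq_mul]
      have : ∑ j : Fin k, d j * v 0 * v j.succ = ∑ j : Fin k, d j * v j.succ * v 0 :=
        Finset.sum_congr rfl fun j _ => by ring
      rw [this]; ring
    rw [this]
    exact A.sub_mem hc (A.mul_mem_right _ hα))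
  refine ⟨Fin.cons (Fin.cons 0 (fun j => - d j)) (fun i => Fin.cons (d i) (κ i)), ?_, ?_, ?_⟩
  · intro i j
    refine Fin.cases ?_ (fun i => ?_) i <;> refine Fin.cases ?_ (fun j => ?_) j
    · simp
    · simp
    · simp
    · simpa using hκ1 i j
  · intro i
    refine Fin.cases ?_ (fun i => ?_) i
    · simp
    · simpa using hκ2 i
  · intro j
    refine Fin.cases ?_ (fun j => ?_) j
    · rw [Fin.sum_univ_succ]
      simp only [Fin.cons_zero, Fin.cons_succ, zero_mul, zero_add]
      have : c 0 - ∑ i, d i * v i.succ = α := by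
        rw [← hαz, ← hd]; simp only [smul_eq_mul]; ring
      rw [this]; exact hα
    · rw [Fin.sum_univ_succ]
      simp only [Fin.cons_zero, Fin.cons_succ]
      have := hκ3 j
      convert this using 1
      ring

variable {K : Type u} [Field K] {N : ℕ}

theorem lin_span_sup (W W' : Submodule K (Fin N → K)) :
    Ideal.span (lin '' (W : Set (Fin N → K))) ⊔ Ideal.span (lin '' (W' : Set (Fin N → K))) =
      Ideal.span (lin '' ((W ⊔ W' : Submodule K (Fin N → K)) : Set (Fin N → K))) := by
  apply le_antisymm
  · refine sup_le (Ideal.span_mono (Set.image_mono ?_)) (Ideal.span_mono (Set.image_mono ?_))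
    · exact (le_sup_left : W ≤ W ⊔ W')
    · exact (le_sup_right : W' ≤ W ⊔ W')
  · rw [Ideal.span_le]
    rintro _ ⟨x, hx, rfl⟩
    obtain ⟨y, hy, z, hz, rfl⟩ := Submodule.mem_sup.1 hx
    rw [map_add]
    exact add_mem (Ideal.mem_sup_left (Ideal.subset_span ⟨y, hy, rfl⟩))
      (Ideal.mem_sup_right (Ideal.subset_span ⟨z, hz, rfl⟩))

theorem kos_lin (W : Submodule K (Fin N → K)) {k : ℕ} (c : Fin k → Fin N → K)
    (h : ∀ d : Fin k → K, ∑ j, d j • c j ∈ W → d = 0) :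
    Kos (Ideal.span (lin '' (W : Set (Fin N → K)))) (fun j => lin (c j)) := by
  induction k with
  | zero => exact kos_zero _ _
  | succ k ih =>
    have hs : Ideal.span (lin '' (W : Set (Fin N → K))) ⊔
        Ideal.span (Set.range fun j : Fin k => lin (c j.succ)) =
        Ideal.span (lin '' ((W ⊔ Submodule.span K (Set.range fun j : Fin k => c j.succ) :
          Submodule K (Fin N → K)) : Set (Fin N → K))) := by
      rw [lin_span_range (fun j : Fin k => c j.succ), lin_span_sup]
    refine kos_succ _ _ (ih (fun j => c j.succ) ?_) ?_ ?_
    · intro d hd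
      have := h (Fin.cons 0 d) (by rw [Fin.sum_univ_succ]; simpa using hd)
      funext j
      have := congrFun this j.succ
      simpa using this
    · rw [hs]; exact lin_span_prime _
    · rw [hs, lin_mem_span_iff]
      intro hm
      obtain ⟨y, hy, z, hz, hyz⟩ := Submodule.mem_sup.1 hm
      obtain ⟨d, hd⟩ := (Submodule.mem_span_range_iff_exists_fun _).1 hz
      have := h (Fin.cons 1 (fun j => - d j)) (by
        rw [Fin.sum_univ_succ]
        simp only [Fin.cons_zero, Fin.cons_succ, one_smul, neg_smul, Finset.sum_neg_distrib]
        rw [hd, ← hyz]; simpa using hy)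
      have := congrFun this 0
      simp at this

open scoped Polynomial

/-- swap variables -/
noncomputable def swapE (K : Type u) [Field K] (N : ℕ) :
    (MvPolynomial (Fin N) K)[X] ≃+* MvPolynomial (Fin N) K[X] :=
  ((optionEquivLeft K (Fin N)).symm.trans (optionEquivRight K (Fin N))).toRingEquiv

theorem swapE_X : swapE K N Polynomial.X = C Polynomial.X := by
  have : (optionEquivLeft K (Fin N)).symm Polynomial.X = X none := by
    rw [AlgEquiv.symm_apply_eq, optionEquivLeft_X_none]
  show optionEquivRight K (Fin N) ((optionEquivLeft K (Fin N)).symm Polynomial.X) = _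
  rw [this, optionEquivRight_X_none]

theorem swapE_lin (c : Fin N → K) : swapE K N (Polynomial.C (lin c)) =
    lin (fun i => (Polynomial.C (c i) : K[X])) := by
  have : (optionEquivLeft K (Fin N)).symm (Polynomial.C (lin c)) = ∑ i, c i • X (some i) := by
    rw [AlgEquiv.symm_apply_eq, map_sum, lin_apply, map_sum]
    refine Finset.sum_congr rfl fun i _ => ?_
    rw [smul_eq_C_mul, map_mul, smul_eq_C_mul, map_mul, optionEquivLeft_X_some, optionEquivLeft_C]
  show optionEquivRight K (Fin N) ((optionEquivLeft K (Fin N)).symm _) = _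
  rw [this, map_sum, lin_apply]
  refine Finset.sum_congr rfl fun i _ => ?_
  rw [map_smul, optionEquivRight_X_some, Algebra.smul_def, smul_eq_C_mul]
  rfl

theorem tapp_basis {s k : ℕ} (w : Fin s → Fin N → K) (cu cv : Fin k → Fin N → K)
    (h : ∀ d : Fin k → K, ∑ j, d j • cv j ∈ Submodule.span K (Set.range w) → d = 0) :
    PdLE (MvPolynomial (Fin N) K) (s + k) ((MvPolynomial (Fin N) K × MvPolynomial (Fin N) K) ⧸
      colS (Ideal.span (Set.range fun j => lin (w j))) (fun j => lin (cu j)) (fun j => lin (cv j))) := by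
  refine pd_Tlem _ _ _ ?_ ?_ ?_
  · rw [lin_span_range w]; exact kos_lin _ _ h
  · let a : Fin s ⊕ Fin k → (MvPolynomial (Fin N) K)[X] :=
      Sum.elim (fun j => Polynomial.C (lin (w j)))
        (fun j => Polynomial.C (lin (cu j)) + Polynomial.C (lin (cv j)) * Polynomial.X)
    have ha : Ideal.map Polynomial.C (Ideal.span (Set.range fun j => lin (w j)) : Ideal (MvPolynomial (Fin N) K)) ⊔
      Ideal.span (Set.range fun j => (Polynomial.C (lin (cu j)) + Polynomial.C (lin (cv j)) * Polynomial.X :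
        (MvPolynomial (Fin N) K)[X])) = Ideal.span (Set.range a) := by
      rw [Set.Sum.elim_range, Ideal.span_union, Ideal.map_span, ← Set.range_comp]; rfl
    refine pd_ideal_congr ha (pd_ringEquiv_span (swapE K N) a ?_)
    let c : Fin s ⊕ Fin k → Fin N → K[X] :=
      Sum.elim (fun j i => (Polynomial.C (w j i) : K[X]))
        (fun j => (fun i => (Polynomial.C (cu j i) : K[X])) + (Polynomial.X : K[X]) • (fun i => (Polynomial.C (cv j i) : K[X])))
    have hac : (fun i => swapE K N (a i)) = fun i => lin (c i) := by
      funext i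
      rcases i with j | j
      · exact swapE_lin _
      · simp only [a, c, Sum.elim_inr]
        rw [map_add, map_mul, swapE_lin, swapE_lin, swapE_X, map_add, map_smul, smul_eq_C_mul,
          mul_comm (C Polynomial.X)]
    rw [hac]
    have := pd_lin' c
    rwa [Fintype.card_sum, Fintype.card_fin, Fintype.card_fin] at this
  · have := pd_lin' (Sum.elim w cv)
    rw [Fintype.card_sum, Fintype.card_fin, Fintype.card_fin] at this
    refine pd_ideal_congr ?_ this
    rw [← Ideal.span_union, ← Set.Sum.elim_range]
    congr 2
    funext i
    rcases i with j | j <;> rfl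

end tapp
end PD

namespace PD
section coker
variable {K : Type u} [Field K] {N : ℕ}

/-- columns -/
noncomputable def th {F : Type*} [AddCommGroup F] [Module K F] (U V : F →ₗ[K] (Fin N → K)) :
    F →ₗ[K] (MvPolynomial (Fin N) K × MvPolynomial (Fin N) K) :=
  (lin ∘ₗ U).prod (lin ∘ₗ V)

theorem th_apply {F : Type*} [AddCommGroup F] [Module K F] (U V : F →ₗ[K] (Fin N → K)) (w : F) :
    th U V w = (lin (U w), lin (V w)) := rfl

/-- column module -/
noncomputable def cm {F : Type*} [AddCommGroup F] [Module K F] (U V : F →ₗ[K] (Fin N → K)) :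
    Submodule (MvPolynomial (Fin N) K) (MvPolynomial (Fin N) K × MvPolynomial (Fin N) K) :=
  Submodule.span _ (Set.range (th U V))

variable {F : Type*} [AddCommGroup F] [Module K F]

theorem cm_span (U V : F →ₗ[K] (Fin N → K)) (s : Set F) (hs : Submodule.span K s = ⊤) :
    cm U V = Submodule.span _ (th U V '' s) := by
  have h1 : Set.range (th U V) = (Submodule.span K (th U V '' s) : Set _) := by
    rw [← Submodule.map_span, hs, Submodule.map_top]; rfl
  rw [cm, h1, Submodule.span_span_of_tower]

theorem tapp [FiniteDimensional K F] {s : ℕ} (w : Fin s → Fin N → K) (U V : F →ₗ[K] (Fin N → K))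
    (h : ∀ d, V d ∈ Submodule.span K (Set.range w) → d = 0) :
    PdLE (MvPolynomial (Fin N) K) (s + Module.finrank K F)
      ((MvPolynomial (Fin N) K × MvPolynomial (Fin N) K) ⧸
        (Submodule.prod (Ideal.span (Set.range fun j => lin (w j)))
          (Ideal.span (Set.range fun j => lin (w j))) ⊔ cm U V)) := by
  let b := Module.finBasis K F
  have := tapp_basis w (fun j => U (b j)) (fun j => V (b j)) (by
    intro d hd
    have h1 : ∑ j, d j • b j = 0 := h _ (by simpa using hd)
    funext j
    exact Fintype.linearIndependent_iff.1 b.linearIndependent d h1 j)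
  rw [colS] at this
  rw [cm_span U V (Set.range b) b.span_eq, ← Set.range_comp]
  exact this

theorem tapp0 [FiniteDimensional K F] (U V : F →ₗ[K] (Fin N → K)) (h : Function.Injective V) :
    PdLE (MvPolynomial (Fin N) K) (Module.finrank K F)
      ((MvPolynomial (Fin N) K × MvPolynomial (Fin N) K) ⧸ cm U V) := by
  have := tapp (s := 0) (fun j => j.elim0) U V (by
    intro d hd
    rw [Set.range_eq_empty, Submodule.span_empty, Submodule.mem_bot] at hd
    exact h (by rw [hd, map_zero]))
  rw [Set.range_eq_empty, Ideal.span_empty, zero_add] at this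
  have hb : Submodule.prod (⊥ : Ideal (MvPolynomial (Fin N) K)) (⊥ : Ideal (MvPolynomial (Fin N) K)) ⊔ cm U V
     = cm U V := by rw [Submodule.prod_bot, bot_sup_eq]
  rwa [hb] at this

theorem pd_row {n : ℕ} (U V : F →ₗ[K] (Fin N → K)) (t : K)
    (h : PdLE (MvPolynomial (Fin N) K) n
      ((MvPolynomial (Fin N) K × MvPolynomial (Fin N) K) ⧸ cm V (U + t • V))) :
    PdLE (MvPolynomial (Fin N) K) n
      ((MvPolynomial (Fin N) K × MvPolynomial (Fin N) K) ⧸ cm U V) := by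
  let R := MvPolynomial (Fin N) K
  let e : (R × R) ≃ₗ[R] (R × R) := LinearEquiv.ofLinearMap
    ((LinearMap.snd R R R).prod (LinearMap.fst R R R + (C t : R) • LinearMap.snd R R R))
    ((LinearMap.snd R R R - (C t : R) • LinearMap.fst R R R).prod (LinearMap.fst R R R))
    (by ext <;> simp) (by ext <;> simp)
  have he : (cm U V).map (e : (R × R) →ₗ[R] (R × R)) = cm V (U + t • V) := by
    rw [cm, cm, Submodule.map_span, ← Set.range_comp]
    congr 2
    funext w
    show (lin (V w), lin (U w) + (C t : R) * lin (V w)) = (lin (V w), lin (U w + t • V w))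
    rw [map_add, map_smul, smul_eq_C_mul]
  exact pd_equiv (Submodule.Quotient.equiv (cm U V) (cm V (U + t • V)) e he) h

theorem tapp_row [FiniteDimensional K F] (U V : F →ₗ[K] (Fin N → K)) (t : K)
    (h : Function.Injective (U + t • V)) :
    PdLE (MvPolynomial (Fin N) K) (Module.finrank K F)
      ((MvPolynomial (Fin N) K × MvPolynomial (Fin N) K) ⧸ cm U V) :=
  pd_row U V t (tapp0 _ _ h)

open TensorProduct in
theorem pd_bc2 {R0 R : Type u} [CommRing R0] [CommRing R] [Algebra R0 R] [Module.Flat R0 R] {n : ℕ}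
    {α : Type*} (a : α → R0 × R0)
    (h : PdLE R0 n ((R0 × R0) ⧸ Submodule.span R0 (Set.range a))) :
    PdLE R n ((R × R) ⧸ Submodule.span R (Set.range fun i => (algebraMap R0 R (a i).1, algebraMap R0 R (a i).2))) := by
  set S0 := Submodule.span R0 (Set.range a)
  set S := Submodule.span R (Set.range fun i => (algebraMap R0 R (a i).1, algebraMap R0 R (a i).2))
  have hb : PdLE R n (R ⊗[R0] ((R0 × R0) ⧸ S0)) := pd_baseChange h
  let l0 : (R0 × R0) →ₗ[R0] (R × R) :=
    ((Algebra.linearMap R0 R) ∘ₗ LinearMap.fst R0 R0 R0).prod ((Algebra.linearMap R0 R) ∘ₗ LinearMap.snd R0 R0 R0)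
  let l : ((R0 × R0) ⧸ S0) →ₗ[R0] ((R × R) ⧸ S) :=
    S0.liftQ ((S.mkQ.restrictScalars R0) ∘ₗ l0) (by
      refine Submodule.span_le.2 ?_
      rintro _ ⟨i, rfl⟩
      show S.mkQ _ = 0
      rw [Submodule.mkQ_apply, Submodule.Quotient.mk_eq_zero]
      exact Submodule.subset_span ⟨i, rfl⟩)
  let r : R ⊗[R0] ((R0 × R0) ⧸ S0) →ₗ[R] ((R × R) ⧸ S) := l.liftBaseChange R
  let e1 : R ⊗[R0] ((R0 × R0) ⧸ S0) := 1 ⊗ₜ S0.mkQ (1, 0)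
  let e2 : R ⊗[R0] ((R0 × R0) ⧸ S0) := 1 ⊗ₜ S0.mkQ (0, 1)
  let i0 : (R × R) →ₗ[R] R ⊗[R0] ((R0 × R0) ⧸ S0) :=
    (LinearMap.toSpanSingleton R _ e1).coprod (LinearMap.toSpanSingleton R _ e2)
  let i : ((R × R) ⧸ S) →ₗ[R] R ⊗[R0] ((R0 × R0) ⧸ S0) := S.liftQ i0 (by
    refine Submodule.span_le.2 ?_
    rintro _ ⟨i, rfl⟩
    show algebraMap R0 R (a i).1 • e1 + algebraMap R0 R (a i).2 • e2 = 0
    rw [algebraMap_smul, algebraMap_smul, ← TensorProduct.tmul_smul, ← TensorProduct.tmul_smul,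
      ← TensorProduct.tmul_add, ← map_smul, ← map_smul, ← map_add]
    have : (a i).1 • ((1, 0) : R0 × R0) + (a i).2 • ((0, 1) : R0 × R0) = a i := by ext <;> simp
    rw [this]
    have : S0.mkQ (a i) = 0 := by
      rw [Submodule.mkQ_apply, Submodule.Quotient.mk_eq_zero]
      exact Submodule.subset_span ⟨i, rfl⟩
    rw [this, TensorProduct.tmul_zero])
  refine pd_retract i r ?_ hb
  intro x
  obtain ⟨⟨p, q⟩, rfl⟩ := Submodule.mkQ_surjective _ x
  show r (p • e1 + q • e2) = _
  rw [map_add, map_smul, map_smul]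
  have h1 : r e1 = S.mkQ (1, 0) := by
    show (l.liftBaseChange R) (1 ⊗ₜ S0.mkQ (1, 0)) = _
    rw [LinearMap.liftBaseChange_tmul, one_smul]
    show S.mkQ (algebraMap R0 R 1, algebraMap R0 R 0) = _
    rw [map_one, map_zero]
  have h2 : r e2 = S.mkQ (0, 1) := by
    show (l.liftBaseChange R) (1 ⊗ₜ S0.mkQ (0, 1)) = _
    rw [LinearMap.liftBaseChange_tmul, one_smul]
    show S.mkQ (algebraMap R0 R 0, algebraMap R0 R 1) = _
    rw [map_one, map_zero]
  rw [h1, h2, ← map_smul, ← map_smul, ← map_add]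
  congr 1
  ext <;> simp

end coker
end PD

namespace PD
section coker2
variable {K : Type u} [Field K] {N : ℕ}

theorem exists_flat (W : Submodule K (Fin N → K)) :
    ∃ φ : MvPolynomial (Fin (Module.finrank K W)) K →ₐ[K] MvPolynomial (Fin N) K,
      φ.toRingHom.Flat ∧ ∀ x ∈ W, ∃ c, φ (lin c) = lin x := by
  obtain ⟨W', hW⟩ := W.exists_isCompl
  let bW := Module.finBasis K W
  let bW' := Module.finBasis K W'
  let m := Module.finrank K W
  let r := Module.finrank K W'
  let T : (Fin r ⊕ Fin m → K) ≃ₗ[K] (Fin N → K) :=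
    ((LinearEquiv.sumArrowLequivProdArrow (Fin r) (Fin m) K K).trans
      (bW'.equivFun.symm.prodCongr bW.equivFun.symm)).trans (W'.prodEquivOfIsCompl W hW.symm)
  have hT : ∀ i, T (Pi.single (Sum.inr i) 1) = bW i := by
    intro i
    have h1 : LinearEquiv.sumArrowLequivProdArrow (Fin r) (Fin m) K K (Pi.single (Sum.inr i) 1) =
        (0, Pi.single i 1) := by
      ext j
      · simp [LinearEquiv.sumArrowLequivProdArrow, Equiv.sumArrowEquivProdArrow, Pi.single_apply]
      · simp [LinearEquiv.sumArrowLequivProdArrow, Equiv.sumArrowEquivProdArrow, Pi.single_apply]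
    simp only [T, LinearEquiv.trans_apply, h1]
    rw [LinearEquiv.prodCongr_apply, Submodule.coe_prodEquivOfIsCompl']
    simp [Module.Basis.equivFun_symm_apply, Pi.single_apply]
  let φ : MvPolynomial (Fin m) K →ₐ[K] MvPolynomial (Fin N) K :=
    ((lequiv T).toAlgHom.comp (sumAlgEquiv K (Fin r) (Fin m)).symm.toAlgHom).comp
      (IsScalarTower.toAlgHom K (MvPolynomial (Fin m) K) (MvPolynomial (Fin r) (MvPolynomial (Fin m) K)))
  refine ⟨φ, ?_, ?_⟩
  · have h1 : (algebraMap (MvPolynomial (Fin m) K) (MvPolynomial (Fin r) (MvPolynomial (Fin m) K))).Flat := by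
      rw [RingHom.flat_algebraMap_iff]; infer_instance
    have h2 : ((lequiv T).toAlgHom.comp (sumAlgEquiv K (Fin r) (Fin m)).symm.toAlgHom).toRingHom.Flat := by
      refine RingHom.Flat.of_bijective ?_
      exact (lequiv T).bijective.comp (sumAlgEquiv K (Fin r) (Fin m)).symm.bijective
    exact h1.comp h2
  · intro x hx
    refine ⟨bW.repr ⟨x, hx⟩, ?_⟩
    have hX : ∀ i, φ (X i) = lin (bW i : Fin N → K) := by
      intro i
      show lequiv T ((sumAlgEquiv K (Fin r) (Fin m)).symm (C (X i))) = _
      rw [sumAlgEquiv_symm_C_X, ← lin_single, lequiv_lin, hT]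
    rw [lin_apply, map_sum]
    simp only [map_smul, hX]
    simp only [← map_smul]; rw [← map_sum]
    congr 1
    have := bW.sum_repr ⟨x, hx⟩
    have := congrArg Subtype.val this
    rw [Submodule.coe_sum] at this
    exact this

variable {F : Type*} [AddCommGroup F] [Module K F]

theorem pd_small (U V : F →ₗ[K] (Fin N → K)) :
    PdLE (MvPolynomial (Fin N) K) (Module.finrank K (LinearMap.range (U.coprod V)))
      ((MvPolynomial (Fin N) K × MvPolynomial (Fin N) K) ⧸ cm U V) := by
  obtain ⟨φ, hφ, hc⟩ := exists_flat (LinearMap.range (U.coprod V))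
  have hU : ∀ w, ∃ c, φ (lin c) = lin (U w) := fun w => hc _ ⟨(w, 0), by simp⟩
  have hV : ∀ w, ∃ c, φ (lin c) = lin (V w) := fun w => hc _ ⟨(0, w), by simp⟩
  choose cu hcu using hU
  choose cv hcv using hV
  let _ : Algebra (MvPolynomial (Fin (Module.finrank K (LinearMap.range (U.coprod V)))) K)
    (MvPolynomial (Fin N) K) := φ.toRingHom.toAlgebra
  have : Module.Flat (MvPolynomial (Fin (Module.finrank K (LinearMap.range (U.coprod V)))) K)
    (MvPolynomial (Fin N) K) := hφ
  have h := pd_bc2 (R := MvPolynomial (Fin N) K) (fun w => (lin (cu w), lin (cv w))) (pd_hilbert K _ _)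
  have he : (fun i => (φ (lin (cu i)), φ (lin (cv i)))) = th U V := by
    funext w
    rw [hcu, hcv, th_apply]
  have he' : cm U V = Submodule.span _ (Set.range (fun i => (φ (lin (cu i)), φ (lin (cv i))))) := by
    rw [he]; rfl
  rw [he']
  exact h

theorem cm_compl (U V : F →ₗ[K] (Fin N → K)) (F1 F2 : Submodule K F) (h : IsCompl F1 F2) :
    cm U V = cm (U ∘ₗ F1.subtype) (V ∘ₗ F1.subtype) ⊔ cm (U ∘ₗ F2.subtype) (V ∘ₗ F2.subtype) := by
  apply le_antisymm
  · refine Submodule.span_le.2 ?_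
    rintro _ ⟨w, rfl⟩
    have hw : w ∈ F1 ⊔ F2 := by rw [h.sup_eq_top]; trivial
    obtain ⟨y, hy, z, hz, rfl⟩ := Submodule.mem_sup.1 hw
    rw [map_add]
    exact add_mem (Submodule.mem_sup_left (Submodule.subset_span ⟨⟨y, hy⟩, rfl⟩))
      (Submodule.mem_sup_right (Submodule.subset_span ⟨⟨z, hz⟩, rfl⟩))
  · refine sup_le (Submodule.span_mono ?_) (Submodule.span_mono ?_)
    · rintro _ ⟨w, rfl⟩; exact ⟨w.1, rfl⟩
    · rintro _ ⟨w, rfl⟩; exact ⟨w.1, rfl⟩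

theorem exists_ker {U : F →ₗ[K] (Fin N → K)} (h : ¬ Function.Injective U) : ∃ w, w ≠ 0 ∧ U w = 0 := by
  rw [← LinearMap.ker_eq_bot] at h
  obtain ⟨w, h1, h2⟩ := (Submodule.ne_bot_iff _).1 h
  exact ⟨w, h2, h1⟩

theorem pd_coker [FiniteDimensional K F] (U V : F →ₗ[K] (Fin N → K)) (hF : 4 ≤ Module.finrank K F)
    (t : K) (ht0 : t ≠ 0) (ht1 : t ≠ 1) :
    PdLE (MvPolynomial (Fin N) K) (2 * Module.finrank K F - 4)
      ((MvPolynomial (Fin N) K × MvPolynomial (Fin N) K) ⧸ cm U V) := by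
  by_cases hm : Module.finrank K (LinearMap.range (U.coprod V)) ≤ 2 * Module.finrank K F - 4
  · exact pd_mono hm (pd_small U V)
  have hker : Module.finrank K (LinearMap.ker (U.coprod V)) ≤ 3 := by
    have := LinearMap.finrank_range_add_finrank_ker (U.coprod V)
    rw [Module.finrank_prod] at this
    omega
  have HA : ∀ a : Fin 4 → F × F, (∀ i, U (a i).1 + V (a i).2 = 0) →
      ∃ g : Fin 4 → K, ∑ i, g i • a i = 0 ∧ ∃ i, g i ≠ 0 := by
    intro a ha
    rw [← Fintype.not_linearIndependent_iff]
    intro hli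
    let a' : Fin 4 → LinearMap.ker (U.coprod V) := fun i => ⟨a i, ha i⟩
    have hli' : LinearIndependent K a' := LinearIndependent.of_comp (LinearMap.ker (U.coprod V)).subtype hli
    have := hli'.fintype_card_le_finrank
    rw [Fintype.card_fin] at this
    omega
  have HA' : ∀ a1 b1 a2 b2 a3 b3 a4 b4 : F, U a1 + V b1 = 0 → U a2 + V b2 = 0 → U a3 + V b3 = 0 →
      U a4 + V b4 = 0 → ∃ p q r s : K, p • a1 + q • a2 + r • a3 + s • a4 = 0 ∧
        p • b1 + q • b2 + r • b3 + s • b4 = 0 ∧ ¬ (p = 0 ∧ q = 0 ∧ r = 0 ∧ s = 0) := by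
    intro a1 b1 a2 b2 a3 b3 a4 b4 h1 h2 h3 h4
    obtain ⟨g, hg, i, hi⟩ := HA ![(a1, b1), (a2, b2), (a3, b3), (a4, b4)] (by
      intro i; fin_cases i <;> assumption)
    rw [Fin.sum_univ_four] at hg
    refine ⟨g 0, g 1, g 2, g 3, congrArg Prod.fst hg, congrArg Prod.snd hg, ?_⟩
    rintro ⟨e0, e1, e2, e3⟩
    apply hi
    fin_cases i <;> assumption
  by_cases hVi : Function.Injective V
  · exact pd_mono (by omega) (tapp0 U V hVi)
  by_cases hUi : Function.Injective (U + (0:K) • V)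
  · exact pd_mono (by omega) (tapp_row U V 0 hUi)
  by_cases hU1 : Function.Injective (U + (1:K) • V)
  · exact pd_mono (by omega) (tapp_row U V 1 hU1)
  by_cases hUt : Function.Injective (U + t • V)
  · exact pd_mono (by omega) (tapp_row U V t hUt)
  obtain ⟨w2, hw2, hVw2⟩ := exists_ker hVi
  obtain ⟨w1, hw1, hUw1⟩ := exists_ker hUi
  obtain ⟨w3, hw3, hUw3⟩ := exists_ker hU1
  obtain ⟨w4, hw4, hUw4⟩ := exists_ker hUt
  simp only [LinearMap.add_apply, LinearMap.smul_apply, zero_smul, one_smul, add_zero] at hUw1 hUw3 hUw4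
  by_cases hcom : ∃ w, w ≠ 0 ∧ U w = 0 ∧ V w = 0
  · obtain ⟨w, hw, hUw, hVw⟩ := hcom
    obtain ⟨F', hF'⟩ := (Submodule.span K {w}).exists_isCompl
    have hd : ∀ x ∈ F', ∀ c : K, x = c • w → x = 0 := by
      intro x hx c hc
      have : x ∈ Submodule.span K {w} ⊓ F' := ⟨Submodule.mem_span_singleton.2 ⟨c, hc.symm⟩, hx⟩
      rwa [hF'.inf_eq_bot] at this
    have hcm : cm U V = cm (U ∘ₗ F'.subtype) (V ∘ₗ F'.subtype) := by
      rw [cm_compl U V _ F' hF', sup_eq_right]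
      refine Submodule.span_le.2 ?_
      rintro _ ⟨⟨x, hx⟩, rfl⟩
      obtain ⟨c, rfl⟩ := Submodule.mem_span_singleton.1 hx
      have : th (U ∘ₗ (Submodule.span K {w}).subtype) (V ∘ₗ (Submodule.span K {w}).subtype) ⟨c • w, hx⟩ = 0 := by
        rw [th_apply]
        simp [hUw, hVw]
      rw [this]; exact zero_mem _
    rw [hcm]
    have hfr : Module.finrank K F' ≤ Module.finrank K F := Submodule.finrank_le _
    by_cases h1 : Function.Injective (V ∘ₗ F'.subtype)
    · exact pd_mono (by omega) (tapp0 _ _ h1)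
    by_cases h2 : Function.Injective (U ∘ₗ F'.subtype + (0:K) • (V ∘ₗ F'.subtype))
    · exact pd_mono (by omega) (tapp_row _ _ 0 h2)
    exfalso
    obtain ⟨⟨y, hy⟩, hy0, hVy⟩ := exists_ker h1
    obtain ⟨⟨x, hx⟩, hx0, hUx⟩ := exists_ker h2
    simp only [LinearMap.add_apply, LinearMap.smul_apply, zero_smul, add_zero, LinearMap.comp_apply,
      Submodule.subtype_apply] at hVy hUx
    have hx0 : x ≠ 0 := fun h => hx0 (by simpa using h)
    have hy0 : y ≠ 0 := fun h => hy0 (by simpa using h)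
    obtain ⟨p, q, r, s, e1, e2, hne⟩ := HA' w 0 0 w x 0 0 y (by simp [hUw]) (by simp [hVw])
      (by simp [hUx]) (by simp [hVy])
    simp only [smul_zero, add_zero, zero_add] at e1 e2
    have hr : r = 0 := by
      by_contra hr
      apply hx0
      refine hd x hx (-(r⁻¹ * p)) ?_
      have : r⁻¹ • (p • w + r • x) = 0 := by rw [e1, smul_zero]
      rw [smul_add, smul_smul, smul_smul, inv_mul_cancel₀ hr, one_smul] at this
      rw [neg_smul]; exact eq_neg_of_add_eq_zero_right this
    have hs : s = 0 := by
      by_contra hr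
      apply hy0
      refine hd y hy (-(s⁻¹ * q)) ?_
      have : s⁻¹ • (q • w + s • y) = 0 := by rw [e2, smul_zero]
      rw [smul_add, smul_smul, smul_smul, inv_mul_cancel₀ hr, one_smul] at this
      rw [neg_smul]; exact eq_neg_of_add_eq_zero_right this
    rw [hr, zero_smul, add_zero, smul_eq_zero] at e1
    rw [hs, zero_smul, add_zero, smul_eq_zero] at e2
    exact hne ⟨e1.resolve_right hw, e2.resolve_right hw, hr, hs⟩
  · push Not at hcom
    have hVw1 : V w1 ≠ 0 := hcom w1 hw1 hUw1
    have hUw2 : U w2 ≠ 0 := fun h => hcom w2 hw2 h hVw2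
    obtain ⟨p, q, r, s, e1, e2, hne⟩ := HA' w1 0 0 w2 w3 w3 w4 (t • w4) (by simp [hUw1]) (by simp [hVw2])
      hUw3 (by rw [map_smul]; exact hUw4)
    simp only [smul_zero, add_zero, zero_add] at e1 e2
    -- apply maps
    have hVw4 : V w4 ≠ 0 := by
      intro h
      rw [h, smul_zero, add_zero] at hUw4
      exact hcom w4 hw4 hUw4 h
    have hVw3 : V w3 ≠ 0 := by
      intro h
      rw [h, add_zero] at hUw3
      exact hcom w3 hw3 hUw3 h
    have hU3 : U w3 = - V w3 := eq_neg_of_add_eq_zero_left hUw3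
    have hU4 : U w4 = - (t • V w4) := eq_neg_of_add_eq_zero_left hUw4
    have e3 : (t * p) • w1 - q • w2 + ((t - 1) * r) • w3 = 0 := by
      have : t • (p • w1 + r • w3 + s • w4) - (q • w2 + r • w3 + s • t • w4) = 0 := by
        rw [e1, e2]; simp
      rw [← this]; module
    have e1U := congrArg U e1
    have e2V := congrArg V e2
    simp only [map_add, map_smul, hUw1, hVw2, smul_zero, zero_add, map_zero, hU3, hU4] at e1U e2V
    -- e1U : r • -V w3 + s • -(t • V w4) = 0
    have hrne : r ≠ 0 := by
      intro hr
      rw [hr, zero_smul, zero_add, smul_neg, neg_eq_zero, smul_eq_zero, smul_eq_zero] at e1U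
      have hs : s = 0 := e1U.resolve_right (fun h => h.elim ht0 hVw4)
      rw [hr, hs] at e1 e2
      simp only [zero_smul, add_zero, smul_eq_zero] at e1 e2
      exact hne ⟨e1.resolve_right hw1, e2.resolve_right hw2, hr, hs⟩
    set a := -(t * p) / ((t - 1) * r) with ha
    set b := q / ((t - 1) * r) with hb
    have htr : (t - 1) * r ≠ 0 := mul_ne_zero (sub_ne_zero.2 ht1) hrne
    have hw3eq : w3 = a • w1 + b • w2 := by
      have h5 : ((t - 1) * r) • w3 = ((t - 1) * r) • (a • w1 + b • w2) := by
        rw [smul_add, smul_smul, smul_smul, ha, hb, mul_div_cancel₀ _ htr, mul_div_cancel₀ _ htr]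
        rw [neg_smul]
        have : ((t - 1) * r) • w3 = - ((t * p) • w1 - q • w2) := eq_neg_of_add_eq_zero_right e3
        rw [this]; module
      exact smul_right_injective F htr h5
    have hrel : b • U w2 + a • V w1 = 0 := by
      have := hUw3
      rw [hw3eq] at this
      simpa [hUw1, hVw2] using this
    have hane : a ≠ 0 := by
      intro h
      rw [h, zero_smul, add_zero, smul_eq_zero] at hrel
      rw [h, hrel.resolve_right hUw2] at hw3eq
      simp at hw3eq; exact hw3 hw3eq
    have hbne : b ≠ 0 := by
      intro h
      rw [h, zero_smul, zero_add, smul_eq_zero] at hrel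
      exact hrel.elim hane hVw1
    have hind : ∀ x y : K, x • w1 + y • w2 = 0 → x = 0 ∧ y = 0 := by
      intro x y hxy
      have h1 := congrArg U hxy
      have h2 := congrArg V hxy
      simp only [map_add, map_smul, hUw1, hVw2, smul_zero, zero_add, add_zero, map_zero, smul_eq_zero] at h1 h2
      exact ⟨h2.resolve_right hVw1, h1.resolve_right hUw2⟩
    obtain ⟨F', hF'⟩ := (Submodule.span K {w1, w2}).exists_isCompl
    have hd : ∀ x ∈ F', ∀ c d : K, x = c • w1 + d • w2 → x = 0 := by
      intro x hx c d hc
      have : x ∈ Submodule.span K {w1, w2} ⊓ F' := ⟨Submodule.mem_span_pair.2 ⟨c, d, hc.symm⟩, hx⟩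
      rwa [hF'.inf_eq_bot] at this
    have hfr : Module.finrank K F' + 2 = Module.finrank K F := by
      have h1 := Submodule.finrank_add_eq_of_isCompl hF'
      have h2 : Module.finrank K (Submodule.span K {w1, w2}) = 2 := by
        have hli : LinearIndependent K ![w1, w2] := LinearIndependent.pair_iff.2 hind
        have := finrank_span_eq_card hli
        rw [Fintype.card_fin, Matrix.range_cons, Matrix.range_cons, Matrix.range_empty, Set.union_empty,
          Set.singleton_union] at this
        exact this
      omega
    have hT := tapp (fun _ : Fin 1 => V w1) (U ∘ₗ F'.subtype) (V ∘ₗ F'.subtype) (by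
      rintro ⟨d, hdF⟩ hdV
      rw [Set.range_const, Submodule.mem_span_singleton] at hdV
      obtain ⟨c, hc⟩ := hdV
      have hc : c • V w1 = V d := hc
      rw [Submodule.mk_eq_zero]
      by_contra hd0
      obtain ⟨p, q, r, s, e1, e2, hne⟩ := HA' w1 0 0 w2 (b • w2) (a • w1) 0 (d - c • w1)
        (by simp [hUw1]) (by simp [hVw2]) (by simpa using hrel) (by simp [hc])
      simp only [smul_zero, add_zero, zero_add, smul_smul] at e1 e2
      obtain ⟨hp, hrb⟩ := hind _ _ e1
      have hr : r = 0 := (mul_eq_zero.1 hrb).resolve_right hbne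
      rw [hr, zero_mul, zero_smul, add_zero] at e2
      have hs : s = 0 := by
        by_contra hs
        apply hd0
        refine hd d hdF c (-(s⁻¹ * q)) ?_
        have h6 : s⁻¹ • (q • w2 + s • (d - c • w1)) = 0 := by rw [e2, smul_zero]
        rw [smul_add, smul_smul, smul_smul, inv_mul_cancel₀ hs, one_smul] at h6
        rw [← sub_eq_zero, ← h6]; module
      rw [hs, zero_smul, add_zero, smul_eq_zero] at e2
      exact hne ⟨hp, e2.resolve_right hw2, hr, hs⟩)
    refine pd_mono (show 1 + Module.finrank K F' ≤ _ by omega) ?_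
    rw [Set.range_const] at hT
    have hcm : cm U V = Submodule.prod (Ideal.span {lin (V w1)}) (Ideal.span {lin (V w1)}) ⊔
        cm (U ∘ₗ F'.subtype) (V ∘ₗ F'.subtype) := by
      rw [cm_compl U V _ F' hF']
      congr 1
      have hUw2' : U w2 = (-(a / b)) • V w1 := by
        have h7 : b • U w2 = b • ((-(a / b)) • V w1) := by
          rw [smul_smul, mul_neg, mul_div_cancel₀ _ hbne, neg_smul]
          exact eq_neg_of_add_eq_zero_left hrel
        exact smul_right_injective _ hbne h7
      apply le_antisymm
      · refine Submodule.span_le.2 ?_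
        rintro _ ⟨⟨x, hx⟩, rfl⟩
        obtain ⟨c, d, rfl⟩ := Submodule.mem_span_pair.1 hx
        rw [th_apply]
        refine ⟨?_, ?_⟩
        · show lin (U (c • w1 + d • w2)) ∈ Ideal.span {lin (V w1)}
          rw [map_add, map_smul, map_smul, hUw1, hUw2', smul_zero, zero_add, map_smul, map_smul,
            smul_eq_C_mul, smul_eq_C_mul]
          exact Ideal.mul_mem_left _ _ (Ideal.mul_mem_left _ _ (Ideal.mem_span_singleton_self _))
        · show lin (V (c • w1 + d • w2)) ∈ Ideal.span {lin (V w1)}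
          rw [map_add, map_smul, map_smul, hVw2, smul_zero, add_zero, map_smul, smul_eq_C_mul]
          exact Ideal.mul_mem_left _ _ (Ideal.mem_span_singleton_self _)
      · have hm1 : ((0 : MvPolynomial (Fin N) K), lin (V w1)) ∈
            cm (U ∘ₗ (Submodule.span K {w1, w2}).subtype) (V ∘ₗ (Submodule.span K {w1, w2}).subtype) := by
          refine Submodule.subset_span ⟨⟨w1, Submodule.subset_span (by simp)⟩, ?_⟩
          rw [th_apply]
          simp [hUw1]
        have hm2 : (lin (V w1), (0 : MvPolynomial (Fin N) K)) ∈
            cm (U ∘ₗ (Submodule.span K {w1, w2}).subtype) (V ∘ₗ (Submodule.span K {w1, w2}).subtype) := by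
          refine Submodule.subset_span ⟨⟨(-(b / a)) • w2, Submodule.smul_mem _ _ (Submodule.subset_span (by simp))⟩, ?_⟩
          rw [th_apply]
          have h8 : -(b / a) * -(a / b) = 1 := by field_simp
          simp only [LinearMap.comp_apply, Submodule.subtype_apply, map_smul, hVw2, hUw2', smul_zero, map_zero]
          rw [smul_smul, h8, one_smul]
        rintro ⟨y, z⟩ ⟨hy, hz⟩
        obtain ⟨y', rfl⟩ := Ideal.mem_span_singleton'.1 hy
        obtain ⟨z', rfl⟩ := Ideal.mem_span_singleton'.1 hz
        have := add_mem (Submodule.smul_mem _ y' hm2) (Submodule.smul_mem _ z' hm1)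
        simpa using this
    rw [hcm]
    exact hT

end coker2
end PD

namespace PD
section A1

theorem pd_minors {R : Type u} [CommRing R] [IsDomain R] {x y : R} (hx : Prime x) (hy : ¬ x ∣ y)
    {n k : ℕ} (u v : Fin n → R) (D : Submodule R (R × R))
    (hD : D = Submodule.span R {(x, y)} ⊔ Submodule.span R (Set.range fun j => (u j, v j)))
    (I : Ideal R) (hI : I = Ideal.span (Set.range fun j => v j * x - u j * y))
    (h1 : PdLE R k ((R × R) ⧸ D)) (h2 : PdLE R k (R ⧸ (Ideal.span {x} ⊔ Ideal.span {y}))) :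
    PdLE R k (R ⧸ I) := by
  let φ : (R × R) →ₗ[R] R :=
    x • LinearMap.snd R R R - y • LinearMap.fst R R R
  have hφ : ∀ p q, φ (p, q) = q * x - p * y := by
    intro p q; simp [φ, mul_comm]
  have hmapD2 : (Submodule.span R (Set.range fun j => (u j, v j))).map φ = I := by
    rw [Submodule.map_span, ← Set.range_comp, hI]
    congr 2
    funext j; exact hφ _ _
  have hker : ∀ w, φ w = 0 → w ∈ Submodule.span R {(x, y)} := by
    rintro ⟨p, q⟩ h
    rw [hφ, sub_eq_zero] at h
    have : x ∣ p := by
      rcases hx.dvd_or_dvd (⟨q, by rw [← h, mul_comm]⟩ : x ∣ p * y) with h3 | h3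
      · exact h3
      · exact absurd h3 hy
    obtain ⟨a, rfl⟩ := this
    have : q = a * y := by
      apply mul_right_cancel₀ hx.ne_zero; rw [h]; ring
    rw [Submodule.mem_span_singleton]
    exact ⟨a, by rw [this]; simp [mul_comm]⟩
  have hxy : φ (x, y) = 0 := by rw [hφ]; ring
  have hcomap : D = Submodule.comap φ I := by
    apply le_antisymm
    · rw [hD]
      refine sup_le ?_ ?_
      · rw [Submodule.span_singleton_le_iff_mem, Submodule.mem_comap, hxy]; exact zero_mem _
      · rw [← Submodule.map_le_iff_le_comap, hmapD2]
    · intro w hw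
      rw [Submodule.mem_comap, ← hmapD2] at hw
      obtain ⟨z, hz, hzw⟩ := hw
      have h3 := hker (w - z) (by rw [map_sub, hzw, sub_self])
      rw [hD, ← sub_add_cancel w z]
      exact add_mem (Submodule.mem_sup_left h3) (Submodule.mem_sup_right hz)
  have hIJ : I ≤ Ideal.span {x} ⊔ Ideal.span {y} := by
    rw [hI, Ideal.span_le]
    rintro _ ⟨j, rfl⟩
    exact sub_mem (Ideal.mem_sup_left (Ideal.mul_mem_left _ _ (Ideal.mem_span_singleton_self _)))
      (Ideal.mem_sup_right (Ideal.mul_mem_left _ _ (Ideal.mem_span_singleton_self _)))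
  refine pd_X2 (Submodule.mapQ D I φ hcomap.le) (Submodule.mapQ I (Ideal.span {x} ⊔ Ideal.span {y}) LinearMap.id hIJ) ?_ ?_ ?_ h1 h2
  · rw [← LinearMap.ker_eq_bot, Submodule.ker_mapQ, ← hcomap, Submodule.mkQ_map_self]
  · intro z
    obtain ⟨z, rfl⟩ := Submodule.mkQ_surjective _ z
    exact ⟨Submodule.mkQ _ z, rfl⟩
  · intro z
    obtain ⟨z, rfl⟩ := Submodule.mkQ_surjective _ z
    simp only [Submodule.mkQ_apply, Submodule.mapQ_apply, LinearMap.id_apply]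
    rw [Submodule.Quotient.mk_eq_zero]
    constructor
    · intro h
      obtain ⟨a, ha, b, hb, rfl⟩ := Submodule.mem_sup.1 h
      obtain ⟨a, rfl⟩ := Ideal.mem_span_singleton'.1 ha
      obtain ⟨b, rfl⟩ := Ideal.mem_span_singleton'.1 hb
      refine ⟨Submodule.Quotient.mk (-b, a), ?_⟩
      rw [Submodule.mapQ_apply, hφ]
      congr 1; ring
    · rintro ⟨w, hw⟩
      obtain ⟨⟨p, q⟩, rfl⟩ := Submodule.mkQ_surjective _ w
      rw [Submodule.mkQ_apply, Submodule.mapQ_apply, Submodule.Quotient.eq, hφ] at hw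
      have h3 := sub_mem (Ideal.mem_sup_left (T := Ideal.span {y}) (Ideal.mul_mem_left _ q (Ideal.mem_span_singleton_self x)))
        (Ideal.mem_sup_right (Ideal.mul_mem_left _ p (Ideal.mem_span_singleton_self y)))
      have := sub_mem h3 (hIJ hw)
      simpa using this

variable {K : Type u} [Field K]

theorem hcomp_mul {ι : Type*} (a : MvPolynomial ι K) {b : MvPolynomial ι K} {d e : ℕ} (hb : b.IsHomogeneous e) :
    homogeneousComponent (d + e) (a * b) = homogeneousComponent d a * b := by
  induction a using MvPolynomial.induction_on' with
  | monomial m c =>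
    have h1 : (monomial m c : MvPolynomial ι K) ∈ homogeneousSubmodule ι K m.degree := isHomogeneous_monomial c rfl
    have h2 : (monomial m c * b : MvPolynomial ι K) ∈ homogeneousSubmodule ι K (m.degree + e) := IsHomogeneous.mul h1 hb
    rw [homogeneousComponent_of_mem h1, homogeneousComponent_of_mem h2]
    by_cases h : d = m.degree
    · simp [h]
    · simp [h]
  | add p q hp hq => rw [add_mul, map_add, hp, hq, map_add, add_mul]

theorem homog_comb {ι : Type*} {p x y : MvPolynomial ι K} {d e : ℕ} (hp : p.IsHomogeneous (d + e))
    (hx : x.IsHomogeneous e) (hy : y.IsHomogeneous e) (h : p ∈ Ideal.span {x} ⊔ Ideal.span {y}) :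
    ∃ a b, a.IsHomogeneous d ∧ b.IsHomogeneous d ∧ p = a * x + b * y := by
  obtain ⟨a, ha, b, hb, rfl⟩ := Submodule.mem_sup.1 h
  obtain ⟨a, rfl⟩ := Ideal.mem_span_singleton'.1 ha
  obtain ⟨b, rfl⟩ := Ideal.mem_span_singleton'.1 hb
  refine ⟨homogeneousComponent d a, homogeneousComponent d b, homogeneousComponent_isHomogeneous _ _,
    homogeneousComponent_isHomogeneous _ _, ?_⟩
  rw [← hcomp_mul a hx, ← hcomp_mul b hy, ← map_add, homogeneousComponent_of_mem hp]
  simp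

variable {N : ℕ}

theorem caseA1 {n : ℕ} (g : Fin n → MvPolynomial (Fin N) K) (hn : 3 ≤ n)
    (hg : ∀ i, (g i).IsHomogeneous 2) (P : Ideal (MvPolynomial (Fin N) K))
    (hgP : ∀ i, g i ∈ P)
    (H1 : ∀ Q1 Q2 : Ideal (MvPolynomial (Fin N) K), Q1.IsPrime → Q2.IsPrime → Q1 ≠ ⊥ → Q1 < Q2 →
      Q2 ≤ P → Q2 = P)
    (x y : Fin N → K) (hx0 : x ≠ 0) (hxP : lin x ∈ P) (hyP : lin y ∈ P)
    (hy : y ∉ Submodule.span K {x}) (t : K) (ht0 : t ≠ 0) (ht1 : t ≠ 1) :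
    PdLE (MvPolynomial (Fin N) K) (2 * n - 2) (MvPolynomial (Fin N) K ⧸ Ideal.span (Set.range g)) := by
  have hxp := lin_prime hx0
  have hydvd : ¬ lin x ∣ lin y := by
    rw [← Ideal.mem_span_singleton, ← lin_span_singleton, lin_mem_span_iff]; exact hy
  have hsup : Ideal.span {lin x} ⊔ Ideal.span {lin y} =
      Ideal.span (lin '' ((Submodule.span K {x} ⊔ Submodule.span K {y} : Submodule K (Fin N → K)) : Set (Fin N → K))) := by
    rw [← lin_span_sup, lin_span_singleton, lin_span_singleton]
  have hPeq : Ideal.span {lin x} ⊔ Ideal.span {lin y} = P := by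
    refine H1 (Ideal.span {lin x}) _ ((Ideal.span_singleton_prime hxp.ne_zero).2 hxp) ?_ ?_ ?_ ?_
    · rw [hsup]; exact lin_span_prime _
    · rw [Ne, Ideal.span_singleton_eq_bot]; exact hxp.ne_zero
    · rw [lt_iff_le_not_ge]
      refine ⟨le_sup_left, fun h => hydvd (Ideal.mem_span_singleton.1 (h (Ideal.mem_sup_right (Ideal.mem_span_singleton_self _))))⟩
    · rw [sup_le_iff, Ideal.span_singleton_le_iff_mem, Ideal.span_singleton_le_iff_mem]; exact ⟨hxP, hyP⟩
  have hdec : ∀ j, ∃ v u : Fin N → K, g j = lin v * lin x - lin u * lin y := by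
    intro j
    obtain ⟨a, b, ha, hb, hab⟩ := homog_comb (d := 1) (e := 1) (hg j) (lin_homog x) (lin_homog y) (by rw [hPeq]; exact hgP j)
    obtain ⟨a, rfl⟩ := exists_lin ha
    obtain ⟨b, rfl⟩ := exists_lin hb
    exact ⟨a, -b, by rw [hab, map_neg]; ring⟩
  choose v u huv using hdec
  let U := Fintype.linearCombination K (Fin.cons x u : Fin (n+1) → Fin N → K)
  let V := Fintype.linearCombination K (Fin.cons y v : Fin (n+1) → Fin N → K)
  have hpd := pd_coker U V (by simp; omega) t ht0 ht1
  have hfr : 2 * Module.finrank K (Fin (n+1) → K) - 4 = 2 * n - 2 := by simp; omega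
  rw [hfr] at hpd
  refine pd_minors hxp hydvd (fun j => lin (u j)) (fun j => lin (v j)) (cm U V) ?_ _ ?_ hpd
    (pd_mono (by omega) (pd_regular2 hxp _))
  · rw [cm_span U V _ (Pi.basisFun K (Fin (n+1))).span_eq, ← Submodule.span_union, ← Set.range_comp]
    have hb : (th U V ∘ Pi.basisFun K (Fin (n+1))) = Fin.cons (lin x, lin y) (fun j => (lin (u j), lin (v j))) := by
      funext i
      rw [Function.comp_apply, Pi.basisFun_apply, th_apply]
      simp only [U, V, Fintype.linearCombination_apply_single, one_smul]
      refine Fin.cases ?_ (fun j => ?_) i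
      · rfl
      · rfl
    rw [hb, Fin.range_cons, Set.insert_eq]
  · congr 2
    funext j; exact huv j

end A1
end PD

namespace PD
section B1
open scoped Polynomial

theorem pd_link {S : Type u} [CommRing S] [IsDomain S] [UniqueFactorizationMonoid S]
    {l1 l2 a f r1 r2 s1 s2 t : S} (hl1 : Prime l1) (hr1 : ¬ l1 ∣ r1) (ha : Prime a) (haf : ¬ a ∣ f)
    (hf : f = l1 * s1 + l2 * s2) (h1 : r1 + a * s2 = l1 * t) (h2 : r2 - a * s1 = l2 * t) :
    PdLE S[X] 3 (S[X] ⧸ (Ideal.span {Polynomial.C l1 * Polynomial.X + Polynomial.C r1} ⊔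
      Ideal.span {Polynomial.C l2 * Polynomial.X + Polynomial.C r2} ⊔ Ideal.span {Polynomial.C f})) := by
  have hirr : Irreducible (Polynomial.C l1 * Polynomial.X + Polynomial.C r1) :=
    Polynomial.irreducible_C_mul_X_add_C hl1.ne_zero (hl1.irreducible.isRelPrime_iff_not_dvd.2 hr1)
  have hD := pd_regular2 hirr.prime (Polynomial.C l2 * Polynomial.X + Polynomial.C r2)
  have hJ' := pd_regular2 (Polynomial.prime_C_iff.2 ha) (Polynomial.X + Polynomial.C t)
  have e1 : r1 = l1 * t - a * s2 := by linear_combination h1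
  have e2 : r2 = l2 * t + a * s1 := by linear_combination h2
  refine pd_colon_add (n := 2) _ _ _ (fun r => ?_) hJ' (pd_mono (by omega) hD)
  constructor
  · intro h
    obtain ⟨y, hy, z, hz, hyz⟩ := Submodule.mem_sup.1 h
    obtain ⟨A, rfl⟩ := Ideal.mem_span_singleton'.1 hy
    obtain ⟨B, rfl⟩ := Ideal.mem_span_singleton'.1 hz
    have hev := congrArg (Polynomial.eval (-t)) hyz
    simp only [Polynomial.eval_add, Polynomial.eval_mul, Polynomial.eval_C, Polynomial.eval_X] at hev
    have hdv : a ∣ Polynomial.eval (-t) r * f := by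
      rw [← hev, e1, e2]
      exact ⟨Polynomial.eval (-t) B * s1 - Polynomial.eval (-t) A * s2, by ring⟩
    rcases ha.dvd_or_dvd hdv with ⟨b, hb⟩ | h3
    · have hs := Polynomial.X_sub_C_dvd_sub_C_eval (a := -t) (p := r)
      rw [hb, map_neg, sub_neg_eq_add] at hs
      obtain ⟨c, hc⟩ := hs
      have : r = Polynomial.C b * Polynomial.C a + c * (Polynomial.X + Polynomial.C t) := by
        rw [map_mul] at hc; linear_combination hc
      rw [this]
      exact add_mem (Ideal.mem_sup_left (Ideal.mul_mem_left _ _ (Ideal.mem_span_singleton_self _)))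
        (Ideal.mem_sup_right (Ideal.mul_mem_left _ _ (Ideal.mem_span_singleton_self _)))
    · exact absurd h3 haf
  · intro h
    obtain ⟨y, hy, z, hz, rfl⟩ := Submodule.mem_sup.1 h
    obtain ⟨A, rfl⟩ := Ideal.mem_span_singleton'.1 hy
    obtain ⟨B, rfl⟩ := Ideal.mem_span_singleton'.1 hz
    have : (A * Polynomial.C a + B * (Polynomial.X + Polynomial.C t)) * Polynomial.C f =
       (B * Polynomial.C s1 - A * Polynomial.C l2) * (Polynomial.C l1 * Polynomial.X + Polynomial.C r1) +
       (B * Polynomial.C s2 + A * Polynomial.C l1) * (Polynomial.C l2 * Polynomial.X + Polynomial.C r2) := by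
      rw [e1, e2, hf]
      simp only [map_add, map_sub, map_mul]
      ring
    rw [this]
    exact add_mem (Ideal.mem_sup_left (Ideal.mul_mem_left _ _ (Ideal.mem_span_singleton_self _)))
      (Ideal.mem_sup_right (Ideal.mul_mem_left _ _ (Ideal.mem_span_singleton_self _)))

variable {K : Type u} [Field K] {M : ℕ}

/-- quadric from data -/
noncomputable def Qm (w : (Fin M → K) × MvPolynomial (Fin M) K) : (MvPolynomial (Fin M) K)[X] :=
  Polynomial.C (lin w.1) * Polynomial.X + Polynomial.C w.2

theorem lin_dvd_lin {x y : Fin M → K} : lin x ∣ lin y ↔ ∃ a : K, a • x = y := by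
  rw [← Ideal.mem_span_singleton, ← lin_span_singleton, lin_mem_span_iff, Submodule.mem_span_singleton]

/-- if a linear form divides a form of degree 2, the quotient is linear -/
theorem lin_dvd_two {x : Fin M → K} (hx : x ≠ 0) {f : MvPolynomial (Fin M) K} (hf : f.IsHomogeneous 2)
    (h : lin x ∣ f) : ∃ y, f = lin x * lin y := by
  obtain ⟨b, hb⟩ := h
  by_cases h0 : f = 0
  · exact ⟨0, by simp [h0]⟩
  obtain ⟨i, j, hij, hi, hj⟩ := homog_dvd hf h0 hb
  have : i = 1 := hi.inj_right (lin_homog x) (by rwa [Ne, lin_eq_zero])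
  obtain rfl : j = 1 := by omega
  obtain ⟨y, rfl⟩ := exists_lin hj
  exact ⟨y, hb⟩

theorem hom_Cmul {f : MvPolynomial (Fin M) K} {d : ℕ} (hf : f.IsHomogeneous d) (c : K) : (C c * f).IsHomogeneous d := by
  have := (isHomogeneous_C (Fin M) c).mul hf
  rwa [zero_add] at this

theorem caseB_core (P : Ideal (MvPolynomial (Fin M) K)[X]) (hP : P.IsPrime)
    (H1 : ∀ Q1 Q2 : Ideal (MvPolynomial (Fin M) K)[X], Q1.IsPrime → Q2.IsPrime → Q1 ≠ ⊥ → Q1 < Q2 →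
      Q2 ≤ P → Q2 = P)
    (hlin : ∀ l : Fin M → K, Polynomial.C (lin l) ∈ P → l = 0)
    (hlinX : ∀ l : Fin M → K, Polynomial.X + Polynomial.C (lin l) ∉ P)
    (W : Submodule K ((Fin M → K) × MvPolynomial (Fin M) K))
    (hWP : ∀ w ∈ W, Qm w ∈ P) (hWh : ∀ w ∈ W, w.2.IsHomogeneous 2)
    (hW : ∀ a b, ∃ w ∈ W, w ∉ Submodule.span K {a, b})
    (w1 : (Fin M → K) × MvPolynomial (Fin M) K) (hw1 : w1 ∈ W) (hl1 : w1.1 ≠ 0) :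
    PdLE (MvPolynomial (Fin M) K)[X] 3 ((MvPolynomial (Fin M) K)[X] ⧸ Ideal.span (Qm '' (W : Set _))) := by
  have hl1p := lin_prime hl1
  -- factorisation obstruction
  have hfac : ∀ r : MvPolynomial (Fin M) K, r.IsHomogeneous 2 → Polynomial.C (lin w1.1) * Polynomial.X + Polynomial.C r ∈ P →
      ¬ lin w1.1 ∣ r := by
    intro r hr hrP hd
    obtain ⟨y, rfl⟩ := lin_dvd_two hl1 hr hd
    rw [map_mul, ← mul_add] at hrP
    rcases hP.mem_or_mem hrP with h | h
    · exact hl1 (hlin _ h)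
    · exact hlinX _ h
  have hr1 : ¬ lin w1.1 ∣ w1.2 := hfac _ (hWh _ hw1) (hWP _ hw1)
  let c : (Fin M → K) × MvPolynomial (Fin M) K → MvPolynomial (Fin M) K :=
    fun w => lin w1.1 * w.2 - lin w.1 * w1.2
  have hc : ∀ w, c w = lin w1.1 * w.2 - lin w.1 * w1.2 := fun _ => rfl
  have hcP : ∀ w ∈ W, Polynomial.C (c w) ∈ P := by
    intro w hw
    have : Polynomial.C (c w) = Polynomial.C (lin w1.1) * Qm w - Polynomial.C (lin w.1) * Qm w1 := by
      rw [hc, Qm, Qm]; simp only [map_sub, map_mul]; ring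
    rw [this]
    exact sub_mem (Ideal.mul_mem_left _ _ (hWP _ hw)) (Ideal.mul_mem_left _ _ (hWP _ hw1))
  have hch : ∀ w ∈ W, (c w).IsHomogeneous 3 := fun w hw =>
    ((lin_homog w1.1).mul (hWh w hw)).sub ((lin_homog w.1).mul (hWh _ hw1))
  have hcomb : ∀ a w w', c (w - a • w') = c w - C a * c w' := by
    intro a w w'
    simp only [hc, Prod.fst_sub, Prod.snd_sub, Prod.smul_fst, Prod.smul_snd, map_sub, map_smul, smul_eq_C_mul]
    ring
  have hc0 : ∀ w, c w = 0 → ∃ a : K, w = a • w1 := by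
    intro w h
    rw [hc, sub_eq_zero] at h
    rcases hl1p.dvd_or_dvd (⟨w.2, h.symm⟩ : lin w1.1 ∣ lin w.1 * w1.2) with h3 | h3
    · obtain ⟨a, ha⟩ := lin_dvd_lin.1 h3
      refine ⟨a, Prod.ext ha.symm ?_⟩
      apply mul_left_cancel₀ hl1p.ne_zero
      rw [h, ← ha, map_smul, Prod.smul_snd]; simp
    · exact absurd h3 hr1
  obtain ⟨w0, hw0, hw0s⟩ := hW w1 w1
  have hcw0 : c w0 ≠ 0 := by
    intro h
    obtain ⟨a, rfl⟩ := hc0 _ h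
    exact hw0s (Submodule.smul_mem _ _ (Submodule.subset_span (by simp)))
  let p' := P.comap (Polynomial.C : MvPolynomial (Fin M) K →+* _)
  have hp' : p'.IsPrime := Ideal.comap_isPrime _ _
  obtain ⟨f, hfp, hfprime⟩ := Ideal.IsPrime.exists_mem_prime_of_ne_bot hp'
    (fun h => hcw0 (by have : c w0 ∈ p' := hcP _ hw0
                       rw [h] at this; exact this))
  have hfP : Polynomial.C f ∈ P := hfp
  have hp'f : ∀ g, Polynomial.C g ∈ P → f ∣ g := by
    intro g hg
    by_contra hfg
    have h3 := H1 (Ideal.span {Polynomial.C f}) (p'.map Polynomial.C)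
      ((Ideal.span_singleton_prime (by simpa using hfprime.ne_zero)).2 (Polynomial.prime_C_iff.2 hfprime))
      ((Ideal.isPrime_map_C_iff_isPrime _).2 hp') (by simpa [Ideal.span_singleton_eq_bot] using hfprime.ne_zero)
      (by
        rw [lt_iff_le_not_ge]
        refine ⟨(Ideal.span_singleton_le_iff_mem _).2 (Ideal.mem_map_of_mem _ hfp), fun h => hfg ?_⟩
        have := Ideal.mem_span_singleton.1 (h (Ideal.mem_map_of_mem _ hg))
        exact (Polynomial.C_dvd_iff_dvd_coeff _ _).1 this 0 |>.trans (by simp))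
      Ideal.map_comap_le
    have h4 := hWP _ hw1
    rw [← h3, Ideal.mem_map_C_iff] at h4
    have h5 := h4 1
    simp only [Qm, Polynomial.coeff_add, Polynomial.coeff_C_mul, Polynomial.coeff_X_one, mul_one,
      Polynomial.coeff_C_succ, add_zero] at h5
    exact hl1 (hlin _ h5)
  have hfdvd : ∀ w ∈ W, f ∣ c w := fun w hw => hp'f _ (hcP w hw)
  obtain ⟨b0, hb0⟩ := hfdvd w0 hw0
  obtain ⟨i, j, hij, hfi, hbj⟩ := homog_dvd (hch _ hw0) hcw0 hb0
  have hi0 : i ≠ 0 := by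
    rintro rfl
    obtain ⟨a, rfl⟩ := homog_zero_eq_C hfi
    refine hfprime.not_isUnit ((isUnit_iff_ne_zero.2 fun h => hfprime.ne_zero ?_).map C)
    rw [h, C_0]
  have hi1 : i ≠ 1 := by
    rintro rfl
    obtain ⟨a, rfl⟩ := exists_lin hfi
    have := hlin _ hfP
    exact hfprime.ne_zero (by rw [this, map_zero])
  have hcf : ∀ w ∈ W, ∃ b : MvPolynomial (Fin M) K, b.IsHomogeneous j ∧ c w = f * b := by
    intro w hw
    obtain ⟨b, hb⟩ := hfdvd w hw
    by_cases h0 : c w = 0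
    · exact ⟨0, isHomogeneous_zero _ _ _, by rw [h0, mul_zero]⟩
    · obtain ⟨i', j', hij', hfi', hbj'⟩ := homog_dvd (hch _ hw) h0 hb
      have : i' = i := hfi'.inj_right hfi hfprime.ne_zero
      obtain rfl : j' = j := by omega
      exact ⟨b, hbj', hb⟩
  have hij' : (i = 3 ∧ j = 0) ∨ (i = 2 ∧ j = 1) := by omega
  rcases hij' with ⟨rfl, rfl⟩ | ⟨rfl, rfl⟩
  · exfalso
    obtain ⟨w, hw, hws⟩ := hW w1 w0
    obtain ⟨a0, rfl⟩ := homog_zero_eq_C hbj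
    obtain ⟨b, hb, hbw⟩ := hcf w hw
    obtain ⟨a, rfl⟩ := homog_zero_eq_C hb
    have ha0 : a0 ≠ 0 := by rintro rfl; exact hcw0 (by rw [hb0]; simp)
    obtain ⟨d, hd⟩ := hc0 (w - (a / a0) • w0) (by
      rw [hcomb, hb0, hbw, mul_left_comm, ← map_mul, div_mul_cancel₀ _ ha0, sub_self])
    apply hws
    rw [sub_eq_iff_eq_add.1 hd]
    exact add_mem (Submodule.smul_mem _ _ (Submodule.subset_span (by simp)))
      (Submodule.smul_mem _ _ (Submodule.subset_span (by simp)))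
  have hlf : ∀ x : Fin M → K, ¬ lin x ∣ f := by
    intro x hxf
    have hx : x ≠ 0 := by rintro rfl; rw [map_zero, zero_dvd_iff] at hxf; exact hfprime.ne_zero hxf
    obtain ⟨y, rfl⟩ := lin_dvd_two hx hfi hxf
    rw [map_mul] at hfP
    rcases hP.mem_or_mem hfP with h | h
    · exact hx (hlin _ h)
    · exact hfprime.ne_zero (by rw [hlin _ h, map_zero, mul_zero])
  have hca : ∀ w ∈ W, ∃ a, c w = f * lin a := by
    intro w hw
    obtain ⟨b, hb, hbw⟩ := hcf w hw
    obtain ⟨a, rfl⟩ := exists_lin hb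
    exact ⟨a, hbw⟩
  -- elements with no linear part
  have hnl : ∀ w ∈ W, w.1 = 0 → ∃ d : K, w = d • (0, f) := by
    intro w hw h0
    obtain ⟨a, ha⟩ := hca w hw
    rw [hc, h0, map_zero, zero_mul, sub_zero] at ha
    rcases hl1p.dvd_or_dvd (⟨w.2, ha.symm⟩ : lin w1.1 ∣ f * lin a) with h | h
    · exact absurd h (hlf _)
    · obtain ⟨d, hd⟩ := lin_dvd_lin.1 h
      refine ⟨d, Prod.ext (by simpa using h0) ?_⟩
      apply mul_left_cancel₀ hl1p.ne_zero
      rw [ha, ← hd, map_smul]; simp [mul_comm]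
  obtain ⟨w2, hw2, hl2⟩ : ∃ w ∈ W, ¬ lin w1.1 ∣ lin w.1 := by
    by_contra hcon
    push Not at hcon
    obtain ⟨w, hw, hws⟩ := hW w1 (0, f)
    obtain ⟨a, ha⟩ := lin_dvd_lin.1 (hcon w hw)
    obtain ⟨d, hd⟩ := hnl (w - a • w1) (W.sub_mem hw (W.smul_mem _ hw1)) (by simp [ha])
    apply hws
    rw [sub_eq_iff_eq_add.1 hd]
    exact add_mem (Submodule.smul_mem _ _ (Submodule.subset_span (by simp)))
      (Submodule.smul_mem _ _ (Submodule.subset_span (by simp)))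
  obtain ⟨a2, ha2⟩ := hca w2 hw2
  have ha2s : a2 ∉ Submodule.span K {w1.1} ⊔ Submodule.span K {w2.1} := by
    intro h
    obtain ⟨y, hy, z, hz, hyz⟩ := Submodule.mem_sup.1 h
    obtain ⟨α, rfl⟩ := Submodule.mem_span_singleton.1 hy
    obtain ⟨β, rfl⟩ := Submodule.mem_span_singleton.1 hz
    rw [hc, ← hyz, map_add, map_smul, map_smul, smul_eq_C_mul, smul_eq_C_mul] at ha2
    have h3 : lin w1.1 ∣ lin w2.1 * (w1.2 + C β * f) :=
      ⟨w2.2 - C α * f, by linear_combination (-1 : MvPolynomial (Fin M) K) * ha2⟩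
    rcases hl1p.dvd_or_dvd h3 with h | h
    · exact hl2 h
    · refine hfac (w1.2 + C β * f) ((hWh _ hw1).add (hom_Cmul hfi _)) ?_ h
      rw [map_add, ← add_assoc]
      refine add_mem (hWP _ hw1) ?_
      rw [map_mul]; exact Ideal.mul_mem_left _ _ hfP
  have hspan : ∀ w ∈ W, ∃ α γ δ : K, w = α • w1 + γ • w2 + δ • (0, f) := by
    intro w hw
    obtain ⟨a, ha⟩ := hca w hw
    have h3 : lin w1.1 ∣ f * (lin w2.1 * lin a - lin w.1 * lin a2) := by
      refine ⟨lin w2.1 * w.2 - lin w.1 * w2.2, ?_⟩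
      rw [hc] at ha ha2
      linear_combination (- lin w2.1) * ha + lin w.1 * ha2
    have h4 := (hl1p.dvd_or_dvd h3).resolve_left (hlf _)
    obtain ⟨T, hT1, hT2⟩ := exists_proj (Submodule.span K {w1.1})
    rw [← Ideal.mem_span_singleton, ← lin_span_singleton, lin_span_eq_comap _ T hT1 hT2, map_sub, map_mul,
      map_mul, lsub_lin, lsub_lin, lsub_lin, lsub_lin, sub_eq_zero] at h4
    have hT0 : T w2.1 ≠ 0 := by
      intro h
      rw [hT2, ← lin_mem_span_iff, lin_span_singleton, Ideal.mem_span_singleton] at h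
      exact hl2 h
    have hTlift : ∀ x, lin (T w2.1) ∣ lin (T x) → ∃ α γ : K, x = α • w1.1 + γ • w2.1 := by
      intro x hx
      obtain ⟨γ, hγ⟩ := lin_dvd_lin.1 hx
      have : T (x - γ • w2.1) = 0 := by rw [map_sub, map_smul, hγ, sub_self]
      rw [hT2] at this
      obtain ⟨α, hα⟩ := Submodule.mem_span_singleton.1 this
      exact ⟨α, γ, by rw [hα]; abel⟩
    rcases (lin_prime hT0).dvd_or_dvd (⟨_, h4.symm⟩ : lin (T w2.1) ∣ lin (T w.1) * lin (T a2)) with h | h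
    · obtain ⟨α, γ, hαγ⟩ := hTlift _ h
      obtain ⟨δ, hδ⟩ := hnl (w - (α • w1 + γ • w2))
        (W.sub_mem hw (W.add_mem (W.smul_mem _ hw1) (W.smul_mem _ hw2))) (by simp [hαγ])
      exact ⟨α, γ, δ, by rw [← hδ]; abel⟩
    · obtain ⟨α, γ, hαγ⟩ := hTlift _ h
      exfalso; apply ha2s; rw [hαγ]
      exact add_mem (Submodule.mem_sup_left (Submodule.smul_mem _ _ (Submodule.mem_span_singleton_self _)))
        (Submodule.mem_sup_right (Submodule.smul_mem _ _ (Submodule.mem_span_singleton_self _)))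
  have hfW : ((0, f) : (Fin M → K) × MvPolynomial (Fin M) K) ∈ W := by
    obtain ⟨w, hw, hws⟩ := hW w1 w2
    obtain ⟨α, γ, δ, rfl⟩ := hspan w hw
    have h12 : α • w1 + γ • w2 ∈ Submodule.span K {w1, w2} :=
      add_mem (Submodule.smul_mem _ _ (Submodule.subset_span (by simp)))
        (Submodule.smul_mem _ _ (Submodule.subset_span (by simp)))
    have hδ : δ ≠ 0 := by
      rintro rfl
      apply hws; rwa [zero_smul, add_zero]
    have h3 : δ • ((0, f) : (Fin M → K) × MvPolynomial (Fin M) K) ∈ W := by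
      have := W.sub_mem hw (W.add_mem (W.smul_mem α hw1) (W.smul_mem γ hw2))
      rwa [add_sub_cancel_left] at this
    exact (W.smul_mem_iff hδ).1 h3
  have hIeq : Ideal.span (Qm '' (W : Set _)) =
      Ideal.span {Polynomial.C (lin w1.1) * Polynomial.X + Polynomial.C w1.2} ⊔
      Ideal.span {Polynomial.C (lin w2.1) * Polynomial.X + Polynomial.C w2.2} ⊔ Ideal.span {Polynomial.C f} := by
    apply le_antisymm
    · rw [Ideal.span_le]
      rintro _ ⟨w, hw, rfl⟩
      obtain ⟨α, γ, δ, rfl⟩ := hspan w hw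
      have : Qm (α • w1 + γ • w2 + δ • ((0, f) : (Fin M → K) × MvPolynomial (Fin M) K)) =
         Polynomial.C (C α) * (Polynomial.C (lin w1.1) * Polynomial.X + Polynomial.C w1.2) +
         Polynomial.C (C γ) * (Polynomial.C (lin w2.1) * Polynomial.X + Polynomial.C w2.2) +
         Polynomial.C (C δ) * Polynomial.C f := by
        simp only [Qm, Prod.fst_add, Prod.snd_add, Prod.smul_fst, Prod.smul_snd, map_add, map_smul, smul_eq_C_mul,
          map_mul, smul_zero, add_zero]
        ring
      rw [SetLike.mem_coe, this]
      refine add_mem (Ideal.mem_sup_left (add_mem ?_ ?_)) ?_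
      · exact Ideal.mem_sup_left (Ideal.mul_mem_left _ _ (Ideal.mem_span_singleton_self _))
      · exact Ideal.mem_sup_right (Ideal.mul_mem_left _ _ (Ideal.mem_span_singleton_self _))
      · exact Ideal.mem_sup_right (Ideal.mul_mem_left _ _ (Ideal.mem_span_singleton_self _))
    · simp only [sup_le_iff, Ideal.span_singleton_le_iff_mem]
      refine ⟨⟨Ideal.subset_span ⟨w1, hw1, rfl⟩, Ideal.subset_span ⟨w2, hw2, rfl⟩⟩, Ideal.subset_span ⟨(0, f), hfW, ?_⟩⟩
      simp [Qm]
  refine pd_ideal_congr hIeq ?_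
  have ha20 : a2 ≠ 0 := by rintro rfl; exact ha2s (zero_mem _)
  have hf12 : f ∈ Ideal.span {lin w1.1} ⊔ Ideal.span {lin w2.1} := by
    have hprime : (Ideal.span {lin w1.1} ⊔ Ideal.span {lin w2.1}).IsPrime := by
      rw [← lin_span_singleton, ← lin_span_singleton, lin_span_sup]; exact lin_span_prime _
    have hmem : f * lin a2 ∈ Ideal.span {lin w1.1} ⊔ Ideal.span {lin w2.1} := by
      rw [← ha2, hc]
      exact sub_mem (Ideal.mem_sup_left (Ideal.mul_mem_right _ _ (Ideal.mem_span_singleton_self _)))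
        (Ideal.mem_sup_right (Ideal.mul_mem_right _ _ (Ideal.mem_span_singleton_self _)))
    refine (hprime.mem_or_mem hmem).resolve_right fun h => ha2s ?_
    rwa [← lin_span_singleton, ← lin_span_singleton, lin_span_sup, lin_mem_span_iff] at h
  obtain ⟨s1, s2, -, -, hs⟩ := homog_comb (d := 1) (e := 1) hfi (lin_homog _) (lin_homog _) hf12
  rw [hc] at ha2
  have h5 : lin w1.1 ∣ lin w2.1 * (w1.2 + lin a2 * s2) :=
    ⟨w2.2 - lin a2 * s1, by linear_combination (-1 : MvPolynomial (Fin M) K) * ha2 - lin a2 * hs⟩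
  obtain ⟨t, ht⟩ := (hl1p.dvd_or_dvd h5).resolve_left hl2
  refine pd_link (a := lin a2) (s1 := s1) (s2 := s2) (t := t) hl1p hr1 (lin_prime ha20) (hlf a2) (by rw [hs]; ring) ht ?_
  apply mul_left_cancel₀ hl1p.ne_zero
  linear_combination ha2 + lin a2 * hs + lin w2.1 * ht

end B1
end PD

namespace PD
section B2
open scoped Polynomial
variable {K : Type u} [Field K] {N : ℕ}

/-- quadratic form of a matrix -/
noncomputable def qf (A : Fin N × Fin N → K) : MvPolynomial (Fin N) K :=
  ∑ p, A p • (X p.1 * X p.2)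

theorem exists_qf {q : MvPolynomial (Fin N) K} (hq : q.IsHomogeneous 2) : ∃ A, q = qf A := by
  have : q ∈ Submodule.span K (Set.range fun p : Fin N × Fin N => (X p.1 * X p.2 : MvPolynomial (Fin N) K)) := by
    rw [q.as_sum]
    refine Submodule.sum_mem _ fun m hm => ?_
    have hd : m.degree = 2 := by
      by_contra hcon
      exact (mem_support_iff.1 hm) (hq.coeff_eq_zero hcon)
    have hm0 : m ≠ 0 := by rintro rfl; simp at hd
    obtain ⟨i, hi⟩ := Finsupp.ne_iff.1 hm0
    have hle : Finsupp.single i 1 ≤ m := by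
      rw [Finsupp.single_le_iff]; simp at hi; omega
    obtain ⟨m', rfl⟩ := exists_add_of_le hle
    have hd' : m'.degree = 1 := by
      rw [map_add, Finsupp.degree_single] at hd; omega
    obtain ⟨c, hc⟩ := exists_lin (isHomogeneous_monomial (coeff (Finsupp.single i 1 + m') q) hd')
    have : monomial (Finsupp.single i 1 + m') (coeff (Finsupp.single i 1 + m') q) = X i * lin c := by
      rw [← hc, X, monomial_mul, one_mul]
    rw [this, lin_apply, Finset.mul_sum]
    refine Submodule.sum_mem _ fun j _ => ?_
    rw [mul_smul_comm]
    exact Submodule.smul_mem _ _ (Submodule.subset_span ⟨(i, j), rfl⟩)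
  obtain ⟨A, hA⟩ := (Submodule.mem_span_range_iff_exists_fun K).1 this
  exact ⟨A, hA.symm⟩

theorem aeval_lin {B : Type*} [CommRing B] [Algebra K B] (x : Fin N → B) (c : Fin N → K) :
    aeval x (lin c) = ∑ i, c i • x i := by
  rw [lin_apply]; simp

theorem qf_alt (A : Fin N × Fin N → K) (h : ∀ i j, A (i, j) + A (j, i) = 0) :
    qf A = ∑ i, A (i, i) • (X i * X i : MvPolynomial (Fin N) K) := by
  have h0 : ∑ p : Fin N × Fin N, (if p.1 = p.2 then 0 else A p • (X p.1 * X p.2 : MvPolynomial (Fin N) K)) = 0 := by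
    refine Finset.sum_ninvolution Prod.swap ?_ ?_ ?_ ?_
    · rintro ⟨i, j⟩
      by_cases hij : i = j
      · simp [hij]
      · have hji : ¬ j = i := fun h => hij h.symm
        simp only [hij, hji, if_false, Prod.swap]
        rw [mul_comm (X j), ← add_smul, h, zero_smul]
    · rintro ⟨i, j⟩ h1 h2
      apply h1
      have : j = i := congrArg Prod.fst h2
      simp [this]
    · intro a; simp
    · intro a; simp
  have h1 : qf A = ∑ p : Fin N × Fin N, (if p.1 = p.2 then A p • (X p.1 * X p.2 : MvPolynomial (Fin N) K) else 0) +
     ∑ p : Fin N × Fin N, (if p.1 = p.2 then 0 else A p • (X p.1 * X p.2 : MvPolynomial (Fin N) K)) := by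
    rw [← Finset.sum_add_distrib, qf]
    refine Finset.sum_congr rfl fun p _ => ?_
    split_ifs <;> simp
  rw [h1, h0, add_zero, Fintype.sum_prod_type]
  refine Finset.sum_congr rfl fun i _ => ?_
  simp

theorem exists_grad [IsAlgClosed K] (P : Ideal (MvPolynomial (Fin N) K)) (hP : P.IsPrime)
    (hlin : ∀ c : Fin N → K, lin c ∈ P → c = 0) (A : Fin N × Fin N → K) (hA : qf A ∈ P) (h0 : qf A ≠ 0) :
    ∃ j, (fun i => A (i, j) + A (j, i)) ≠ 0 := by
  by_contra hcon
  push Not at hcon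
  have hs : ∀ i j, A (i, j) + A (j, i) = 0 := fun i j => congrFun (hcon j) i
  have hq := qf_alt A hs
  by_cases h2 : (2 : K) = 0
  · haveI : CharP K 2 := CharTwo.of_one_ne_zero_of_two_eq_zero one_ne_zero h2
    choose b hb using fun i => IsAlgClosed.exists_pow_nat_eq (A (i, i)) (n := 2) (by omega)
    have : qf A = (lin b) ^ 2 := by
      rw [hq, lin_apply, sum_pow_char 2]
      refine Finset.sum_congr rfl fun i _ => ?_
      rw [smul_pow, hb, sq]
    have hb0 : b = 0 := hlin b (hP.mem_of_pow_mem 2 (this ▸ hA))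
    apply h0
    rw [this, hb0, map_zero]; simp
  · apply h0
    rw [hq]
    refine Finset.sum_eq_zero fun i _ => ?_
    have : A (i, i) = 0 := by
      have := hs i i
      rw [← two_mul] at this
      exact (mul_eq_zero.1 this).resolve_left h2
    rw [this, zero_smul]

theorem exists_point [IsAlgClosed K] (P : Ideal (MvPolynomial (Fin N) K)) (hP : P.IsPrime)
    (hlin : ∀ c : Fin N → K, lin c ∈ P → c = 0) (A : Fin N × Fin N → K) (hA : qf A ∈ P) (h0 : qf A ≠ 0) :
    ∃ ξ : Fin N → K, (∀ p ∈ P, aeval ξ p = 0) ∧ ∃ j, ∑ i, (A (i, j) + A (j, i)) * ξ i ≠ 0 := by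
  obtain ⟨j, hj⟩ := exists_grad P hP hlin A hA h0
  by_contra hcon
  push Not at hcon
  apply hj
  apply hlin
  rw [← MvPolynomial.IsPrime.vanishingIdeal_zeroLocus (K := K) P, mem_vanishingIdeal_iff]
  intro ξ hξ
  rw [aeval_lin]
  exact hcon ξ hξ j

end B2
end PD

namespace PD
section B3
open scoped Polynomial
variable {K : Type u} [Field K] {M : ℕ}

theorem Qm_add (w w' : (Fin M → K) × MvPolynomial (Fin M) K) : Qm (w + w') = Qm w + Qm w' := by
  simp only [Qm, Prod.fst_add, Prod.snd_add, map_add]; ring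

theorem Qm_smul (a : K) (w : (Fin M → K) × MvPolynomial (Fin M) K) :
    Qm (a • w) = Polynomial.C (C a) * Qm w := by
  simp only [Qm, Prod.smul_fst, Prod.smul_snd, map_smul, smul_eq_C_mul, map_mul]; ring

theorem fse_lin (c : Fin (M+1) → K) :
    finSuccEquiv K M (lin c) = Polynomial.C (C (c 0)) * Polynomial.X + Polynomial.C (lin fun j => c j.succ) := by
  have hC : ∀ a : K, finSuccEquiv K M (C a) = Polynomial.C (C a) := fun a => (finSuccEquiv K M).commutes a
  rw [lin_apply, lin_apply, map_sum, Fin.sum_univ_succ]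
  simp only [smul_eq_C_mul, map_mul, finSuccEquiv_X_zero, finSuccEquiv_X_succ, hC, map_sum]

theorem qf_image {N : ℕ} (A : Fin N × Fin N → K) (ξ : Fin N → K) (p : Fin N → Fin M → K)
    (Φ : MvPolynomial (Fin N) K →ₐ[K] (MvPolynomial (Fin M) K)[X])
    (hΦ : ∀ i, Φ (X i) = Polynomial.C (C (ξ i)) * Polynomial.X + Polynomial.C (lin (p i)))
    (h0 : aeval ξ (qf A) = 0) :
    Φ (qf A) = Qm (∑ j, (∑ i, (A (i, j) + A (j, i)) * ξ i) • p j,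
      ∑ q : Fin N × Fin N, C (A q) * (lin (p q.1) * lin (p q.2))) := by
  have hC : ∀ a : K, Φ (C a) = Polynomial.C (C a) := fun a => Φ.commutes a
  have e1 : Φ (qf A) = Polynomial.C (C (∑ q : Fin N × Fin N, A q * (ξ q.1 * ξ q.2))) * Polynomial.X ^ 2 +
      Polynomial.C (∑ q : Fin N × Fin N, C (A q) * (C (ξ q.1) * lin (p q.2) + C (ξ q.2) * lin (p q.1))) * Polynomial.X +
      Polynomial.C (∑ q : Fin N × Fin N, C (A q) * (lin (p q.1) * lin (p q.2))) := by
    rw [qf, map_sum]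
    simp only [map_sum, Finset.sum_mul, ← Finset.sum_add_distrib]
    refine Finset.sum_congr rfl fun q _ => ?_
    rw [smul_eq_C_mul, map_mul, map_mul, hC, hΦ, hΦ]
    simp only [map_mul, map_add]
    ring
  have e2 : ∑ q : Fin N × Fin N, A q * (ξ q.1 * ξ q.2) = 0 := by
    rw [← h0, qf, map_sum]
    refine Finset.sum_congr rfl fun q _ => ?_
    simp
  have e3 : lin (∑ j, (∑ i, (A (i, j) + A (j, i)) * ξ i) • p j) =
      ∑ q : Fin N × Fin N, C (A q) * (C (ξ q.1) * lin (p q.2) + C (ξ q.2) * lin (p q.1)) := by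
    simp only [mul_add, Finset.sum_add_distrib]
    rw [Fintype.sum_prod_type_right, Fintype.sum_prod_type, ← Finset.sum_add_distrib, map_sum]
    refine Finset.sum_congr rfl fun j _ => ?_
    rw [map_smul, ← Finset.sum_add_distrib, smul_eq_C_mul, map_sum, Finset.sum_mul]
    refine Finset.sum_congr rfl fun i _ => ?_
    simp only [map_mul, map_add]
    ring
  rw [e1, e2, Qm, e3]; simp

theorem exists_T (ξ : Fin (M+1) → K) (i0 : Fin (M+1)) (h : ξ i0 ≠ 0) :
    ∃ T : (Fin (M+1) → K) ≃ₗ[K] (Fin (M+1) → K), ∀ c, T c = Fin.cons (∑ i, c i * ξ i) (fun j => c (i0.succAbove j)) := by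
  let T : (Fin (M+1) → K) →ₗ[K] (Fin (M+1) → K) :=
    { toFun := fun c => Fin.cons (∑ i, c i * ξ i) (fun j => c (i0.succAbove j))
      map_add' := by
        intro c d
        funext i
        refine Fin.cases ?_ (fun j => ?_) i
        · simp [add_mul, Finset.sum_add_distrib]
        · simp
      map_smul' := by
        intro a c
        funext i
        refine Fin.cases ?_ (fun j => ?_) i
        · simp [Finset.mul_sum, mul_assoc]
        · simp }
  have hT : ∀ c, T c = Fin.cons (∑ i, c i * ξ i) (fun j => c (i0.succAbove j)) := fun _ => rfl
  have hinj : Function.Injective T := by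
    rw [← LinearMap.ker_eq_bot, LinearMap.ker_eq_bot']
    intro c hc
    rw [hT] at hc
    have h1 : ∀ j, c (i0.succAbove j) = 0 := fun j => by have := congrFun hc j.succ; simpa using this
    have h2 := congrFun hc 0
    rw [Fin.cons_zero, Fin.sum_univ_succAbove _ i0] at h2
    simp only [h1, zero_mul, Finset.sum_const_zero, add_zero, Pi.zero_apply] at h2
    have h3 := (mul_eq_zero.1 h2).resolve_right h
    funext i
    rcases Fin.eq_self_or_eq_succAbove i0 i with rfl | ⟨j, rfl⟩
    · exact h3
    · exact h1 j
  exact ⟨LinearEquiv.ofInjectiveEndo T hinj, fun c => by rw [← hT]; simp⟩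

theorem caseB [IsAlgClosed K] {N n : ℕ} (g : Fin n → MvPolynomial (Fin N) K)
    (hg : ∀ i, (g i).IsHomogeneous 2) (P : Ideal (MvPolynomial (Fin N) K)) (hP : P.IsPrime)
    (hgP : ∀ i, g i ∈ P)
    (H1 : ∀ Q1 Q2 : Ideal (MvPolynomial (Fin N) K), Q1.IsPrime → Q2.IsPrime → Q1 ≠ ⊥ → Q1 < Q2 →
      Q2 ≤ P → Q2 = P)
    (hlin : ∀ c : Fin N → K, lin c ∈ P → c = 0)
    (hV : ∀ a b, ∃ j, g j ∉ Submodule.span K {a, b}) :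
    PdLE (MvPolynomial (Fin N) K) 3 (MvPolynomial (Fin N) K ⧸ Ideal.span (Set.range g)) := by
  choose A hA using fun j => exists_qf (hg j)
  obtain ⟨j1, hj1⟩ := hV 0 0
  have hq1 : qf (A j1) ≠ 0 := by rw [← hA]; intro h; rw [h] at hj1; exact hj1 (zero_mem _)
  obtain ⟨ξ, hξ, jj, hjj⟩ := exists_point P hP hlin (A j1) (by rw [← hA]; exact hgP _) hq1
  obtain ⟨i0, hi0⟩ : ∃ i, ξ i ≠ 0 := by
    by_contra hcon
    push Not at hcon
    exact hjj (Finset.sum_eq_zero fun i _ => by rw [hcon, mul_zero])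
  obtain _ | M := N
  · exact i0.elim0
  obtain ⟨T, hT⟩ := exists_T ξ i0 hi0
  let Φ : MvPolynomial (Fin (M+1)) K ≃ₐ[K] (MvPolynomial (Fin M) K)[X] := (lequiv T).trans (finSuccEquiv K M)
  have hΦlin : ∀ c, Φ (lin c) = Polynomial.C (C (T c 0)) * Polynomial.X + Polynomial.C (lin fun j => T c j.succ) := by
    intro c
    change finSuccEquiv K M (lequiv T (lin c)) = _
    rw [lequiv_lin, fse_lin]
  let p : Fin (M+1) → Fin M → K := fun i j => T (Pi.single i 1) j.succ
  have hΦX : ∀ i, Φ.toAlgHom (X i) = Polynomial.C (C (ξ i)) * Polynomial.X + Polynomial.C (lin (p i)) := by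
    intro i
    have : T (Pi.single i 1) 0 = ξ i := by rw [hT]; simp [Pi.single_apply]
    have h1 := hΦlin (Pi.single i 1)
    rw [lin_single, this] at h1
    exact h1
  let d : Fin n → (Fin M → K) × MvPolynomial (Fin M) K := fun k =>
    (∑ j, (∑ i, (A k (i, j) + A k (j, i)) * ξ i) • p j,
      ∑ q : Fin (M+1) × Fin (M+1), C (A k q) * (lin (p q.1) * lin (p q.2)))
  have hΦg : ∀ k, Φ (g k) = Qm (d k) := by
    intro k
    rw [hA]
    exact qf_image (A k) ξ p Φ.toAlgHom hΦX (by rw [← hA]; exact hξ _ (hgP k))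
  let P' : Ideal (MvPolynomial (Fin M) K)[X] := P.comap Φ.symm.toRingEquiv.toRingHom
  have hP'mem : ∀ z, z ∈ P' ↔ Φ.symm z ∈ P := fun z => Iff.rfl
  have hP'Φ : ∀ z, Φ z ∈ P' ↔ z ∈ P := fun z => by rw [hP'mem, AlgEquiv.symm_apply_apply]
  let W := Submodule.span K (Set.range d)
  have hWQ : ∀ J : Ideal (MvPolynomial (Fin M) K)[X], (∀ k, Qm (d k) ∈ J) → ∀ w ∈ W, Qm w ∈ J := by
    intro J hJ w hw
    induction hw using Submodule.span_induction with
    | mem x hx => obtain ⟨k, rfl⟩ := hx; exact hJ k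
    | zero => have := Qm_smul (M := M) (0:K) 0
              rw [smul_zero, C_0, map_zero, zero_mul] at this
              rw [this]; exact zero_mem _
    | add x y _ _ hx hy => rw [Qm_add]; exact add_mem hx hy
    | smul a x _ hx => rw [Qm_smul]; exact Ideal.mul_mem_left _ _ hx
  have hWspan : Ideal.span (Set.range fun k => Φ (g k)) = Ideal.span (Qm '' (W : Set _)) := by
    apply le_antisymm
    · rw [Ideal.span_le]
      rintro _ ⟨k, rfl⟩
      exact Ideal.subset_span ⟨d k, Submodule.subset_span ⟨k, rfl⟩, (hΦg k).symm⟩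
    · rw [Ideal.span_le]
      rintro _ ⟨w, hw, rfl⟩
      exact hWQ (Ideal.span (Set.range fun k => Φ (g k))) (fun k => Ideal.subset_span ⟨k, hΦg k⟩) w hw
  refine pd_ringEquiv_span Φ.toRingEquiv g ?_
  change PdLE _ 3 (_ ⧸ Ideal.span (Set.range fun k => Φ (g k)))
  refine pd_ideal_congr hWspan ?_
  have hTl : ∀ (a : K) (l : Fin M → K), Polynomial.C (C a) * Polynomial.X + Polynomial.C (lin l) ∈ P' → a = 0 ∧ l = 0 := by
    intro a l h
    have h1 := hΦlin (T.symm (Fin.cons a l))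
    rw [T.apply_symm_apply] at h1
    simp only [Fin.cons_zero, Fin.cons_succ] at h1
    have h2 := hlin _ ((hP'Φ _).1 (h1 ▸ h))
    rw [T.symm.map_eq_zero_iff] at h2
    refine ⟨by simpa using congrFun h2 0, funext fun j => by simpa using congrFun h2 j.succ⟩
  have hdW : d j1 ∈ W := Submodule.subset_span ⟨j1, rfl⟩
  refine caseB_core P' (Ideal.comap_isPrime _ _) ?_ ?_ ?_ W ?_ ?_ ?_ (d j1) hdW ?_
  · intro Q1 Q2 h1 h2 hb hlt hle
    let c : Ideal (MvPolynomial (Fin M) K)[X] → Ideal (MvPolynomial (Fin (M+1)) K) :=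
      fun Q => Q.comap Φ.toRingEquiv.toRingHom
    have hc : ∀ Q z, z ∈ c Q ↔ Φ z ∈ Q := fun _ _ => Iff.rfl
    have hcle : ∀ Q Q', c Q ≤ c Q' → Q ≤ Q' := by
      intro Q Q' h z hz
      have := h (show Φ.symm z ∈ c Q by rw [hc, AlgEquiv.apply_symm_apply]; exact hz)
      rwa [hc, AlgEquiv.apply_symm_apply] at this
    have hmono : ∀ Q Q', Q ≤ Q' → c Q ≤ c Q' := fun Q Q' h => Ideal.comap_mono h
    have hcP : c P' = P := by ext z; rw [hc, hP'Φ]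
    have := H1 (c Q1) (c Q2) (Ideal.comap_isPrime _ _) (Ideal.comap_isPrime _ _) ?_ ?_ ?_
    · apply le_antisymm <;> apply hcle
      · rw [hcP, this]
      · rw [hcP, this]
    · intro h
      apply hb
      rw [eq_bot_iff]
      apply hcle
      rw [h]; exact bot_le
    · exact lt_of_le_not_ge (hmono _ _ hlt.le) fun h => hlt.not_ge (hcle _ _ h)
    · rw [← hcP]; exact hmono _ _ hle
  · intro l hl
    exact (hTl 0 l (by rw [C_0, map_zero, zero_mul, zero_add]; exact hl)).2
  · intro l hl
    have := (hTl 1 l (by rw [C_1, map_one, one_mul]; exact hl)).1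
    exact one_ne_zero this
  · exact hWQ P' fun k => by rw [← hΦg, hP'Φ]; exact hgP k
  · intro w hw
    have hle : W ≤ (homogeneousSubmodule (Fin M) K 2).comap (LinearMap.snd K _ _) := by
      rw [Submodule.span_le]
      rintro _ ⟨k, rfl⟩
      refine IsHomogeneous.sum _ _ _ fun q _ => hom_Cmul ?_ _
      exact (lin_homog _).mul (lin_homog _)
    exact hle hw
  · intro a b
    obtain ⟨j, hj⟩ := hV (Φ.symm (Qm a)) (Φ.symm (Qm b))
    refine ⟨d j, Submodule.subset_span ⟨j, rfl⟩, fun h => hj ?_⟩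
    obtain ⟨α, β, hαβ⟩ := Submodule.mem_span_pair.1 h
    rw [Submodule.mem_span_pair]
    refine ⟨α, β, ?_⟩
    have hC : ∀ a : K, Φ.symm (Polynomial.C (C a)) = C a := fun a => Φ.symm.commutes a
    rw [← Φ.symm_apply_apply (g j), hΦg, ← hαβ, Qm_add, Qm_smul, Qm_smul, map_add, map_mul, map_mul, hC, hC,
      smul_eq_C_mul, smul_eq_C_mul]
  · intro h
    let μ : Fin (M+1) → K := fun j => ∑ i, (A j1 (i, j) + A j1 (j, i)) * ξ i
    have hp0 : p i0 = 0 := by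
      funext k; simp [p, hT]
    have hpk : ∀ k, p (i0.succAbove k) = Pi.single k 1 := by
      intro k; funext k'
      simp [p, hT, Pi.single_apply]
    have hμs : ∀ k, μ (i0.succAbove k) = 0 := by
      intro k
      have h1 : ∑ j, μ j • p j = 0 := h
      rw [Fin.sum_univ_succAbove _ i0, hp0, smul_zero, zero_add] at h1
      simp only [hpk] at h1
      have := congrFun h1 k
      simpa [Pi.single_apply] using this
    have hsum : ∑ j, μ j * ξ j = 0 := by
      have h0 : aeval ξ (qf (A j1)) = 0 := by rw [← hA]; exact hξ _ (hgP _)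
      have e : ∑ q : Fin (M+1) × Fin (M+1), A j1 q * (ξ q.1 * ξ q.2) = 0 := by
        rw [← h0, qf, map_sum]
        refine Finset.sum_congr rfl fun q _ => ?_
        simp
      have e1 := e
      have e2 := e
      rw [Fintype.sum_prod_type_right] at e1
      rw [Fintype.sum_prod_type] at e2
      calc ∑ j, μ j * ξ j = ∑ j, ∑ i, A j1 (i, j) * (ξ i * ξ j) + ∑ j, ∑ i, A j1 (j, i) * (ξ j * ξ i) := by
            rw [← Finset.sum_add_distrib]
            refine Finset.sum_congr rfl fun j _ => ?_
            rw [← Finset.sum_add_distrib, Finset.sum_mul]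
            refine Finset.sum_congr rfl fun i _ => ?_
            ring
        _ = 0 := by rw [e1, e2, add_zero]
    rw [Fin.sum_univ_succAbove _ i0] at hsum
    simp only [hμs, zero_mul, Finset.sum_const_zero, add_zero] at hsum
    have hμ0 := (mul_eq_zero.1 hsum).resolve_right hi0
    apply hjj
    change μ jj = 0
    rcases Fin.eq_self_or_eq_succAbove i0 jj with rfl | ⟨k, rfl⟩
    · exact hμ0
    · exact hμs k

end B3
end PD

namespace PD
section Main
variable {K : Type u} [Field K] {N : ℕ}

theorem span_pair_le {V : Type*} [AddCommGroup V] [Module K V] {x y a b : V} (hx : x ≠ 0)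
    (hy : y ∉ Submodule.span K {x}) (hxa : x ∈ Submodule.span K {a, b}) (hya : y ∈ Submodule.span K {a, b}) :
    Submodule.span K {a, b} ≤ Submodule.span K {x, y} := by
  classical
  have hle : Submodule.span K {x, y} ≤ Submodule.span K {a, b} := by
    rw [Submodule.span_le]; rintro z (rfl | rfl)
    · exact hxa
    · exact hya
  have hli : LinearIndependent K ![x, y] := by
    rw [LinearIndependent.pair_iff' hx]
    intro c hc
    exact hy (Submodule.mem_span_singleton.2 ⟨c, hc⟩)
  have h2 := finrank_span_eq_card hli
  rw [Matrix.range_cons, Matrix.range_cons, Matrix.range_empty, Set.union_empty, Set.singleton_union, Fintype.card_fin] at h2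
  have h3 : Module.finrank K (Submodule.span K {a, b}) ≤ 2 := by
    have := finrank_span_finset_le_card (R := K) ({a, b} : Finset V)
    rw [Finset.coe_insert, Finset.coe_singleton] at this
    exact this.trans Finset.card_le_two
  haveI : FiniteDimensional K (Submodule.span K {a, b}) := FiniteDimensional.span_of_finite K (Set.toFinite _)
  exact (Submodule.eq_of_le_of_finrank_le hle (by rw [h2]; exact h3)).ge

theorem pd_relPrime {R : Type u} [CommRing R] [IsDomain R] [UniqueFactorizationMonoid R] {p q : R}
    (h : IsRelPrime p q) : PdLE R 2 (R ⧸ (Ideal.span {p} ⊔ Ideal.span {q})) := by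
  refine pd_colon_add (n := 1) _ (Ideal.span {p}) q (fun r => ?_) (pd_principal _) (pd_mono (by omega) (pd_principal _))
  rw [Ideal.mem_span_singleton, Ideal.mem_span_singleton]
  exact ⟨fun h3 => h.dvd_of_dvd_mul_right h3, fun h3 => h3.mul_right _⟩

theorem main_closed [IsAlgClosed K] {n : ℕ} (g : Fin n → MvPolynomial (Fin N) K)
    (hg : ∀ i, (g i).IsHomogeneous 2) (P : Ideal (MvPolynomial (Fin N) K)) (hP : P.IsPrime)
    (hgP : ∀ i, g i ∈ P)
    (H1 : ∀ Q1 Q2 : Ideal (MvPolynomial (Fin N) K), Q1.IsPrime → Q2.IsPrime → Q1 ≠ ⊥ → Q1 < Q2 →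
      Q2 ≤ P → Q2 = P)
    (H2 : ∀ f, (∀ i, g i ∈ Ideal.span {f}) → IsUnit f) :
    PdLE (MvPolynomial (Fin N) K) (2 * n - 2) (MvPolynomial (Fin N) K ⧸ Ideal.span (Set.range g)) := by
  by_cases hV : ∀ a b, ∃ j, g j ∉ Submodule.span K {a, b}
  · have hn : 3 ≤ n := by
      by_contra hn
      have hn' : n = 0 ∨ n = 1 ∨ n = 2 := by omega
      rcases hn' with rfl | rfl | rfl
      · obtain ⟨j, -⟩ := hV 0 0; exact j.elim0
      · obtain ⟨j, hj⟩ := hV (g 0) (g 0)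
        fin_cases j
        exact hj (Submodule.subset_span (by simp))
      · obtain ⟨j, hj⟩ := hV (g 0) (g 1)
        fin_cases j
        · exact hj (Submodule.subset_span (by simp))
        · exact hj (Submodule.subset_span (by simp))
    by_cases hlin : ∀ c : Fin N → K, lin c ∈ P → c = 0
    · exact pd_mono (by omega) (caseB g hg P hP hgP H1 hlin hV)
    push Not at hlin
    obtain ⟨x, hxP, hx0⟩ := hlin
    by_cases hx : ∀ c, lin c ∈ P → c ∈ Submodule.span K {x}
    · obtain ⟨m, rfl⟩ : ∃ m, n = m + 1 := ⟨n - 1, by omega⟩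
      exact pd_mono (by omega) (caseA2 g (by omega) hg P hP hgP H1 H2 x hx0 hxP hx)
    push Not at hx
    obtain ⟨y, hyP, hy⟩ := hx
    haveI : Infinite K := IsAlgClosed.instInfinite
    classical
    obtain ⟨t, ht⟩ := Infinite.exists_notMem_finset ({0, 1} : Finset K)
    simp only [Finset.mem_insert, Finset.mem_singleton, not_or] at ht
    exact caseA1 g hn hg P hgP H1 x y hx0 hxP hyP hy t ht.1 ht.2
  · push Not at hV
    obtain ⟨a, b, hab⟩ := hV
    obtain ⟨j1, hj1⟩ : ∃ j, g j ≠ 0 := by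
      by_contra hcon
      push Not at hcon
      exact not_isUnit_zero (H2 0 fun i => by rw [hcon]; exact zero_mem _)
    obtain ⟨j2, hj2⟩ : ∃ j, g j ∉ Submodule.span K {g j1} := by
      by_contra hcon
      push Not at hcon
      refine hP.ne_top (Ideal.eq_top_of_isUnit_mem _ (hgP j1) (H2 (g j1) fun i => ?_))
      obtain ⟨c, hc⟩ := Submodule.mem_span_singleton.1 (hcon i)
      rw [← hc, smul_eq_C_mul]
      exact Ideal.mul_mem_left _ _ (Ideal.mem_span_singleton_self _)
    have hn : 2 ≤ n := by
      have hne : j1 ≠ j2 := by rintro rfl; exact hj2 (Submodule.mem_span_singleton_self _)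
      have h1 := j1.isLt
      have h2 := j2.isLt
      have : (j1 : ℕ) ≠ j2 := fun h => hne (Fin.ext h)
      omega
    have hsp : ∀ i, ∃ c d : K, c • g j1 + d • g j2 = g i := fun i =>
      Submodule.mem_span_pair.1 (span_pair_le hj1 hj2 (hab _) (hab _) (hab i))
    have hI : ∀ J : Ideal (MvPolynomial (Fin N) K), g j1 ∈ J → g j2 ∈ J → ∀ i, g i ∈ J := by
      intro J h1 h2 i
      obtain ⟨c, d, hcd⟩ := hsp i
      rw [← hcd, smul_eq_C_mul, smul_eq_C_mul]
      exact add_mem (Ideal.mul_mem_left _ _ h1) (Ideal.mul_mem_left _ _ h2)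
    have hIeq : Ideal.span (Set.range g) = Ideal.span {g j1} ⊔ Ideal.span {g j2} := by
      apply le_antisymm
      · rw [Ideal.span_le]
        rintro _ ⟨i, rfl⟩
        exact hI (Ideal.span {g j1} ⊔ Ideal.span {g j2}) (Ideal.mem_sup_left (Ideal.mem_span_singleton_self _))
          (Ideal.mem_sup_right (Ideal.mem_span_singleton_self _)) i
      · rw [sup_le_iff, Ideal.span_singleton_le_iff_mem, Ideal.span_singleton_le_iff_mem]
        exact ⟨Ideal.subset_span ⟨_, rfl⟩, Ideal.subset_span ⟨_, rfl⟩⟩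
    refine pd_mono (show 2 ≤ 2 * n - 2 by omega) (pd_ideal_congr hIeq (pd_relPrime ?_))
    intro d h1 h2
    exact H2 d (hI (Ideal.span {d}) (Ideal.mem_span_singleton.2 h1) (Ideal.mem_span_singleton.2 h2))

end Main
end PD


namespace PD
section Reduction
attribute [local instance] MvPolynomial.algebraMvPolynomial

theorem reduce {K : Type u} [Field K] {N n m : ℕ} (g : Fin n → MvPolynomial (Fin N) K)
    (h : PdLE (MvPolynomial (Fin N) (AlgebraicClosure K)) m
      (MvPolynomial (Fin N) (AlgebraicClosure K) ⧸ Ideal.span (Set.range fun i =>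
        algebraMap (MvPolynomial (Fin N) K) (MvPolynomial (Fin N) (AlgebraicClosure K)) (g i)))) :
    PdLE (MvPolynomial (Fin N) K) m (MvPolynomial (Fin N) K ⧸ Ideal.span (Set.range g)) := by
  let L := AlgebraicClosure K
  let R := MvPolynomial (Fin N) K
  let S := MvPolynomial (Fin N) L
  have hbc : IsBaseChange R (IsScalarTower.toAlgHom K L S).toLinearMap :=
    (inferInstance : Algebra.IsPushout K R L S).out
  have hfree : Module.Free R S := hbc.free
  have h1 : PdLE R m _ := pd_restrict (R := R) h
  obtain ⟨φ, hφ⟩ := LinearMap.exists_leftInverse_of_injective (Algebra.linearMap K L)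
    (LinearMap.ker_eq_bot.2 (algebraMap K L).injective)
  let ρ : S →ₗ[R] R := hbc.lift ((Algebra.linearMap K R).comp φ)
  have hφ1 : φ 1 = 1 := by
    have := LinearMap.congr_fun hφ 1
    simpa using this
  have hρ1 : ρ 1 = 1 := by
    have := hbc.lift_eq ((Algebra.linearMap K R).comp φ) 1
    simpa [hφ1] using this
  have hρ : ∀ r : R, ρ (algebraMap R S r) = r := fun r => by
    rw [Algebra.algebraMap_eq_smul_one, map_smul, hρ1, smul_eq_mul, mul_one]
  set I : Ideal R := Ideal.span (Set.range g) with hI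
  set J : Ideal S := Ideal.span (Set.range fun i => algebraMap R S (g i)) with hJ
  have hIJ : ∀ r ∈ I, algebraMap R S r ∈ J := by
    have : I ≤ J.comap (algebraMap R S) := by
      rw [hI, Ideal.span_le]
      rintro _ ⟨i, rfl⟩
      exact Ideal.subset_span ⟨i, rfl⟩
    exact this
  have hJI : ∀ s ∈ J, ρ s ∈ I := by
    intro s hs
    obtain ⟨c, rfl⟩ := (Ideal.mem_span_range_iff_exists_fun).1 hs
    rw [map_sum]
    refine Ideal.sum_mem _ fun i _ => ?_
    rw [mul_comm, ← Algebra.smul_def, map_smul, smul_eq_mul]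
    exact Ideal.mul_mem_right _ _ (Ideal.subset_span ⟨i, rfl⟩)
  let i : (R ⧸ I) →ₗ[R] (S ⧸ J) := Submodule.liftQ I
    ((IsScalarTower.toAlgHom R S (S ⧸ J)).toLinearMap.comp (Algebra.linearMap R S)) (fun r hr => by
      simp only [LinearMap.mem_ker, LinearMap.comp_apply]
      exact Ideal.Quotient.eq_zero_iff_mem.2 (hIJ r hr))
  let r : (S ⧸ J) →ₗ[R] (R ⧸ I) := Submodule.liftQ (J.restrictScalars R)
    ((Submodule.mkQ I).comp ρ) (fun s hs => by
      simp only [LinearMap.mem_ker, LinearMap.comp_apply]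
      exact Ideal.Quotient.eq_zero_iff_mem.2 (hJI s hs))
  refine pd_retract i r (fun x => ?_) h1
  obtain ⟨x, rfl⟩ := Ideal.Quotient.mk_surjective x
  change Ideal.Quotient.mk I (ρ (algebraMap R S x)) = _
  rw [hρ]

theorem final {K : Type u} [Field K] {N n : ℕ} (g : Fin n → MvPolynomial (Fin N) K)
    (hg : ∀ i, (g i).IsHomogeneous 2)
    (hht : idealHeight (Ideal.span (Set.range g)) = 2) :
    PdLE (MvPolynomial (Fin N) K) (2 * n - 2)
      (MvPolynomial (Fin N) K ⧸ Ideal.span (Set.range g)) := by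
  apply reduce
  let L := AlgebraicClosure K
  let R := MvPolynomial (Fin N) K
  let S := MvPolynomial (Fin N) L
  have hbc : IsBaseChange R (IsScalarTower.toAlgHom K L S).toLinearMap :=
    (inferInstance : Algebra.IsPushout K R L S).out
  have hfree : Module.Free R S := hbc.free
  have hint : Algebra.IsIntegral R S := inferInstance
  have hinj : Function.Injective (algebraMap R S) :=
    MvPolynomial.map_injective _ (algebraMap K L).injective
  obtain ⟨p, hp, hp2⟩ : ∃ p : PrimeSpectrum R, Ideal.span (Set.range g) ≤ p.asIdeal ∧
      p.asIdeal.height ≤ 2 := by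
    by_contra hcon
    push Not at hcon
    have : (3 : ℕ∞) ≤ idealHeight (Ideal.span (Set.range g)) := by
      refine le_iInf₂ fun p hp => ?_
      have := hcon p hp
      rw [PrimeSpectrum.height_eq_orderHeight] at this
      exact Order.add_one_le_of_lt this
    rw [hht] at this
    exact absurd this (by decide)
  have hge : ∀ p : PrimeSpectrum R, Ideal.span (Set.range g) ≤ p.asIdeal →
      2 ≤ p.asIdeal.height := by
    intro p hp
    rw [PrimeSpectrum.height_eq_orderHeight, ← hht]
    exact iInf₂_le p hp
  obtain ⟨P, -, hP, hPp⟩ := Ideal.exists_ideal_over_prime_of_isIntegral (S := S) p.asIdeal ⊥ (by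
    rw [← RingHom.ker_eq_comap_bot, (RingHom.injective_iff_ker_eq_bot _).1 hinj]
    exact bot_le)
  refine main_closed _ (fun i => (hg i).map _) P hP ?_ ?_ ?_
  · intro i
    have : g i ∈ P.comap (algebraMap R S) := by
      rw [hPp]; exact hp (Ideal.subset_span ⟨i, rfl⟩)
    exact this
  · intro Q1 Q2 hQ1 hQ2 h0 h12 h2P
    by_contra hne
    have h2P' := lt_of_le_of_ne h2P hne
    have hb : (⊥ : Ideal S).IsPrime := Ideal.isPrime_bot
    have e0 := Ideal.IsIntegral.comap_lt_comap (R := R) (bot_lt_iff_ne_bot.2 h0)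
    have e1 := Ideal.IsIntegral.comap_lt_comap (R := R) h12
    have e2 := Ideal.IsIntegral.comap_lt_comap (R := R) h2P'
    have f0 := Ideal.height_add_one_le_of_lt_of_isPrime e0
    have f1 := Ideal.height_add_one_le_of_lt_of_isPrime e1
    have f2 := Ideal.height_add_one_le_of_lt_of_isPrime e2
    rw [hPp] at f2
    have f3 : (0 : ℕ∞) + 1 ≤ _ := (add_le_add_left (zero_le (a := _)) 1).trans f0
    have f4 := (add_le_add_left f3 1).trans f1
    have f5 := ((add_le_add_left f4 1).trans f2).trans hp2
    have : (3 : ℕ∞) ≤ 2 := by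
      have e : (0 : ℕ∞) + 1 + 1 + 1 = 3 := by norm_num
      rwa [e] at f5
    exact absurd this (by decide)
  · intro f hf
    by_contra hu
    obtain ⟨Q, hQ⟩ := (Ideal.span {f} : Ideal S).nonempty_minimalPrimes (by simpa using hu)
    have hQ1 := Ideal.height_le_one_of_isPrincipal_of_mem_minimalPrimes _ _ hQ
    have hQp : Q.IsPrime := hQ.1.1
    have h2 := hge ⟨Q.comap (algebraMap R S), inferInstance⟩ (by
      rw [Ideal.span_le]
      rintro _ ⟨i, rfl⟩
      exact hQ.1.2 (hf i))
    have : Q.LiesOver (Q.comap (algebraMap R S)) := ⟨rfl⟩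
    have := Ideal.height_eq_height_add_of_liesOver_of_hasGoingDown (Q.comap (algebraMap R S)) Q
    have h3 : (2 : ℕ∞) ≤ 1 := (h2.trans (le_of_le_of_eq le_self_add this.symm)).trans hQ1
    exact absurd h3 (by decide)

end Reduction
end PD

/-- if `I` is an ideal of height two in a polynomial ring `R` over a field,
generated by `n` homogeneous quadratic polynomials, then `pd(R/I) ≤ 2n - 2`. -/
theorem stmt0 (K : Type u) [Field K] (N n : ℕ)
    (I : Ideal (MvPolynomial (Fin N) K)) (g : Fin n → MvPolynomial (Fin N) K)
    (hg : ∀ i, (g i).IsHomogeneous 2)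
    (hI : I = Ideal.span (Set.range g))
    (hht : idealHeight I = 2) :
    projDim (MvPolynomial (Fin N) K) (MvPolynomial (Fin N) K ⧸ I) ≤ ((2 * n - 2 : ℕ) : ℕ∞) := by
  subst hI
  exact sInf_le ⟨2 * n - 2, PD.final g hg hht, rfl⟩
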